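/- arXiv:1508.04589 — 7 statements merged into one kernel-verified Lean document; each statement's English description precedes it below -/
import Mathlib

section
/- Let m ≥ 3 be an integer and let Q_m ∈ (0,1) be the unique root in (0,1) of 1 + Q^m − ((1−Q²)/2)m = 0, and let v_m(w) = w^{m+1}/(1 − Q_m w²). Then for every α ∈ (0,1) there exist a > 0 and continuous maps ε ∈ (−a,a) ↦ Q(ε) ∈ (0,1) and ε ∈ (−a,a) ↦ f_ε (continuous into the C^{1+α}(𝕋) norm), where each f_ε : 𝕋 → ℂ extends holomorphically to the open unit disc with Fourier expansion f_ε(w) = Σ_{n≥2} a_n(ε) wⁿ with real coefficients, such that: Q(0) = Q_m, f_0 = 0, ‖f_ε − ε v_m‖_{C^{1+α}(𝕋)} = o(ε) as ε → 0 (in particular f_ε ≠ 0 for small ε ≠ 0), and, setting Φ_ε(w) = w + Q(ε)/w + f_ε(w) and Ω_ε = (1 − Q(ε)²)/4, for every ε ∈ (−a,a) and every w ∈ 𝕋 one has Im{ ( 2Ω_ε·conj(Φ_ε(w)) + (1/(2πi))∮_{|ξ|=1} (conj(Φ_ε(ξ)) − conj(Φ_ε(w)))/(Φ_ε(ξ)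 − Φ_ε(w)) · Φ_ε′(ξ) dξ ) · w · Φ_ε′(w) } = 0. -/
open Metric

/-- The function on the circle given by a power series with real
coefficients `b`. -/
noncomputable def seriesFun (b : ℕ → ℝ) (w : ℂ) : ℂ :=
  ∑' n : ℕ, (b n : ℂ) * w ^ n

/-- The derivative of the power series with real coefficients `b`. -/
noncomputable def seriesDeriv (b : ℕ → ℝ) (w : ℂ) : ℂ :=
  ∑' n : ℕ, (n : ℂ) * (b n : ℂ) * w ^ (n - 1)

/-- `g`, together with its tangential derivative `g'`, has `C^{1+α}` size at
most `M` on the unit circle: `g` and `g'` are bounded by `M` and `g'` is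
`α`-Hölder with constant `M`. -/
def C1AlphaBound (α M : ℝ) (g g' : ℂ → ℂ) : Prop :=
  (∀ w ∈ sphere (0:ℂ) 1, ‖g w‖ ≤ M) ∧
  (∀ w ∈ sphere (0:ℂ) 1, ‖g' w‖ ≤ M) ∧
  ∀ w₁ ∈ sphere (0:ℂ) 1, ∀ w₂ ∈ sphere (0:ℂ) 1,
    ‖g' w₁ - g' w₂‖ ≤ M * ‖w₁ - w₂‖ ^ α

/-- Real summable families indexed by `ι`, with the `ℓ¹` norm. -/
abbrev L1 (ι : Type*) := lp (fun _ : ι => ℝ) 1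

namespace L1

variable {ι : Type*} {F : Type*} [NormedAddCommGroup F] [NormedSpace ℝ F]

theorem hasSum_abs (x : L1 ι) : HasSum (fun i => |x i|) ‖x‖ := by
  simpa using lp.hasSum_norm (p := 1) (by simp) x

variable [DecidableEq ι]

/-- The `i`-th basis vector of `ℓ¹`, scaled to have norm `ω i`. -/
noncomputable def mono (ω : ι → ℝ) (i : ι) : L1 ι := lp.single 1 i (ω i)

theorem mono_apply (ω : ι → ℝ) (i j : ι) : mono ω i j = if j = i then ω i else 0 := by
  simp [mono, Pi.single_apply]

theorem norm_mono (ω : ι → ℝ) (i : ι) : ‖mono ω i‖ = |ω i| := by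
  simp [mono, lp.norm_single]

theorem hasSum_mono {ω : ι → ℝ} (hω : ∀ i, 0 < ω i) (x : L1 ι) :
    HasSum (fun i => (x i / ω i) • mono ω i) x := by
  have h := lp.hasSum_single (p := 1) (by simp) x
  convert! h using 2 with i
  rw [mono, ← lp.single_smul, smul_eq_mul, div_mul_cancel₀ _ (hω i).ne']

theorem hasSum_apply {ω : ι → ℝ} (hω : ∀ i, 0 < ω i) (T : L1 ι →L[ℝ] F) (x : L1 ι) :
    HasSum (fun i => (x i / ω i) • T (mono ω i)) (T x) := by
  simpa [Function.comp_def] using (hasSum_mono hω x).mapL T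

theorem ext_mono {ω : ι → ℝ} (hω : ∀ i, 0 < ω i) {S T : L1 ι →L[ℝ] F}
    (h : ∀ i, S (mono ω i) = T (mono ω i)) : S = T := by
  ext x
  have hS := hasSum_apply hω S x
  simp only [h] at hS
  exact hS.unique (hasSum_apply hω T x)

theorem exists_clm [CompleteSpace F] {ω : ι → ℝ} (hω : ∀ i, 0 < ω i) {y : ι → F} {C : ℝ}
    (hy : ∀ i, ‖y i‖ ≤ C * ω i) : ∃ T : L1 ι →L[ℝ] F, ∀ i, T (mono ω i) = y i := by
  have hb : ∀ (x : L1 ι) i, ‖(x i / ω i) • y i‖ ≤ |x i| * C := by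
    intro x i
    rw [norm_smul, Real.norm_eq_abs, abs_div, abs_of_pos (hω i), div_mul_eq_mul_div,
      div_le_iff₀ (hω i), mul_assoc]
    gcongr
    exact hy i
  have hs : ∀ x : L1 ι, Summable fun i => (x i / ω i) • y i := fun x =>
    .of_norm_bounded ((hasSum_abs x).summable.mul_right C) (hb x)
  let T₀ : L1 ι →ₗ[ℝ] F :=
    { toFun := fun x => ∑' i, (x i / ω i) • y i
      map_add' := fun a b => by
        rw [← (hs a).tsum_add (hs b)]
        simp [add_div, add_smul]
      map_smul' := fun c a => by
        rw [RingHom.id_apply, ← (hs a).tsum_const_smul]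
        simp [mul_div_assoc, mul_smul] }
  refine ⟨T₀.mkContinuous C fun x => ?_, fun i => ?_⟩
  · rw [mul_comm]
    exact tsum_of_norm_bounded ((hasSum_abs x).mul_right C) (hb x)
  · change ∑' j, (mono ω i j / ω j) • y j = y i
    rw [tsum_eq_single i]
    · simp [mono_apply, (hω i).ne']
    · intro j hj
      simp [mono_apply, hj]

open Classical in
/-- The continuous linear map sending `mono ω i` to `y i`, when there is one. -/
noncomputable def lift (ω : ι → ℝ) (y : ι → F) : L1 ι →L[ℝ] F :=
  if h : ∃ T : L1 ι →L[ℝ] F, ∀ i, T (mono ω i) = y i then h.choose else 0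

theorem lift_mono [CompleteSpace F] {ω : ι → ℝ} (hω : ∀ i, 0 < ω i) {y : ι → F} {C : ℝ}
    (hy : ∀ i, ‖y i‖ ≤ C * ω i) (i : ι) : lift ω y (mono ω i) = y i := by
  have h := exists_clm hω hy
  rw [lift, dif_pos h]
  exact h.choose_spec i

theorem norm_apply_le {ω : ι → ℝ} (hω : ∀ i, 0 < ω i) {C : ℝ} {T : L1 ι →L[ℝ] F}
    (hT : ∀ i, ‖T (mono ω i)‖ ≤ C * ω i) (x : L1 ι) : ‖T x‖ ≤ C * ‖x‖ := by
  rw [← (hasSum_apply hω T x).tsum_eq, mul_comm]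
  refine tsum_of_norm_bounded ((hasSum_abs x).mul_right C) fun i => ?_
  rw [norm_smul, Real.norm_eq_abs, abs_div, abs_of_pos (hω i), div_mul_eq_mul_div,
    div_le_iff₀ (hω i), mul_assoc]
  gcongr
  exact hT i

theorem opNorm_le {ω : ι → ℝ} (hω : ∀ i, 0 < ω i) {C : ℝ} (hC : 0 ≤ C) {T : L1 ι →L[ℝ] F}
    (hT : ∀ i, ‖T (mono ω i)‖ ≤ C * ω i) : ‖T‖ ≤ C :=
  T.opNorm_le_bound hC (norm_apply_le hω hT)

end L1

namespace VState

/-- Weight of the monomial `ξ ^ j * w ^ k`. -/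
noncomputable def wt₂ (τ : ℝ) (p : ℤ × ℤ) : ℝ := (1 + τ) ^ (p.1.natAbs + p.2.natAbs)

/-- Weight of the monomial `w ^ (n + 2)` in the space of perturbations. -/
noncomputable def wtX (τ : ℝ) (n : ℕ) : ℝ := (1 + τ * n) * (1 + τ) ^ n

/-- Weight of the `n + 1`-st sine mode in the target space. -/
noncomputable def wtY (τ : ℝ) (n : ℕ) : ℝ := (1 + τ) ^ n

/-- Laurent series in two variables `ξ`, `w`. -/
abbrev Laurent := L1 (ℤ × ℤ)

/-- Bounded operators on Laurent series; those used below act as multiplication operators. -/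
abbrev Op := Laurent →L[ℝ] Laurent

/-- The Laurent monomial `ξ ^ j * w ^ k`. -/
noncomputable abbrev monL (τ : ℝ) (j k : ℤ) : Laurent := L1.mono (wt₂ τ) (j, k)

/-- The perturbation `w ^ (n + 2)`. -/
noncomputable abbrev monX (τ : ℝ) (n : ℕ) : L1 ℕ := L1.mono (wtX τ) n

/-- The sine mode `Im (w ^ (n + 1))`. -/
noncomputable abbrev monY (τ : ℝ) (n : ℕ) : L1 ℕ := L1.mono (wtY τ) n

/-- Multiplication by `ξ ^ a * w ^ b`. -/
noncomputable def shift (τ : ℝ) (a b : ℤ) : Op :=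
  L1.lift (wt₂ τ) fun p => monL τ (p.1 + a) (p.2 + b)

/-- Multiplication by the divided difference `(h ξ - h w) / (ξ - w)`. -/
noncomputable def divDiff (τ : ℝ) : L1 ℕ →L[ℝ] Op :=
  L1.lift (wtX τ) fun n => ∑ i ∈ Finset.range (n + 2), shift τ i (n + 1 - i)

/-- Multiplication by `(h ξ⁻¹ - h w⁻¹) / (ξ⁻¹ - w⁻¹)`. -/
noncomputable def divDiffInv (τ : ℝ) : L1 ℕ →L[ℝ] Op :=
  L1.lift (wtX τ) fun n => ∑ i ∈ Finset.range (n + 2), shift τ (-i) (-(n + 1 - i))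

/-- Multiplication by `h' ξ`. -/
noncomputable def derivξ (τ : ℝ) : L1 ℕ →L[ℝ] Op :=
  L1.lift (wtX τ) fun n => (n + 2 : ℝ) • shift τ (n + 1) 0

/-- Multiplication by `w * h' w`. -/
noncomputable def eulerW (τ : ℝ) : L1 ℕ →L[ℝ] Op :=
  L1.lift (wtX τ) fun n => (n + 2 : ℝ) • shift τ 0 (n + 2)

/-- Multiplication by `h w⁻¹`. -/
noncomputable def reflW (τ : ℝ) : L1 ℕ →L[ℝ] Op :=
  L1.lift (wtX τ) fun n => shift τ 0 (-(n + 2))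

/-- The sine mode of index `k`, odd in `k`. -/
noncomputable def sine (τ : ℝ) (k : ℤ) : L1 ℕ := (k.sign : ℝ) • monY τ (k.natAbs - 1)

/-- The imaginary part of the residue in `ξ` of a Laurent series, as a sine series in `w`. -/
noncomputable def imResidue (τ : ℝ) : Laurent →L[ℝ] L1 ℕ :=
  L1.lift (wt₂ τ) fun p => if p.1 = -1 then sine τ p.2 else 0

variable {τ : ℝ} (hτ : 0 < τ)
include hτ

theorem one_le_one_add : 1 ≤ 1 + τ := by linarith

theorem wt₂_pos (p : ℤ × ℤ) : 0 < wt₂ τ p := by unfold wt₂; positivity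

theorem wtX_pos (n : ℕ) : 0 < wtX τ n := by unfold wtX; positivity

theorem wtY_pos (n : ℕ) : 0 < wtY τ n := by unfold wtY; positivity

theorem norm_monL (j k : ℤ) : ‖monL τ j k‖ = (1 + τ) ^ (j.natAbs + k.natAbs) := by
  rw [L1.norm_mono, abs_of_pos (wt₂_pos hτ _), wt₂]

theorem norm_monL_add_le (j k a b : ℤ) :
    ‖monL τ (j + a) (k + b)‖ ≤ (1 + τ) ^ (a.natAbs + b.natAbs) * wt₂ τ (j, k) := by
  rw [norm_monL hτ, wt₂, ← pow_add]
  exact pow_le_pow_right₀ (one_le_one_add hτ) (by grind [Int.natAbs_add_le])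

theorem shift_monL (a b j k : ℤ) : shift τ a b (monL τ j k) = monL τ (j + a) (k + b) :=
  L1.lift_mono (wt₂_pos hτ) (fun p => norm_monL_add_le hτ p.1 p.2 a b) (j, k)

theorem norm_shift_le (a b : ℤ) : ‖shift τ a b‖ ≤ (1 + τ) ^ (a.natAbs + b.natAbs) :=
  L1.opNorm_le (wt₂_pos hτ) (by positivity) fun p => by
    simpa only [shift_monL hτ] using! norm_monL_add_le hτ p.1 p.2 a b

theorem one_add_mul_le_pow' (n : ℕ) : 1 + τ * n ≤ (1 + τ) ^ n := by
  rw [mul_comm]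
  exact one_add_mul_le_pow (by linarith) n

theorem pow_le_wtX (n : ℕ) : (1 + τ) ^ n ≤ wtX τ n := by
  unfold wtX
  have : 0 ≤ τ * n := by positivity
  have : 0 < (1 + τ) ^ n := by positivity
  nlinarith

theorem add_two_le (n : ℕ) : (n + 2 : ℝ) ≤ (2 + τ⁻¹) * (1 + τ * n) := by
  have : 0 ≤ τ * n := by positivity
  have : 0 < τ⁻¹ := by positivity
  have h : τ⁻¹ * (τ * n) = n := by field_simp
  nlinarith

theorem add_two_mul_pow_le_wtX (n : ℕ) :
    (n + 2 : ℝ) * (1 + τ) ^ (n + 2) ≤ (2 + τ⁻¹) * (1 + τ) ^ 2 * wtX τ n := by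
  unfold wtX
  have := mul_le_mul_of_nonneg_right (add_two_le hτ n)
    (by positivity : 0 ≤ (1 + τ) ^ (n + 2))
  calc _ ≤ _ := this
    _ = _ := by ring

theorem add_two_sq_le_wtX (n : ℕ) : (n + 2 : ℝ) ^ 2 ≤ (2 + τ⁻¹) ^ 2 * wtX τ n := by
  have h := add_two_le hτ n
  have h1 := one_add_mul_le_pow' hτ n
  have h0 : 0 ≤ 1 + τ * n := by positivity
  calc (n + 2 : ℝ) ^ 2 ≤ ((2 + τ⁻¹) * (1 + τ * n)) ^ 2 := by gcongr
    _ = (2 + τ⁻¹) ^ 2 * ((1 + τ * n) * (1 + τ * n)) := by ring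
    _ ≤ _ := by unfold wtX; gcongr

theorem norm_smul_shift_le (n : ℕ) {a b : ℤ} (h : a.natAbs + b.natAbs ≤ n + 2) :
    ‖(n + 2 : ℝ) • shift τ a b‖ ≤ (2 + τ⁻¹) * (1 + τ) ^ 2 * wtX τ n := by
  refine le_trans ?_ (add_two_mul_pow_le_wtX hτ n)
  rw [norm_smul, Real.norm_of_nonneg (by positivity)]
  gcongr
  exact (norm_shift_le hτ a b).trans (pow_le_pow_right₀ (one_le_one_add hτ) h)

theorem norm_sum_shift_le (n : ℕ) {a b : ℕ → ℤ}
    (h : ∀ i < n + 2, (a i).natAbs + (b i).natAbs ≤ n + 2) :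
    ‖∑ i ∈ Finset.range (n + 2), shift τ (a i) (b i)‖ ≤
      (2 + τ⁻¹) * (1 + τ) ^ 2 * wtX τ n := by
  refine le_trans ?_ (add_two_mul_pow_le_wtX hτ n)
  refine (norm_sum_le_of_le _ (f := fun i => shift τ (a i) (b i))
    (n := fun _ => (1 + τ) ^ (n + 2)) fun i hi => ?_).trans (by simp)
  exact (norm_shift_le hτ _ _).trans
    (pow_le_pow_right₀ (one_le_one_add hτ) (h i (Finset.mem_range.1 hi)))

theorem divDiff_monX (n : ℕ) :
    divDiff τ (monX τ n) = ∑ i ∈ Finset.range (n + 2), shift τ i (n + 1 - i) :=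
  L1.lift_mono (wtX_pos hτ) (fun n => norm_sum_shift_le hτ n fun i hi => by omega) n

theorem divDiffInv_monX (n : ℕ) :
    divDiffInv τ (monX τ n) = ∑ i ∈ Finset.range (n + 2), shift τ (-i) (-(n + 1 - i)) :=
  L1.lift_mono (wtX_pos hτ) (fun n => norm_sum_shift_le hτ n fun i hi => by omega) n

theorem derivξ_monX (n : ℕ) : derivξ τ (monX τ n) = (n + 2 : ℝ) • shift τ (n + 1) 0 :=
  L1.lift_mono (wtX_pos hτ) (fun n => norm_smul_shift_le hτ n (by omega)) n

theorem eulerW_monX (n : ℕ) : eulerW τ (monX τ n) = (n + 2 : ℝ) • shift τ 0 (n + 2) :=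
  L1.lift_mono (wtX_pos hτ) (fun n => norm_smul_shift_le hτ n (by omega)) n

theorem reflW_monX (n : ℕ) : reflW τ (monX τ n) = shift τ 0 (-(n + 2)) := by
  refine L1.lift_mono (wtX_pos hτ) (C := (1 + τ) ^ 2) (fun n => ?_) n
  refine (norm_shift_le hτ _ _).trans ?_
  have : (0 : ℤ).natAbs + (-((n : ℤ) + 2)).natAbs = 2 + n := by omega
  rw [this, pow_add]
  gcongr
  exact pow_le_wtX hτ n

omit hτ in
theorem sine_neg (k : ℤ) : sine τ (-k) = -sine τ k := by
  simp [sine]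

omit hτ in
theorem sine_natCast_add_one (n : ℕ) : sine τ (n + 1) = monY τ n := by
  have h : ((n : ℤ) + 1).sign = 1 := Int.sign_eq_one_of_pos (by omega)
  have h' : ((n : ℤ) + 1).natAbs - 1 = n := by omega
  simp [sine, h, h']

theorem norm_sine_le (k : ℤ) : ‖sine τ k‖ ≤ (1 + τ) ^ k.natAbs := by
  rw [sine, norm_smul, L1.norm_mono, abs_of_pos (wtY_pos hτ _), wtY]
  have h1 : ‖(k.sign : ℝ)‖ ≤ 1 := by
    rcases lt_trichotomy k 0 with h | h | h
    · simp [Int.sign_eq_neg_one_of_neg h]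
    · simp [h]
    · simp [Int.sign_eq_one_of_pos h]
  calc _ ≤ 1 * (1 + τ) ^ (k.natAbs - 1) := by gcongr
    _ ≤ _ := by
      rw [one_mul]
      exact pow_le_pow_right₀ (one_le_one_add hτ) (by omega)

theorem imResidue_monL (j k : ℤ) :
    imResidue τ (monL τ j k) = if j = -1 then sine τ k else 0 := by
  refine L1.lift_mono (wt₂_pos hτ) (C := 1) (fun p => ?_) (j, k)
  rw [one_mul]
  split_ifs
  · refine (norm_sine_le hτ _).trans ?_
    exact pow_le_pow_right₀ (one_le_one_add hτ) (by omega)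
  · simpa using (wt₂_pos hτ p).le

end VState

namespace VState

/-- Multiplication by `1 - Q / (ξ * w)`. -/
noncomputable def opD₀ (τ Q : ℝ) : Op := 1 - Q • shift τ (-1) (-1)

/-- Multiplication by `(Φ ξ - Φ w) / (ξ - w)` for `Φ w = w + Q / w + ε * h w`. -/
noncomputable def opD (τ ε Q : ℝ) (h : L1 ℕ) : Op := opD₀ τ Q + ε • divDiff τ h

/-- Multiplication by `1 - Q * ξ * w`. -/
noncomputable def opN₀ (τ Q : ℝ) : Op := 1 - Q • shift τ 1 1

/-- Multiplication by `1 - Q / ξ ^ 2`. -/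
noncomputable def opP₀ (τ Q : ℝ) : Op := 1 - Q • shift τ (-2) 0

/-- Multiplication by `w - Q / w`. -/
noncomputable def opT₀ (τ Q : ℝ) : Op := shift τ 0 1 - Q • shift τ 0 (-1)

/-- Multiplication by `w⁻¹ + Q * w`. -/
noncomputable def opB₀ (τ Q : ℝ) : Op := shift τ 0 (-1) + Q • shift τ 0 1

/-- The kernel of the contour equation of the ellipse, as a multiplication operator. -/
noncomputable def ellipseOp (τ Q : ℝ) : Op :=
  ((1 - Q ^ 2) / 2) • (shift τ (-1) 0 * (opB₀ τ Q * opT₀ τ Q)) -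
    Ring.inverse (opD₀ τ Q) * (shift τ (-1) (-1) * (opN₀ τ Q * (opP₀ τ Q * opT₀ τ Q)))

/-- The kernel of the contour equation for `Φ w = w + Q / w + ε * h w`, minus the one for the
ellipse, divided by `ε`. -/
noncomputable def excessOp (τ ε Q : ℝ) (h : L1 ℕ) : Op :=
  ((1 - Q ^ 2) / 2) • (shift τ (-1) 0 *
      (reflW τ h * (opT₀ τ Q + ε • eulerW τ h) + opB₀ τ Q * eulerW τ h)) -
    Ring.inverse (opD₀ τ Q) * (shift τ (-1) (-1) * (opN₀ τ Q *
      (derivξ τ h * (opT₀ τ Q + ε • eulerW τ h) + opP₀ τ Q * eulerW τ h))) +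
    Ring.inverse (opD₀ τ Q) * (Ring.inverse (opD τ ε Q h) * (shift τ (-1) (-1) * (opN₀ τ Q *
      (divDiff τ h * ((opP₀ τ Q + ε • derivξ τ h) * (opT₀ τ Q + ε • eulerW τ h)))))) -
    Ring.inverse (opD τ ε Q h) * (shift τ (-1) (-1) *
      (divDiffInv τ h * ((opP₀ τ Q + ε • derivξ τ h) * (opT₀ τ Q + ε • eulerW τ h))))

/-- The contour functional, divided by `ε`. -/
noncomputable def contourFun (τ ε Q : ℝ) (h : L1 ℕ) : L1 ℕ :=
  imResidue τ (excessOp τ ε Q h (monL τ 0 0))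

/-- The symbol of the linearized operator at the ellipse. -/
noncomputable def symbol (Q : ℝ) (k : ℕ) : ℝ := 1 + Q ^ k - (1 - Q ^ 2) / 2 * k

variable {τ : ℝ} (hτ : 0 < τ) {Q : ℝ}

section
include hτ

theorem opD₀_monL (j k : ℤ) :
    opD₀ τ Q (monL τ j k) = monL τ j k - Q • monL τ (j - 1) (k - 1) := by
  simp only [opD₀, sub_apply, smul_apply, one_apply_eq_self, shift_monL hτ,
    ← sub_eq_add_neg]

theorem isUnit_opD₀ (hQ : |Q| * (1 + τ) ^ 2 < 1) : IsUnit (opD₀ τ Q) := by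
  refine isUnit_one_sub_of_norm_lt_one (lt_of_le_of_lt ?_ hQ)
  rw [norm_smul, Real.norm_eq_abs]
  gcongr
  simpa using norm_shift_le hτ (-1) (-1)

variable (hQ : |Q| * (1 + τ) ^ 2 < 1)
include hQ

theorem apply_monL_eq_zero {M : Laurent →L[ℝ] L1 ℕ}
    (hM : ∀ j k : ℤ, j < -1 → M (opD₀ τ Q (monL τ j k)) = 0) {j : ℤ} (hj : j < -1) (k : ℤ) :
    M (monL τ j k) = 0 := by
  have hstep : ∀ l : ℕ, M (monL τ j k) = Q ^ l • M (monL τ (j - l) (k - l)) := by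
    intro l
    induction l with
    | zero => simp
    | succ l ih =>
      have h := hM (j - l) (k - l) (by omega)
      rw [opD₀_monL hτ, map_sub, map_smul, sub_eq_zero] at h
      rw [ih, h, pow_succ, mul_smul]
      push_cast
      simp only [sub_sub]
  have hb : ∀ l : ℕ, ‖M (monL τ j k)‖ ≤
      ‖M‖ * (1 + τ) ^ (j.natAbs + k.natAbs) * (|Q| * (1 + τ) ^ 2) ^ l := by
    intro l
    rw [hstep l, norm_smul, norm_pow, Real.norm_eq_abs]
    calc |Q| ^ l * ‖M (monL τ (j - l) (k - l))‖
        ≤ |Q| ^ l * (‖M‖ * ((1 + τ) ^ (2 * l) * (1 + τ) ^ (j.natAbs + k.natAbs))) := by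
          gcongr
          refine (M.le_opNorm _).trans ?_
          gcongr
          rw [norm_monL hτ, ← pow_add]
          exact pow_le_pow_right₀ (one_le_one_add hτ) (by omega)
      _ = _ := by rw [mul_pow, ← pow_mul]; ring
  have hlim := (tendsto_pow_atTop_nhds_zero_of_lt_one (by positivity) hQ).const_mul
    (‖M‖ * (1 + τ) ^ (j.natAbs + k.natAbs))
  rw [mul_zero] at hlim
  exact norm_le_zero_iff.1 (ge_of_tendsto' hlim hb)

theorem inverse_opD₀_opD₀ (x : Laurent) : Ring.inverse (opD₀ τ Q) (opD₀ τ Q x) = x := by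
  rw [← mul_apply_eq_comp, Ring.inverse_mul_cancel _ (isUnit_opD₀ hτ hQ),
    one_apply_eq_self]

theorem imResidue_inverse_of_lt {j : ℤ} (hj : j < -1) (k : ℤ) :
    imResidue τ (Ring.inverse (opD₀ τ Q) (monL τ j k)) = 0 := by
  refine apply_monL_eq_zero hτ hQ (M := imResidue τ ∘L Ring.inverse (opD₀ τ Q))
    (fun j k hj => ?_) hj k
  rw [ContinuousLinearMap.comp_apply, inverse_opD₀_opD₀ hτ hQ, imResidue_monL hτ,
    if_neg (by omega)]

theorem imResidue_inverse {j k : ℤ} (p : ℕ) (hp : j = p - 1) :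
    imResidue τ (Ring.inverse (opD₀ τ Q) (monL τ j k)) = Q ^ p • sine τ (k - p) := by
  have hrec : ∀ j k : ℤ, imResidue τ (Ring.inverse (opD₀ τ Q) (monL τ j k)) =
      imResidue τ (monL τ j k) +
        Q • imResidue τ (Ring.inverse (opD₀ τ Q) (monL τ (j - 1) (k - 1))) := by
    intro j k
    rw [← map_smul, ← map_smul, ← map_add]
    nth_rewrite 2 [← inverse_opD₀_opD₀ hτ hQ (monL τ j k)]
    rw [opD₀_monL hτ, ← map_add, sub_add_cancel]
  induction p generalizing j k with
  | zero =>
    rw [hrec, imResidue_inverse_of_lt hτ hQ (by omega), imResidue_monL hτ, if_pos (by simpa using hp)]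
    simp
  | succ p ih =>
    rw [hrec, imResidue_monL hτ, if_neg (by omega), ih (by omega), zero_add, smul_smul,
      pow_succ']
    push_cast
    ring_nf

theorem imResidue_inverse_inverse_of_lt {j : ℤ} (hj : j < -1) (k : ℤ) :
    imResidue τ (Ring.inverse (opD₀ τ Q) (Ring.inverse (opD₀ τ Q) (monL τ j k))) = 0 := by
  refine apply_monL_eq_zero hτ hQ
    (M := imResidue τ ∘L Ring.inverse (opD₀ τ Q) ∘L Ring.inverse (opD₀ τ Q))
    (fun j k hj => ?_) hj k
  rw [ContinuousLinearMap.comp_apply, ContinuousLinearMap.comp_apply, inverse_opD₀_opD₀ hτ hQ,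
    imResidue_inverse_of_lt hτ hQ hj]

theorem imResidue_inverse_inverse {j k : ℤ} (p : ℕ) (hp : j = p - 1) :
    imResidue τ (Ring.inverse (opD₀ τ Q) (Ring.inverse (opD₀ τ Q) (monL τ j k))) =
      ((p + 1) * Q ^ p) • sine τ (k - p) := by
  have hrec : ∀ j k : ℤ,
      imResidue τ (Ring.inverse (opD₀ τ Q) (Ring.inverse (opD₀ τ Q) (monL τ j k))) =
      imResidue τ (Ring.inverse (opD₀ τ Q) (monL τ j k)) + Q • imResidue τ
        (Ring.inverse (opD₀ τ Q) (Ring.inverse (opD₀ τ Q) (monL τ (j - 1) (k - 1)))) := by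
    intro j k
    rw [← map_smul, ← map_smul, ← map_smul, ← map_add, ← map_add]
    nth_rewrite 2 [← inverse_opD₀_opD₀ hτ hQ (monL τ j k)]
    rw [opD₀_monL hτ, ← map_add, sub_add_cancel]
  induction p generalizing j k with
  | zero =>
    rw [hrec, imResidue_inverse_inverse_of_lt hτ hQ (by omega), imResidue_inverse hτ hQ 0 hp]
    simp
  | succ p ih =>
    rw [hrec, imResidue_inverse hτ hQ (p + 1) hp, ih (by omega), smul_smul]
    push_cast
    rw [sub_sub, add_comm (1 : ℤ), ← add_smul]
    congr 1
    ring

/-- The contour equation holds for every ellipse. -/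
theorem imResidue_ellipseOp : imResidue τ (ellipseOp τ Q (monL τ 0 0)) = 0 := by
  simp only [ellipseOp, opB₀, opT₀, opN₀, opP₀, mul_apply_eq_comp, sub_apply,
    smul_apply, add_apply, one_apply_eq_self, map_sub, map_add, map_smul,
    shift_monL hτ]
  norm_num
  have h1 : ∀ k : ℤ, imResidue τ (Ring.inverse (opD₀ τ Q) (monL τ (-3) k)) = 0 :=
    imResidue_inverse_of_lt hτ hQ (by norm_num)
  have h2 : ∀ k : ℤ, imResidue τ (Ring.inverse (opD₀ τ Q) (monL τ (-2) k)) = 0 :=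
    imResidue_inverse_of_lt hτ hQ (by norm_num)
  have h3 : ∀ k : ℤ, imResidue τ (Ring.inverse (opD₀ τ Q) (monL τ (-1) k)) = sine τ k :=
    fun k => by simpa using imResidue_inverse hτ hQ (j := -1) (k := k) 0 (by norm_num)
  have h4 : ∀ k : ℤ, imResidue τ (Ring.inverse (opD₀ τ Q) (monL τ 0 k)) = Q • sine τ (k - 1) :=
    fun k => by simpa using imResidue_inverse hτ hQ (j := 0) (k := k) 1 (by norm_num)
  simp only [h1, h2, h3, h4, imResidue_monL hτ]
  have hs : sine τ (-2) = -sine τ 2 := sine_neg 2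
  have hs0 : sine τ 0 = 0 := by simp [sine]
  norm_num [hs, hs0]
  module

end
end VState

namespace VState

variable {τ : ℝ} (hτ : 0 < τ) {Q : ℝ}
section
include hτ
variable (hQ : |Q| * (1 + τ) ^ 2 < 1)
include hQ

theorem sum_imResidue_inverse_inverse (k : ℤ) (M : ℕ) :
    ∑ i ∈ Finset.range (M + 2), imResidue τ (Ring.inverse (opD₀ τ Q) (Ring.inverse (opD₀ τ Q)
      (shift τ (-1) (-1) (opN₀ τ Q (shift τ i (k - 1 - i)
        (opP₀ τ Q (opT₀ τ Q (monL τ 0 0)))))))) =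
    (1 - Q ^ 2) • (sine τ (k - 1) - Q ^ (M + 1) • sine τ (k - 1 - 2 * (M + 1))) +
      ((M + 2) * Q ^ (M + 1) - (M + 3) * Q ^ (M + 3)) •
        (sine τ (k - 1 - 2 * (M + 1)) - Q • sine τ (k - 3 - 2 * (M + 1))) := by
  simp only [opT₀, opN₀, opP₀, sub_apply, smul_apply, one_apply_eq_self,
    map_sub, map_smul, shift_monL hτ]
  have h1 : ∀ j k : ℤ, j < -1 →
      imResidue τ (Ring.inverse (opD₀ τ Q) (Ring.inverse (opD₀ τ Q) (monL τ j k))) = 0 :=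
    fun j k hj => imResidue_inverse_inverse_of_lt hτ hQ hj k
  have h2 : ∀ (p : ℕ) (j k : ℤ), j = p - 1 →
      imResidue τ (Ring.inverse (opD₀ τ Q) (Ring.inverse (opD₀ τ Q) (monL τ j k))) =
      ((p + 1) * Q ^ p) • sine τ (k - p) :=
    fun p j k hj => imResidue_inverse_inverse hτ hQ p hj
  generalize imResidue τ = R at *
  generalize Ring.inverse (opD₀ τ Q) = I at *
  induction M with
  | zero =>
    rw [zero_add, Finset.sum_range_succ, Finset.sum_range_one]
    norm_num
    simp (discharger := norm_num) only [h1]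
    simp only [h2 0 (-1) _ (by norm_num), h2 1 0 _ (by norm_num), h2 2 1 _ (by norm_num)]
    norm_num
    ring_nf
    module
  | succ M ih =>
    rw [show M + 1 + 2 = (M + 2) + 1 from rfl, Finset.sum_range_succ, ih]
    push_cast
    rw [h2 (M + 2) _ _ (by push_cast; ring),
      h2 (M + 3) _ _ (by push_cast; ring),
      h2 M _ _ (by ring),
      h2 (M + 1) _ _ (by push_cast; ring),
      h2 (M + 2) _ _ (by push_cast; ring),
      h2 (M + 3) _ _ (by push_cast; ring),
      h2 M _ _ (by ring),
      h2 (M + 1) _ _ (by push_cast; ring)]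
    push_cast
    ring_nf
    module
end
end VState

namespace VState

variable {τ : ℝ} (hτ : 0 < τ) {Q : ℝ}
section
include hτ
variable (hQ : |Q| * (1 + τ) ^ 2 < 1)
include hQ

theorem sum_imResidue_inverse_divDiffInv (n : ℕ) :
    ∑ i ∈ Finset.range (n + 2), imResidue τ (Ring.inverse (opD₀ τ Q)
      (shift τ (-1) (-1) (shift τ (-i) (-(n + 1 - i))
        (opP₀ τ Q (opT₀ τ Q (monL τ 0 0)))))) =
    Q • sine τ (n + 3) - sine τ (n + 1) := by
  simp only [opT₀, opP₀, sub_apply, smul_apply, one_apply_eq_self,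
    map_sub, map_smul, shift_monL hτ]
  have h1 : ∀ j k : ℤ, j < -1 → imResidue τ (Ring.inverse (opD₀ τ Q) (monL τ j k)) = 0 :=
    fun j k hj => imResidue_inverse_of_lt hτ hQ hj k
  have h3 : ∀ k : ℤ, imResidue τ (Ring.inverse (opD₀ τ Q) (monL τ (-1) k)) = sine τ k :=
    fun k => by simpa using imResidue_inverse hτ hQ (j := -1) (k := k) 0 (by norm_num)
  rw [Finset.sum_range_succ', Finset.sum_eq_zero]
  · norm_num
    simp (discharger := norm_num) only [h1, h3]
    have e1 : sine τ (-n + -1 + -1 + 1 : ℤ) = - sine τ (n + 1) := by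
      rw [← sine_neg]; ring_nf
    have e2 : sine τ (-n + -1 + -1 + -1 : ℤ) = - sine τ (n + 3) := by
      rw [← sine_neg]; ring_nf
    ring_nf at e1 e2 ⊢
    rw [e1, e2]
    module
  · intro i _
    push_cast
    simp (discharger := omega) only [h1, smul_zero, sub_zero]

theorem contourFun_zero_monX (n : ℕ) :
    contourFun τ 0 Q (monX τ n) =
      symbol Q (n + 1) • monY τ n - (Q * symbol Q (n + 3)) • monY τ (n + 2) := by
  have hsum := sum_imResidue_inverse_inverse hτ hQ (n + 2) n
  have hsum' := sum_imResidue_inverse_divDiffInv hτ hQ n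
  have e (i : ℤ) : ((n : ℤ) + 2 - 1 - i) = n + 1 - i := by ring
  simp only [e] at hsum
  have hD : opD τ 0 Q (monX τ n) = opD₀ τ Q := by simp [opD]
  simp only [contourFun, excessOp, hD, zero_smul, add_zero, divDiff_monX hτ, divDiffInv_monX hτ,
    derivξ_monX hτ, eulerW_monX hτ, reflW_monX hτ, mul_apply_eq_comp, sub_apply, add_apply,
    smul_apply, sum_apply, map_sum, map_sub, map_add, map_smul] at hsum hsum' ⊢
  rw [hsum, hsum']
  clear hsum hsum' e hD
  simp only [opT₀, opN₀, opP₀, opB₀, sub_apply, add_apply, smul_apply, one_apply_eq_self,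
    map_sub, map_add, map_smul, shift_monL hτ]
  norm_num
  have h1 : ∀ j k : ℤ, j < -1 → imResidue τ (Ring.inverse (opD₀ τ Q) (monL τ j k)) = 0 :=
    fun j k hj => imResidue_inverse_of_lt hτ hQ hj k
  have h2 : ∀ (p : ℕ) (j k : ℤ), j = p - 1 →
      imResidue τ (Ring.inverse (opD₀ τ Q) (monL τ j k)) = Q ^ p • sine τ (k - p) :=
    fun p j k hj => imResidue_inverse hτ hQ p hj
  simp (discharger := norm_num) only [h1, h2 0 (-1) _ (by norm_num), h2 1 0 _ (by norm_num),
    imResidue_monL hτ]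
  simp only [h2 (n + 1) _ _ (show (n : ℤ) = _ by push_cast; ring),
    h2 (n + 2) _ _ (show (n : ℤ) + 1 = _ by push_cast; ring)]
  rw [← sine_natCast_add_one, ← sine_natCast_add_one, symbol, symbol]
  push_cast
  have e1 : sine τ (-1 - n : ℤ) = - sine τ (n + 1) := by
    rw [← sine_neg]; ring_nf
  have e2 : sine τ (-3 - n : ℤ) = - sine τ (n + 3) := by
    rw [← sine_neg]; ring_nf
  norm_num
  ring_nf at e1 e2 ⊢
  simp only [e1, e2]
  module
end
end VState

namespace VState

/-- Multiplication by `w ^ 2` on perturbations. -/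
noncomputable def shiftX (τ : ℝ) : L1 ℕ →L[ℝ] L1 ℕ := L1.lift (wtX τ) fun n => monX τ (n + 2)

/-- Multiplication by `1 - Q * w ^ 2` on perturbations. -/
noncomputable def opE (τ Q : ℝ) : L1 ℕ →L[ℝ] L1 ℕ := 1 - Q • shiftX τ

/-- The diagonal operator with entries `symbol Q (n + 1)`. -/
noncomputable def diagOp (τ Q : ℝ) : L1 ℕ →L[ℝ] L1 ℕ :=
  L1.lift (wtX τ) fun n => symbol Q (n + 1) • monY τ n

variable {τ : ℝ} (hτ : 0 < τ) {Q : ℝ}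

theorem exists_clm_contourFun_zero (τ Q : ℝ) :
    ∃ L : L1 ℕ →L[ℝ] L1 ℕ, ∀ h, L h = contourFun τ 0 Q h := by
  refine ⟨⟨⟨⟨contourFun τ 0 Q, fun x y => ?_⟩, fun c x => ?_⟩, ?_⟩, fun h => rfl⟩
  · simp only [contourFun, excessOp, opD, zero_smul, add_zero, map_add, mul_add, add_mul,
      smul_add, add_apply, sub_apply]
    simp only [map_add, map_sub]
    module
  · simp only [contourFun, excessOp, opD, zero_smul, add_zero, map_smul, mul_smul_comm,
      smul_mul_assoc, smul_apply, add_apply, sub_apply, mul_add, smul_add]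
    simp only [map_add, map_sub, map_smul, RingHom.id_apply]
    module
  · change Continuous fun h => contourFun τ 0 Q h
    simp only [contourFun, excessOp, opD, zero_smul, add_zero]
    fun_prop

section
include hτ

theorem norm_monX_add_two_le (n : ℕ) :
    ‖monX τ (n + 2)‖ ≤ (1 + 2 * τ) * (1 + τ) ^ 2 * wtX τ n := by
  rw [L1.norm_mono, abs_of_pos (wtX_pos hτ _), wtX, wtX, pow_add]
  have h : 1 + τ * (n + 2 : ℕ) ≤ (1 + 2 * τ) * (1 + τ * n) := by
    push_cast
    have : 0 ≤ τ * (τ * n) := by positivity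
    nlinarith
  calc _ ≤ (1 + 2 * τ) * (1 + τ * n) * ((1 + τ) ^ n * (1 + τ) ^ 2) := by gcongr
    _ = _ := by ring

theorem shiftX_monX (n : ℕ) : shiftX τ (monX τ n) = monX τ (n + 2) :=
  L1.lift_mono (wtX_pos hτ) (norm_monX_add_two_le hτ) n

theorem opE_monX (n : ℕ) : opE τ Q (monX τ n) = monX τ n - Q • monX τ (n + 2) := by
  simp [opE, shiftX_monX hτ]

theorem isUnit_opE (hQ : |Q| * ((1 + 2 * τ) * (1 + τ) ^ 2) < 1) : IsUnit (opE τ Q) := by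
  refine isUnit_one_sub_of_norm_lt_one (lt_of_le_of_lt ?_ hQ)
  rw [norm_smul, Real.norm_eq_abs]
  gcongr
  exact L1.opNorm_le (wtX_pos hτ) (by positivity) fun n => by
    simpa only [shiftX_monX hτ] using! norm_monX_add_two_le hτ n

theorem abs_mul_sq_lt_one (hQ : |Q| * ((1 + 2 * τ) * (1 + τ) ^ 2) < 1) :
    |Q| * (1 + τ) ^ 2 < 1 := by
  refine lt_of_le_of_lt ?_ hQ
  gcongr
  exact le_mul_of_one_le_left (by positivity) (by linarith)

theorem abs_lt_one_of_mul_sq (hQ : |Q| * (1 + τ) ^ 2 < 1) : |Q| < 1 := by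
  refine lt_of_le_of_lt (le_mul_of_one_le_right (abs_nonneg Q) ?_) hQ
  exact one_le_pow₀ (one_le_one_add hτ)

omit hτ in
theorem abs_symbol_le (hQ : |Q| < 1) (n : ℕ) : |symbol Q (n + 1)| ≤ n + 2 := by
  have h1 : |Q ^ (n + 1)| ≤ 1 := by
    rw [abs_pow]; exact pow_le_one₀ (abs_nonneg _) hQ.le
  have h2 : Q ^ 2 ≤ 1 := (sq_le_one_iff_abs_le_one Q).2 hQ.le
  have h3 : 0 ≤ Q ^ 2 := sq_nonneg Q
  rw [abs_le] at h1 ⊢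
  have h4 : 0 ≤ Q ^ 2 * (n + 1) := by positivity
  have h5 : Q ^ 2 * (n + 1) ≤ n + 1 := mul_le_of_le_one_left (by positivity) h2
  have h6 : (0 : ℝ) ≤ n := by positivity
  rw [symbol]
  push_cast
  constructor <;> nlinarith

theorem diagOp_monX (hQ : |Q| < 1) (n : ℕ) :
    diagOp τ Q (monX τ n) = symbol Q (n + 1) • monY τ n := by
  refine L1.lift_mono (wtX_pos hτ) (C := 2 + τ⁻¹) (fun n => ?_) n
  rw [norm_smul, L1.norm_mono, abs_of_pos (wtY_pos hτ n), wtX, wtY, ← mul_assoc, Real.norm_eq_abs]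
  gcongr
  exact (abs_symbol_le hQ n).trans (add_two_le hτ n)

theorem diagOp_apply (hQ : |Q| < 1) (x : L1 ℕ) (n : ℕ) :
    diagOp τ Q x n = symbol Q (n + 1) / (1 + τ * n) * x n := by
  have h := ((L1.hasSum_apply (wtX_pos hτ) (diagOp τ Q) x).mapL (lp.evalCLM ℝ _ 1 n))
  have h' := hasSum_ite_eq n (symbol Q (n + 1) / (1 + τ * n) * x n)
  refine h.unique ?_
  convert! h' using 2 with i
  change (x i / wtX τ i) * (diagOp τ Q (monX τ i) n) = _
  rw [diagOp_monX hτ hQ]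
  change (x i / wtX τ i) * (symbol Q (i + 1) * monY τ i n) = _
  rw [L1.mono_apply]
  by_cases hi : n = i
  · subst hi
    rw [if_pos rfl, if_pos rfl, wtX, wtY]
    field_simp
  · simp [hi, Ne.symm hi]

theorem contourFun_zero_opE (hQ : |Q| * (1 + τ) ^ 2 < 1) (h : L1 ℕ) :
    contourFun τ 0 Q h = diagOp τ Q (opE τ Q h) := by
  obtain ⟨L, hL⟩ := exists_clm_contourFun_zero τ Q
  rw [← hL, ← mul_apply_eq_comp]
  congr 1
  refine L1.ext_mono (wtX_pos hτ) fun n => ?_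
  rw [hL, contourFun_zero_monX hτ hQ, mul_apply_eq_comp, opE_monX hτ, map_sub, map_smul,
    diagOp_monX hτ (abs_lt_one_of_mul_sq hτ hQ), diagOp_monX hτ (abs_lt_one_of_mul_sq hτ hQ),
    smul_smul]

end
end VState

namespace VState

/-- The `k`-th coordinate functional. -/
noncomputable abbrev coord (k : ℕ) : L1 ℕ →L[ℝ] ℝ := lp.evalCLM ℝ (fun _ : ℕ => ℝ) 1 k

theorem coord_apply (k : ℕ) (x : L1 ℕ) : coord k x = x k := rfl

/-- The aspect parameter encoded by `z`. -/
noncomputable def paramQ (Q₀ : ℝ) (k : ℕ) (z : L1 ℕ) : ℝ := Q₀ + coord k z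

/-- The perturbation `w ^ (k + 2) + ...` encoded by `z`, before division by `1 - Q * w ^ 2`. -/
noncomputable def paramU (τ : ℝ) (k : ℕ) (z : L1 ℕ) : L1 ℕ :=
  z + (1 - coord k z / wtX τ k) • monX τ k

/-- The perturbation encoded by `z`. -/
noncomputable def paramH (τ Q₀ : ℝ) (k : ℕ) (z : L1 ℕ) : L1 ℕ :=
  Ring.inverse (opE τ (paramQ Q₀ k z)) (paramU τ k z)

/-- The contour functional in the variables `(ε, z)`. -/
noncomputable def branchFun (τ Q₀ : ℝ) (k : ℕ) (p : ℝ × L1 ℕ) : L1 ℕ :=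
  contourFun τ p.1 (paramQ Q₀ k p.2) (paramH τ Q₀ k p.2)

variable {τ : ℝ} {Q : ℝ}

theorem contDiffAt_inverse {E R : Type*} [NormedAddCommGroup E] [NormedSpace ℝ E]
    [NormedRing R] [NormedAlgebra ℝ R] [HasSummableGeomSeries R] {f : E → R} {x : E}
    (hf : ContDiffAt ℝ 1 f x) (hu : IsUnit (f x)) :
    ContDiffAt ℝ 1 (fun y => Ring.inverse (f y)) x := by
  obtain ⟨u, hu⟩ := hu
  exact ContDiffAt.comp x (hu ▸ contDiffAt_ringInverse ℝ u) hf

theorem contDiffAt_contourFun {E : Type*} [NormedAddCommGroup E] [NormedSpace ℝ E]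
    {ε q : E → ℝ} {h : E → L1 ℕ} {x : E} (hε : ContDiffAt ℝ 1 ε x) (hq : ContDiffAt ℝ 1 q x)
    (hh : ContDiffAt ℝ 1 h x) (h₀ : IsUnit (opD₀ τ (q x)))
    (h₁ : IsUnit (opD τ (ε x) (q x) (h x))) :
    ContDiffAt ℝ 1 (fun y => contourFun τ (ε y) (q y) (h y)) x := by
  have hd₀ : ContDiffAt ℝ 1 (fun y => opD₀ τ (q y)) x := by
    unfold opD₀
    fun_prop
  have hd : ContDiffAt ℝ 1 (fun y => opD τ (ε y) (q y) (h y)) x := by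
    unfold opD
    fun_prop
  have hi₀ := contDiffAt_inverse hd₀ h₀
  have hi := contDiffAt_inverse hd h₁
  simp only [contourFun, excessOp, opN₀, opP₀, opT₀, opB₀]
  fun_prop

variable {k : ℕ}

theorem contDiff_paramQ : ContDiff ℝ 1 (paramQ Q k) := by
  unfold paramQ
  fun_prop

theorem contDiff_paramU : ContDiff ℝ 1 (paramU τ k) := by
  unfold paramU
  fun_prop

theorem contDiffAt_paramH {z : L1 ℕ} (h : IsUnit (opE τ (paramQ Q k z))) :
    ContDiffAt ℝ 1 (paramH τ Q k) z := by
  have hq : ContDiffAt ℝ 1 (paramQ Q k) z := contDiff_paramQ.contDiffAt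
  have hu : ContDiffAt ℝ 1 (paramU τ k) z := contDiff_paramU.contDiffAt
  have he : ContDiffAt ℝ 1 (fun z => opE τ (paramQ Q k z)) z := by
    unfold opE
    fun_prop
  have hi := contDiffAt_inverse he h
  unfold paramH
  fun_prop

variable (hτ : 0 < τ)
include hτ

theorem contDiffAt_branchFun (hQ : |Q| * ((1 + 2 * τ) * (1 + τ) ^ 2) < 1) :
    ContDiffAt ℝ 1 (branchFun τ Q k) (0, 0) := by
  have hq : paramQ Q k 0 = Q := by simp [paramQ]
  have h₀ : IsUnit (opD₀ τ (paramQ Q k 0)) := by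
    rw [hq]
    exact isUnit_opD₀ hτ (abs_mul_sq_lt_one hτ hQ)
  refine contDiffAt_contourFun contDiffAt_fst
    (contDiff_paramQ.contDiffAt.comp _ contDiffAt_snd)
    (ContDiffAt.comp (0, 0) (contDiffAt_paramH ?_) contDiffAt_snd) h₀ ?_
  · rw [hq]
    exact isUnit_opE hτ hQ
  · simpa [opD] using h₀

theorem paramU_apply (z : L1 ℕ) (n : ℕ) :
    paramU τ k z n = if n = k then wtX τ k else z n := by
  change z n + (1 - z k / wtX τ k) * monX τ k n = _
  rw [L1.mono_apply]
  have := (wtX_pos hτ k).ne'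
  split_ifs with h
  · subst h
    field_simp
    ring
  · simp

theorem opE_paramH {z : L1 ℕ} (hQ : |paramQ Q k z| * ((1 + 2 * τ) * (1 + τ) ^ 2) < 1) :
    opE τ (paramQ Q k z) (paramH τ Q k z) = paramU τ k z := by
  rw [paramH, ← mul_apply_eq_comp (f := opE τ _), Ring.mul_inverse_cancel _ (isUnit_opE hτ hQ),
    one_apply_eq_self]

theorem coord_branchFun_zero {z : L1 ℕ}
    (hQ : |paramQ Q k z| * ((1 + 2 * τ) * (1 + τ) ^ 2) < 1) (n : ℕ) :
    coord n (branchFun τ Q k (0, z)) =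
      symbol (paramQ Q k z) (n + 1) / (1 + τ * n) * if n = k then wtX τ k else z n := by
  have hQ' := abs_mul_sq_lt_one hτ hQ
  rw [branchFun, contourFun_zero_opE hτ hQ', opE_paramH hτ hQ, coord_apply,
    diagOp_apply hτ (abs_lt_one_of_mul_sq hτ hQ'),
    paramU_apply hτ]

end VState

namespace VState

/-- The diagonal entries of the partial derivative of `branchFun` in `z` at the ellipse. -/
noncomputable def entry (τ Q : ℝ) (k n : ℕ) : ℝ :=
  if n = k then ((k + 1) * Q ^ k + Q * (k + 1)) / (1 + τ * k) * wtX τ k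
  else symbol Q (n + 1) / (1 + τ * n)

variable {τ : ℝ} {Q : ℝ} {k : ℕ}

theorem hasDerivAt_symbol (Q : ℝ) (k : ℕ) :
    HasDerivAt (fun q => symbol q (k + 1)) ((k + 1) * Q ^ k + Q * (k + 1)) Q := by
  have h := ((hasDerivAt_pow (k + 1) Q).const_add 1).sub
    ((((hasDerivAt_pow 2 Q).const_sub 1).div_const 2).mul_const ((k + 1 : ℕ) : ℝ))
  convert! h using 1
  push_cast
  simp
  ring

theorem symbol_strictAnti (hQ : Q ∈ Set.Ioo (0 : ℝ) 1) : StrictAnti (symbol Q) := by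
  refine strictAnti_nat_of_succ_lt fun n => ?_
  have h1 : Q ^ (n + 1) ≤ Q ^ n := pow_le_pow_of_le_one hQ.1.le hQ.2.le n.le_succ
  have h2 : Q ^ 2 < 1 := pow_lt_one₀ hQ.1.le hQ.2 two_ne_zero
  simp only [symbol]
  push_cast
  nlinarith

theorem entry_ne_zero (hτ : 0 < τ) (hQ : Q ∈ Set.Ioo (0 : ℝ) 1) (hk : symbol Q (k + 1) = 0)
    (n : ℕ) : entry τ Q k n ≠ 0 := by
  have hn : 0 < 1 + τ * n := by positivity
  have hQ0 := hQ.1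
  unfold entry
  split_ifs with h
  · have := wtX_pos hτ k
    positivity
  · refine div_ne_zero (fun h0 => h ?_) hn.ne'
    have := (symbol_strictAnti hQ).injective (h0.trans hk.symm)
    omega

theorem tendsto_entry (hτ : 0 < τ) (hQ : Q ∈ Set.Ioo (0 : ℝ) 1) :
    Filter.Tendsto (entry τ Q k) Filter.atTop (nhds (-((1 - Q ^ 2) / 2) / τ)) := by
  have h1 : Filter.Tendsto (fun n : ℕ => 1 + Q ^ (n + 1) - (1 - Q ^ 2) / 2) Filter.atTop
      (nhds (1 + 0 - (1 - Q ^ 2) / 2)) :=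
    (((tendsto_pow_atTop_nhds_zero_of_lt_one hQ.1.le hQ.2).comp
      (Filter.tendsto_add_atTop_nat 1)).const_add 1).sub_const _
  have h2 : Filter.Tendsto (fun n : ℕ => (n : ℝ)⁻¹) Filter.atTop (nhds 0) :=
    tendsto_inv_atTop_nhds_zero_nat
  have h3 := ((h1.mul h2).sub_const ((1 - Q ^ 2) / 2)).div (h2.add_const τ) (by simpa using hτ.ne')
  simp only [mul_zero, zero_sub, zero_add] at h3
  refine h3.congr' ?_
  filter_upwards [Filter.eventually_gt_atTop k, Filter.eventually_gt_atTop 0] with n hn hn0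
  have hn0' : (0 : ℝ) < n := by exact_mod_cast hn0
  have : 0 < 1 + τ * n := by positivity
  have : 0 < (n : ℝ)⁻¹ + τ := by positivity
  simp only [entry, if_neg hn.ne', symbol, Pi.div_apply]
  push_cast
  field_simp
  ring

theorem exists_inv_entry_le (hτ : 0 < τ) (hQ : Q ∈ Set.Ioo (0 : ℝ) 1) :
    ∃ C, ∀ n, |(entry τ Q k n)⁻¹| ≤ C := by
  have hQ2 : Q ^ 2 < 1 := pow_lt_one₀ hQ.1.le hQ.2 two_ne_zero
  have hne : -((1 - Q ^ 2) / 2) / τ ≠ 0 :=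
    div_ne_zero (by linarith) hτ.ne'
  obtain ⟨C, hC⟩ :=
    (isBounded_range_of_tendsto _ ((tendsto_entry (k := k) hτ hQ).inv₀ hne)).exists_norm_le
  exact ⟨C, fun n => hC _ ⟨n, rfl⟩⟩

theorem coord_fderiv_branchFun (hτ : 0 < τ) (hQ : |Q| * ((1 + 2 * τ) * (1 + τ) ^ 2) < 1)
    (hk : symbol Q (k + 1) = 0) (ζ : L1 ℕ) (n : ℕ) :
    coord n ((fderiv ℝ (branchFun τ Q k) (0, 0) ∘L .inr ℝ ℝ (L1 ℕ)) ζ) =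
      entry τ Q k n * ζ n := by
  have hdiff := ((contDiffAt_branchFun (k := k) hτ hQ).differentiableAt one_ne_zero).hasFDerivAt
  have hline : HasDerivAt (fun t : ℝ => ((0 : ℝ), t • ζ)) (0, ζ) 0 := by
    simpa using (hasDerivAt_const (0 : ℝ) (0 : ℝ)).prodMk ((hasDerivAt_id (0 : ℝ)).smul_const ζ)
  have h0 : HasDerivAt (fun t : ℝ => branchFun τ Q k (0, t • ζ))
      (fderiv ℝ (branchFun τ Q k) (0, 0) (0, ζ)) 0 :=
    HasFDerivAt.comp_hasDerivAt (l := branchFun τ Q k) 0 (by simpa using hdiff) hline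
  have h1 : HasDerivAt (fun t : ℝ => coord n (branchFun τ Q k (0, t • ζ)))
      (coord n (fderiv ℝ (branchFun τ Q k) (0, 0) (0, ζ))) 0 :=
    (coord n).hasFDerivAt.comp_hasDerivAt 0 h0
  have hp : HasDerivAt (fun t : ℝ => paramQ Q k (t • ζ)) (ζ k) 0 := by
    simp only [paramQ, map_smul, coord_apply, smul_eq_mul]
    simpa using ((hasDerivAt_id (0 : ℝ)).mul_const (ζ k)).const_add Q
  have hp0 : paramQ Q k ((0 : ℝ) • ζ) = Q := by simp [paramQ]
  have hs : HasDerivAt (fun t : ℝ => symbol (paramQ Q k (t • ζ)) (n + 1))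
      (((n + 1) * Q ^ n + Q * (n + 1)) * ζ k) 0 := by
    refine HasDerivAt.comp (h₂ := fun q => symbol q (n + 1)) 0 ?_ hp
    rw [hp0]
    exact hasDerivAt_symbol Q n
  have hev : ∀ᶠ t : ℝ in nhds 0,
      |paramQ Q k (t • ζ)| * ((1 + 2 * τ) * (1 + τ) ^ 2) < 1 := by
    have hc : ContinuousAt (fun t : ℝ => |paramQ Q k (t • ζ)| * ((1 + 2 * τ) * (1 + τ) ^ 2)) 0 :=
      (hp.continuousAt.abs).mul continuousAt_const
    exact hc.eventually_lt continuousAt_const (by simpa only [hp0] using hQ)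
  have h2 : HasDerivAt (fun t : ℝ => coord n (branchFun τ Q k (0, t • ζ)))
      (entry τ Q k n * ζ n) 0 := by
    have h3 : HasDerivAt (fun t : ℝ => symbol (paramQ Q k (t • ζ)) (n + 1) / (1 + τ * n) *
        if n = k then wtX τ k else (t • ζ) n) (entry τ Q k n * ζ n) 0 := by
      unfold entry
      split_ifs with hn
      · subst hn
        convert! (hs.div_const (1 + τ * n)).mul_const (wtX τ n) using 1
        ring
      · have hz : HasDerivAt (fun t : ℝ => (t • ζ) n) (ζ n) 0 := by
          change HasDerivAt (fun t : ℝ => t * ζ n) (ζ n) 0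
          simpa using (hasDerivAt_id (0 : ℝ)).mul_const (ζ n)
        convert! (hs.div_const (1 + τ * n)).mul hz using 1
        rw [hp0]
        simp
    exact h3.congr_of_eventuallyEq (hev.mono fun t ht => coord_branchFun_zero hτ ht n)
  exact h1.unique h2

theorem isInvertible_of_coord {A : L1 ℕ →L[ℝ] L1 ℕ} {d : ℕ → ℝ} {C : ℝ} (hd : ∀ n, d n ≠ 0)
    (hC : ∀ n, |(d n)⁻¹| ≤ C) (hA : ∀ x n, coord n (A x) = d n * x n) : A.IsInvertible := by
  have hpos : ∀ n : ℕ, (0 : ℝ) < (fun _ => 1 : ℕ → ℝ) n := fun _ => one_pos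
  obtain ⟨B, hB⟩ := L1.exists_clm hpos (y := fun n => (d n)⁻¹ • L1.mono (fun _ => 1) n) (C := C)
    (fun n => by simpa [norm_smul, L1.norm_mono] using hC n)
  have hA' : ∀ n, A (L1.mono (fun _ => 1) n) = d n • L1.mono (fun _ => 1) n := by
    intro n
    ext i
    change coord i (A _) = d n * L1.mono (fun _ => 1) n i
    rw [hA, L1.mono_apply]
    split_ifs with h
    · rw [h]
    · simp
  have hBA : B ∘L A = .id ℝ _ := L1.ext_mono hpos fun n => by
    simp [hA', hB, smul_smul, hd]
  have hAB : A ∘L B = .id ℝ _ := L1.ext_mono hpos fun n => by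
    simp [hA', hB, smul_smul, hd]
  exact ⟨.equivOfInverse A B (fun x => DFunLike.congr_fun hBA x)
    (fun x => DFunLike.congr_fun hAB x), rfl⟩

/-- The branch of solutions produced by the implicit function theorem. -/
theorem exists_branch (hτ : 0 < τ) (hQ : |Q| * ((1 + 2 * τ) * (1 + τ) ^ 2) < 1)
    (hQ01 : Q ∈ Set.Ioo (0 : ℝ) 1) (hk : symbol Q (k + 1) = 0) :
    ∃ z : ℝ → L1 ℕ, z 0 = 0 ∧ (∀ᶠ ε in nhds 0, ContinuousAt z ε) ∧
      ∀ᶠ ε in nhds 0, branchFun τ Q k (ε, z ε) = 0 := by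
  obtain ⟨C, hC⟩ := exists_inv_entry_le (k := k) hτ hQ01
  have hinv := isInvertible_of_coord (entry_ne_zero hτ hQ01 hk) hC
    (coord_fderiv_branchFun hτ hQ hk)
  have hcd := contDiffAt_branchFun (k := k) hτ hQ
  have hzero : branchFun τ Q k (0, 0) = 0 := by
    have hq : paramQ Q k 0 = Q := by simp [paramQ]
    ext n
    change coord n _ = 0
    rw [coord_branchFun_zero hτ (by rwa [hq]), hq]
    split_ifs with h
    · rw [h, hk]
      simp
    · simp
  refine ⟨hcd.implicitFunction one_ne_zero hinv,
    hcd.implicitFunction_apply_self one_ne_zero hinv, ?_, ?_⟩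
  · exact ((hcd.contDiffAt_implicitFunction one_ne_zero hinv).eventually (by simp)).mono
      fun _ h => h.continuousAt
  · simpa only [hzero] using hcd.eventually_apply_implicitFunction one_ne_zero hinv

end VState

namespace VState

/-- Evaluation of a Laurent series at a point of the torus. -/
noncomputable def evL (τ : ℝ) (ξ w : ℂ) : Laurent →L[ℝ] ℂ :=
  L1.lift (wt₂ τ) fun p => ξ ^ p.1 * w ^ p.2

/-- Evaluation of a perturbation at a point of the circle. -/
noncomputable def evX (τ : ℝ) (w : ℂ) : L1 ℕ →L[ℝ] ℂ :=
  L1.lift (wtX τ) fun n => w ^ (n + 2)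

/-- Evaluation of the derivative of a perturbation at a point of the circle. -/
noncomputable def evX' (τ : ℝ) (w : ℂ) : L1 ℕ →L[ℝ] ℂ :=
  L1.lift (wtX τ) fun n => (n + 2 : ℝ) • w ^ (n + 1)

/-- Evaluation of a sine series at a point of the circle. -/
noncomputable def evY (τ : ℝ) (w : ℂ) : L1 ℕ →L[ℝ] ℝ :=
  L1.lift (wtY τ) fun n => (w ^ (n + 1)).im

/-- `T` acts as multiplication by `c` at the point `(ξ, w)`. -/
def HasSymbol (τ : ℝ) (ξ w : ℂ) (T : Op) (c : ℂ) : Prop :=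
  ∀ x, evL τ ξ w (T x) = c * evL τ ξ w x

variable {τ : ℝ} {ξ w : ℂ}

namespace HasSymbol

variable {S T : Op} {c d : ℂ}

theorem one : HasSymbol τ ξ w 1 1 := fun x => by simp

theorem add (hS : HasSymbol τ ξ w S c) (hT : HasSymbol τ ξ w T d) :
    HasSymbol τ ξ w (S + T) (c + d) := fun x => by
  rw [add_apply, map_add, hS, hT, add_mul]

theorem sub (hS : HasSymbol τ ξ w S c) (hT : HasSymbol τ ξ w T d) :
    HasSymbol τ ξ w (S - T) (c - d) := fun x => by
  rw [sub_apply, map_sub, hS, hT, sub_mul]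

theorem smul (a : ℝ) (hT : HasSymbol τ ξ w T d) : HasSymbol τ ξ w (a • T) (a * d) := fun x => by
  rw [smul_apply, map_smul, hT, Complex.real_smul, mul_assoc]

theorem mul (hS : HasSymbol τ ξ w S c) (hT : HasSymbol τ ξ w T d) :
    HasSymbol τ ξ w (S * T) (c * d) := fun x => by
  rw [mul_apply_eq_comp, hS, hT, mul_assoc]

end HasSymbol

variable (hτ : 0 < τ)
include hτ

theorem norm_zpow_mul_zpow_le (hξ : ‖ξ‖ = 1) (hw : ‖w‖ = 1) (p : ℤ × ℤ) :
    ‖ξ ^ p.1 * w ^ p.2‖ ≤ 1 * wt₂ τ p := by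
  simpa [norm_zpow, hξ, hw, wt₂] using one_le_pow₀ (one_le_one_add hτ)

theorem evL_monL (hξ : ‖ξ‖ = 1) (hw : ‖w‖ = 1) (j k : ℤ) :
    evL τ ξ w (monL τ j k) = ξ ^ j * w ^ k :=
  L1.lift_mono (wt₂_pos hτ) (norm_zpow_mul_zpow_le hτ hξ hw) (j, k)

theorem evX_monX (hw : ‖w‖ = 1) (n : ℕ) : evX τ w (monX τ n) = w ^ (n + 2) :=
  L1.lift_mono (wtX_pos hτ) (C := 1) (fun n => by
    simpa [norm_pow, hw] using (one_le_pow₀ (one_le_one_add hτ)).trans (pow_le_wtX hτ n)) n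

theorem evX'_monX (hw : ‖w‖ = 1) (n : ℕ) :
    evX' τ w (monX τ n) = (n + 2) * w ^ (n + 1) := by
  have h := L1.lift_mono (wtX_pos hτ) (y := fun n : ℕ => (n + 2 : ℝ) • w ^ (n + 1))
    (C := (2 + τ⁻¹) ^ 2) (fun n => ?_) n
  · exact h.trans (by simp)
  · refine le_trans ?_ (add_two_sq_le_wtX hτ n)
    rw [norm_smul, norm_pow, hw, one_pow, mul_one, Real.norm_of_nonneg (by positivity)]
    nlinarith

theorem evY_monY (hw : ‖w‖ = 1) (n : ℕ) : evY τ w (monY τ n) = (w ^ (n + 1)).im :=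
  L1.lift_mono (wtY_pos hτ) (C := 1) (fun n => by
    rw [one_mul]
    refine (Complex.abs_im_le_norm _).trans ?_
    simpa [norm_pow, hw, wtY] using one_le_pow₀ (one_le_one_add hτ)) n

theorem evY_sine (hw : ‖w‖ = 1) (k : ℤ) : evY τ w (sine τ k) = (w ^ k).im := by
  have hpos : ∀ n : ℕ, evY τ w (sine τ (n + 1)) = (w ^ (n + 1)).im := fun n => by
    rw [sine_natCast_add_one, evY_monY hτ hw]
  have hconj : w⁻¹ = (starRingEnd ℂ) w := Complex.inv_eq_conj hw
  rcases lt_trichotomy k 0 with h | h | h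
  · obtain ⟨n, rfl⟩ : ∃ n : ℕ, k = -(n + 1) := ⟨(-k - 1).toNat, by omega⟩
    rw [sine_neg, map_neg, hpos, zpow_neg, ← inv_zpow, hconj]
    have : (n : ℤ) + 1 = ((n + 1 : ℕ) : ℤ) := by push_cast; rfl
    rw [this, zpow_natCast, ← map_pow, Complex.conj_im]
  · simp [h, sine]
  · obtain ⟨n, rfl⟩ : ∃ n : ℕ, k = n + 1 := ⟨(k - 1).toNat, by omega⟩
    have : (n : ℤ) + 1 = ((n + 1 : ℕ) : ℤ) := by push_cast; rfl
    rw [hpos, this, zpow_natCast]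

theorem conj_evX (hw : ‖w‖ = 1) (h : L1 ℕ) :
    (starRingEnd ℂ) (evX τ w h) = evX τ w⁻¹ h := by
  have hw' : ‖w⁻¹‖ = 1 := by simp [hw]
  have : (Complex.conjCLE : ℂ →L[ℝ] ℂ) ∘L evX τ w = evX τ w⁻¹ :=
    L1.ext_mono (wtX_pos hτ) fun n => by
      rw [evX_monX hτ hw', ContinuousLinearMap.comp_apply, evX_monX hτ hw,
        Complex.inv_eq_conj hw]
      simp
  simpa using DFunLike.congr_fun this h

section torus
variable (hξ : ‖ξ‖ = 1) (hw : ‖w‖ = 1)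
include hξ hw

theorem hasSymbol_shift (a b : ℤ) : HasSymbol τ ξ w (shift τ a b) (ξ ^ a * w ^ b) := by
  have hξ0 : ξ ≠ 0 := by rintro rfl; simp at hξ
  have hw0 : w ≠ 0 := by rintro rfl; simp at hw
  have : evL τ ξ w ∘L shift τ a b = (ξ ^ a * w ^ b) • evL τ ξ w :=
    L1.ext_mono (wt₂_pos hτ) fun p => by
      simp only [ContinuousLinearMap.comp_apply, smul_apply, smul_eq_mul]
      rw [shift_monL hτ, evL_monL hτ hξ hw, evL_monL hτ hξ hw, zpow_add₀ hξ0, zpow_add₀ hw0]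
      ring
  exact fun x => by simpa using DFunLike.congr_fun this x

theorem HasSymbol.inverse {T : Op} {c : ℂ} (hT : HasSymbol τ ξ w T c) (hu : IsUnit T) :
    c ≠ 0 ∧ HasSymbol τ ξ w (Ring.inverse T) c⁻¹ := by
  have h : ∀ x, evL τ ξ w x = c * evL τ ξ w (Ring.inverse T x) := fun x => by
    rw [← hT, ← mul_apply_eq_comp, Ring.mul_inverse_cancel _ hu, one_apply_eq_self]
  have hc : c ≠ 0 := by
    rintro rfl
    simpa [evL_monL hτ hξ hw] using h (monL τ 0 0)
  exact ⟨hc, fun x => by rw [h x, inv_mul_cancel_left₀ hc]⟩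

omit hξ hw in
theorem evL_family {F : L1 ℕ →L[ℝ] Op} {e : L1 ℕ →L[ℝ] ℂ} {a : ℂ}
    (h : ∀ n, HasSymbol τ ξ w (F (monX τ n)) (e (monX τ n) / a)) (g : L1 ℕ) :
    HasSymbol τ ξ w (F g) (e g / a) := by
  intro x
  have : evL τ ξ w ∘L (ContinuousLinearMap.apply ℝ Laurent x ∘L F) =
      (a⁻¹ * evL τ ξ w x) • e := L1.ext_mono (wtX_pos hτ) fun n => by
    have := h n x
    simp only [ContinuousLinearMap.comp_apply, smul_apply, smul_eq_mul,
      ContinuousLinearMap.apply_apply]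
    rw [this]
    ring
  have h' := DFunLike.congr_fun this g
  simp only [ContinuousLinearMap.comp_apply, smul_apply, smul_eq_mul,
      ContinuousLinearMap.apply_apply] at h'
  rw [h']
  ring

omit hτ hξ hw in
theorem HasSymbol.sum {ι : Type*} (s : Finset ι) {T : ι → Op} {c : ι → ℂ}
    (h : ∀ i, HasSymbol τ ξ w (T i) (c i)) : HasSymbol τ ξ w (∑ i ∈ s, T i) (∑ i ∈ s, c i) := by
  intro x
  rw [sum_apply, map_sum, Finset.sum_mul]
  exact Finset.sum_congr rfl fun i _ => h i x

theorem hasSymbol_derivξ (g : L1 ℕ) : HasSymbol τ ξ w (derivξ τ g) (evX' τ ξ g) := by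
  have := evL_family hτ (ξ := ξ) (w := w) (F := derivξ τ) (e := evX' τ ξ) (a := 1) (fun n => ?_) g
  · simpa using this
  · rw [derivξ_monX hτ, evX'_monX hτ hξ]
    convert! (hasSymbol_shift hτ hξ hw (n + 1) 0).smul (n + 2 : ℝ) using 1
    have : (n : ℤ) + 1 = ((n + 1 : ℕ) : ℤ) := by push_cast; rfl
    rw [this, zpow_natCast]
    simp

theorem hasSymbol_eulerW (g : L1 ℕ) : HasSymbol τ ξ w (eulerW τ g) (w * evX' τ w g) := by
  have hw0 : w ≠ 0 := by rintro rfl; simp at hw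
  have := evL_family hτ (ξ := ξ) (w := w) (F := eulerW τ) (e := evX' τ w) (a := w⁻¹) (fun n => ?_) g
  · simpa [mul_comm] using this
  · rw [eulerW_monX hτ, evX'_monX hτ hw]
    convert! (hasSymbol_shift hτ hξ hw 0 (n + 2)).smul (n + 2 : ℝ) using 1
    have : (n : ℤ) + 2 = ((n + 2 : ℕ) : ℤ) := by push_cast; rfl
    rw [this, zpow_natCast]
    simp
    ring

theorem hasSymbol_reflW (g : L1 ℕ) : HasSymbol τ ξ w (reflW τ g) (evX τ w⁻¹ g) := by
  have hw' : ‖w⁻¹‖ = 1 := by simp [hw]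
  have := evL_family hτ (ξ := ξ) (w := w) (F := reflW τ) (e := evX τ w⁻¹) (a := 1) (fun n => ?_) g
  · simpa using this
  · rw [reflW_monX hτ, evX_monX hτ hw']
    convert! hasSymbol_shift hτ hξ hw 0 (-(n + 2)) using 1
    have : (n : ℤ) + 2 = ((n + 2 : ℕ) : ℤ) := by push_cast; rfl
    rw [zpow_neg, this, zpow_natCast]
    simp

theorem hasSymbol_divDiff (hne : ξ ≠ w) (g : L1 ℕ) :
    HasSymbol τ ξ w (divDiff τ g) ((evX τ ξ g - evX τ w g) / (ξ - w)) := by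
  refine evL_family hτ (e := evX τ ξ - evX τ w) (fun n => ?_) g
  rw [divDiff_monX hτ, sub_apply, evX_monX hτ hξ, evX_monX hτ hw, ← geom_sum₂_mul,
    mul_div_cancel_right₀ _ (sub_ne_zero.2 hne), Finset.sum_congr rfl
      (g := fun i : ℕ => ξ ^ (i : ℤ) * w ^ ((n : ℤ) + 1 - i)) fun i hi => ?_]
  · exact HasSymbol.sum _ fun i => hasSymbol_shift hτ hξ hw i (n + 1 - i)
  · rw [zpow_natCast, ← zpow_natCast w]
    have := Finset.mem_range.1 hi
    congr 2
    omega

theorem hasSymbol_divDiffInv (hne : ξ ≠ w) (g : L1 ℕ) :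
    HasSymbol τ ξ w (divDiffInv τ g) ((evX τ ξ⁻¹ g - evX τ w⁻¹ g) / (ξ⁻¹ - w⁻¹)) := by
  have hξ' : ‖ξ⁻¹‖ = 1 := by simp [hξ]
  have hw' : ‖w⁻¹‖ = 1 := by simp [hw]
  have hne' : ξ⁻¹ ≠ w⁻¹ := fun h => hne (inv_injective h)
  refine evL_family hτ (e := evX τ ξ⁻¹ - evX τ w⁻¹) (fun n => ?_) g
  rw [divDiffInv_monX hτ, sub_apply, evX_monX hτ hξ', evX_monX hτ hw', ← geom_sum₂_mul,
    mul_div_cancel_right₀ _ (sub_ne_zero.2 hne'), Finset.sum_congr rfl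
      (g := fun i : ℕ => ξ ^ (-i : ℤ) * w ^ (-((n : ℤ) + 1 - i))) fun i hi => ?_]
  · exact HasSymbol.sum _ fun i => hasSymbol_shift hτ hξ hw (-i) (-(n + 1 - i))
  · rw [zpow_neg, zpow_natCast, inv_pow, zpow_neg, inv_pow, ← zpow_natCast w]
    have := Finset.mem_range.1 hi
    congr 3
    omega

end torus
end VState

namespace VState

variable {τ : ℝ} {ξ w : ℂ} (hτ : 0 < τ)
include hτ

theorem norm_evL_le (hξ : ‖ξ‖ = 1) (hw : ‖w‖ = 1) (x : Laurent) : ‖evL τ ξ w x‖ ≤ 1 * ‖x‖ :=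
  L1.norm_apply_le (wt₂_pos hτ) (fun p => by
    simpa only [evL_monL hτ hξ hw] using norm_zpow_mul_zpow_le hτ hξ hw p) x

theorem continuousOn_evL (hw : ‖w‖ = 1) (x : Laurent) :
    ContinuousOn (fun ξ => evL τ ξ w x) (sphere 0 1) := by
  have h : Set.EqOn (fun ξ => evL τ ξ w x)
      (fun ξ => ∑' p, (x p / wt₂ τ p) • (ξ ^ p.1 * w ^ p.2)) (sphere 0 1) := fun ξ hξ => by
    have hξ' : ‖ξ‖ = 1 := by simpa using hξ
    have := L1.hasSum_apply (wt₂_pos hτ) (evL τ ξ w) x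
    simp only [evL_monL hτ hξ' hw] at this
    exact this.tsum_eq.symm
  refine ContinuousOn.congr ?_ h
  refine continuousOn_tsum (fun p => ?_) (L1.hasSum_abs x).summable fun p ξ hξ => ?_
  · have : ContinuousOn (fun ξ : ℂ => ξ ^ p.1) (sphere 0 1) := fun ξ hξ =>
      (continuousAt_zpow₀ ξ p.1 (.inl (ne_of_mem_sphere hξ one_ne_zero))).continuousWithinAt
    fun_prop
  · have hξ' : ‖ξ‖ = 1 := by simpa using hξ
    have := norm_zpow_mul_zpow_le hτ hξ' hw p
    rw [norm_smul, Real.norm_eq_abs, abs_div, abs_of_pos (wt₂_pos hτ p),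
      div_mul_eq_mul_div, div_le_iff₀ (wt₂_pos hτ p)]
    gcongr
    simpa using this

theorem circleIntegrable_evL (hw : ‖w‖ = 1) (x : Laurent) :
    CircleIntegrable (fun ξ => evL τ ξ w x) 0 1 :=
  (continuousOn_evL hτ hw x).circleIntegrable zero_le_one

theorem im_circleIntegral_evL (hw : ‖w‖ = 1) (x : Laurent) :
    ((∮ ξ in C(0, 1), evL τ ξ w x) / (2 * Real.pi * Complex.I)).im =
      evY τ w (imResidue τ x) := by
  let J₀ : Laurent →ₗ[ℝ] ℂ :=
    { toFun := fun x => ∮ ξ in C(0, 1), evL τ ξ w x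
      map_add' := fun x y => by
        simp only [map_add]
        exact circleIntegral.integral_add (circleIntegrable_evL hτ hw x)
          (circleIntegrable_evL hτ hw y)
      map_smul' := fun c x => by
        simp only [map_smul, RingHom.id_apply]
        exact circleIntegral.integral_smul c _ 0 1 }
  let J : Laurent →L[ℝ] ℂ := J₀.mkContinuous (2 * Real.pi) fun x => by
    have := circleIntegral.norm_integral_le_of_norm_le_const (f := fun ξ => evL τ ξ w x)
      (C := 1 * ‖x‖) (c := 0) (R := 1) zero_le_one fun ξ hξ =>
        norm_evL_le hτ (by simpa using hξ) hw x
    simp only [mul_one, one_mul] at this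
    exact this
  have hJ : ∀ y, J y = ∮ ξ in C(0, 1), evL τ ξ w y := fun y => rfl
  have key : Complex.imCLM ∘L ((2 * Real.pi * Complex.I)⁻¹ • J) = evY τ w ∘L imResidue τ := by
    refine L1.ext_mono (wt₂_pos hτ) fun p => ?_
    have h1 : J (monL τ p.1 p.2) = (∮ ξ in C(0, 1), (ξ - 0) ^ p.1) * w ^ p.2 := by
      rw [hJ, mul_comm, ← circleIntegral.integral_const_mul]
      refine circleIntegral.integral_congr zero_le_one fun ξ hξ => ?_
      have hξ' : ‖ξ‖ = 1 := by simpa using hξ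
      simp only [evL_monL hτ hξ' hw]
      rw [sub_zero, mul_comm]
    change ((2 * Real.pi * Complex.I)⁻¹ * J (monL τ p.1 p.2)).im =
      evY τ w (imResidue τ (monL τ p.1 p.2))
    rw [h1, imResidue_monL hτ]
    split_ifs with hp
    · rw [hp, evY_sine hτ hw]
      simp only [zpow_neg_one]
      rw [circleIntegral.integral_sub_center_inv _ one_ne_zero, inv_mul_cancel_left₀]
      simp [Real.pi_ne_zero]
    · rw [circleIntegral.integral_sub_zpow_of_ne hp]
      simp
  have := DFunLike.congr_fun key x
  rw [div_eq_inv_mul, ← hJ]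
  exact this

end VState

namespace VState

variable {τ : ℝ} {ξ w : ℂ} {ε Q : ℝ} {h : L1 ℕ} (hτ : 0 < τ)

/-- Multiplication by the kernel of the contour equation for `Φ w = w + Q / w + ε * h w`. -/
noncomputable def kernelOp (τ ε Q : ℝ) (h : L1 ℕ) : Op := ellipseOp τ Q + ε • excessOp τ ε Q h

theorem kernel_identity {ε κ D₀ X N₀ P₀ T₀ B₀ H P E N s S : ℂ} (hD₀ : D₀ ≠ 0)
    (hD : D₀ + ε * X ≠ 0) :
    κ * (s * (B₀ * T₀)) - D₀⁻¹ * (S * (N₀ * (P₀ * T₀))) +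
      ε * (κ * (s * (H * (T₀ + ε * E) + B₀ * E)) -
        D₀⁻¹ * (S * (N₀ * (P * (T₀ + ε * E) + P₀ * E))) +
        D₀⁻¹ * ((D₀ + ε * X)⁻¹ * (S * (N₀ * (X * ((P₀ + ε * P) * (T₀ + ε * E)))))) -
        (D₀ + ε * X)⁻¹ * (S * (N * ((P₀ + ε * P) * (T₀ + ε * E))))) =
    (κ * (B₀ + ε * H) * s - (N₀ + ε * N) / (D₀ + ε * X) * S * (P₀ + ε * P)) * (T₀ + ε * E) := by
  field_simp
  ring

include hτ

theorem evL_kernelOp (hξ : ‖ξ‖ = 1) (hw : ‖w‖ = 1) (hne : ξ ≠ w) (h₀ : IsUnit (opD₀ τ Q))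
    (h₁ : IsUnit (opD τ ε Q h)) :
    evL τ ξ w (kernelOp τ ε Q h (monL τ 0 0)) =
      (((1 - Q ^ 2) / 2 : ℝ) * (w⁻¹ + Q / w⁻¹ + ε * evX τ w⁻¹ h) * ξ⁻¹ +
        ((ξ⁻¹ + Q / ξ⁻¹ + ε * evX τ ξ⁻¹ h) - (w⁻¹ + Q / w⁻¹ + ε * evX τ w⁻¹ h)) /
          ((ξ + Q / ξ + ε * evX τ ξ h) - (w + Q / w + ε * evX τ w h)) *
          (1 - Q / ξ ^ 2 + ε * evX' τ ξ h)) *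
        (w * (1 - Q / w ^ 2 + ε * evX' τ w h)) := by
  have hξ0 : ξ ≠ 0 := by rintro rfl; simp at hξ
  have hw0 : w ≠ 0 := by rintro rfl; simp at hw
  have hs := hasSymbol_shift hτ hξ hw
  have hD₀ : HasSymbol τ ξ w (opD₀ τ Q) _ := HasSymbol.one.sub ((hs (-1) (-1)).smul Q)
  have hX := hasSymbol_divDiff hτ hξ hw hne h
  have hN := hasSymbol_divDiffInv hτ hξ hw hne h
  have hP := hasSymbol_derivξ hτ hξ hw h
  have hE := hasSymbol_eulerW hτ hξ hw h
  have hH := hasSymbol_reflW hτ hξ hw h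
  have hD : HasSymbol τ ξ w (opD τ ε Q h) _ := hD₀.add (hX.smul ε)
  have hN₀ : HasSymbol τ ξ w (opN₀ τ Q) _ := HasSymbol.one.sub ((hs 1 1).smul Q)
  have hP₀ : HasSymbol τ ξ w (opP₀ τ Q) _ := HasSymbol.one.sub ((hs (-2) 0).smul Q)
  have hT₀ : HasSymbol τ ξ w (opT₀ τ Q) _ := (hs 0 1).sub ((hs 0 (-1)).smul Q)
  have hB₀ : HasSymbol τ ξ w (opB₀ τ Q) _ := (hs 0 (-1)).add ((hs 0 1).smul Q)
  obtain ⟨hD₀0, hI₀⟩ := hD₀.inverse hτ hξ hw h₀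
  obtain ⟨hD0, hI⟩ := hD.inverse hτ hξ hw h₁
  have hPε := hP₀.add (hP.smul ε)
  have hTε := hT₀.add (hE.smul ε)
  have hS := hs (-1) (-1)
  have hs₁ := hs (-1) 0
  have hell : HasSymbol τ ξ w (ellipseOp τ Q) _ :=
    ((hs₁.mul (hB₀.mul hT₀)).smul ((1 - Q ^ 2) / 2)).sub
      (hI₀.mul (hS.mul (hN₀.mul (hP₀.mul hT₀))))
  have hexc : HasSymbol τ ξ w (excessOp τ ε Q h) _ :=
    ((((hs₁.mul ((hH.mul hTε).add (hB₀.mul hE))).smul ((1 - Q ^ 2) / 2)).sub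
      (hI₀.mul (hS.mul (hN₀.mul ((hP.mul hTε).add (hP₀.mul hE)))))).add
      (hI₀.mul (hI.mul (hS.mul (hN₀.mul (hX.mul (hPε.mul hTε))))))).sub
      (hI.mul (hS.mul (hN.mul (hPε.mul hTε))))
  have hfin := (hell.add (hexc.smul ε)) (monL τ 0 0)
  rw [kernelOp, hfin, kernel_identity hD₀0 hD0, evL_monL hτ hξ hw]
  have hsub : ξ - w ≠ 0 := sub_ne_zero.2 hne
  have hsub' : ξ⁻¹ - w⁻¹ ≠ 0 := sub_ne_zero.2 fun h => hne (inv_injective h)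
  have e1 : (ξ + Q / ξ + ε * evX τ ξ h) - (w + Q / w + ε * evX τ w h) =
      (ξ - w) * (1 - Q * (ξ ^ (-1 : ℤ) * w ^ (-1 : ℤ)) +
        ε * ((evX τ ξ h - evX τ w h) / (ξ - w))) := by
    simp only [zpow_neg_one]
    field_simp
    ring
  have e2 : (ξ⁻¹ + Q / ξ⁻¹ + ε * evX τ ξ⁻¹ h) - (w⁻¹ + Q / w⁻¹ + ε * evX τ w⁻¹ h) =
      -((ξ - w) * (ξ ^ (-1 : ℤ) * w ^ (-1 : ℤ))) * (1 - Q * (ξ ^ (1 : ℤ) * w ^ (1 : ℤ)) +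
        ε * ((evX τ ξ⁻¹ h - evX τ w⁻¹ h) / (ξ⁻¹ - w⁻¹))) := by
    have e3 : -((ξ - w) * (ξ ^ (-1 : ℤ) * w ^ (-1 : ℤ))) = ξ⁻¹ - w⁻¹ := by
      simp only [zpow_neg_one]
      field_simp
      ring
    rw [e3, mul_add, mul_left_comm _ (ε : ℂ), mul_div_cancel₀ _ hsub']
    simp only [zpow_one]
    field_simp
    ring
  rw [e1, e2]
  generalize (1 - Q * (ξ ^ (-1 : ℤ) * w ^ (-1 : ℤ)) +
        ε * ((evX τ ξ h - evX τ w h) / (ξ - w)) : ℂ) = d at *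
  generalize (1 - Q * (ξ ^ (1 : ℤ) * w ^ (1 : ℤ)) +
        ε * ((evX τ ξ⁻¹ h - evX τ w⁻¹ h) / (ξ⁻¹ - w⁻¹)) : ℂ) = n at *
  generalize ξ - w = y at *
  have e5 : ξ ^ (-2 : ℤ) = (ξ ^ 2)⁻¹ := by rw [zpow_neg]; norm_cast
  rw [e5]
  simp only [zpow_neg_one, zpow_zero, zpow_one]
  field_simp
  ring

/-- A perturbation in the kernel of `contourFun` solves the contour equation. -/
theorem im_contour_eq_zero (hw : ‖w‖ = 1) (hQ : |Q| * (1 + τ) ^ 2 < 1)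
    (h₁ : IsUnit (opD τ ε Q h)) (hzero : contourFun τ ε Q h = 0) {F F' : ℂ → ℂ}
    (hF : ∀ ξ : ℂ, ‖ξ‖ = 1 → F ξ = ε * evX τ ξ h)
    (hF' : ∀ ξ : ℂ, ‖ξ‖ = 1 → F' ξ = ε * evX' τ ξ h) :
    ((2 * (((1 - Q ^ 2) / 4 : ℝ) : ℂ) * starRingEnd ℂ (w + (Q : ℂ) / w + F w) +
      (∮ ξ in C(0, 1),
        (starRingEnd ℂ (ξ + (Q : ℂ) / ξ + F ξ) - starRingEnd ℂ (w + (Q : ℂ) / w + F w)) /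
          ((ξ + (Q : ℂ) / ξ + F ξ) - (w + (Q : ℂ) / w + F w)) *
          (1 - (Q : ℂ) / ξ ^ 2 + F' ξ)) / (2 * Real.pi * Complex.I)) *
      w * (1 - (Q : ℂ) / w ^ 2 + F' w)).im = 0 := by
  have hconj : ∀ ξ : ℂ, ‖ξ‖ = 1 → starRingEnd ℂ (ξ + (Q : ℂ) / ξ + F ξ) =
      ξ⁻¹ + Q / ξ⁻¹ + ε * evX τ ξ⁻¹ h := fun ξ hξ => by
    rw [hF ξ hξ, map_add, map_add, map_div₀, map_mul, conj_evX hτ hξ, Complex.conj_ofReal,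
      Complex.conj_ofReal, Complex.inv_eq_conj hξ]
  set b : ℂ := starRingEnd ℂ (w + (Q : ℂ) / w + F w) with hb
  set c : ℂ := w * (1 - (Q : ℂ) / w ^ 2 + F' w) with hc
  set K : ℂ → ℂ := fun ξ => (starRingEnd ℂ (ξ + (Q : ℂ) / ξ + F ξ) - b) /
    ((ξ + (Q : ℂ) / ξ + F ξ) - (w + (Q : ℂ) / w + F w)) * (1 - (Q : ℂ) / ξ ^ 2 + F' ξ) with hK
  set x := kernelOp τ ε Q h (monL τ 0 0) with hx
  have hpt : ∀ ξ : ℂ, ‖ξ‖ = 1 → ξ ≠ w →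
      c * K ξ = evL τ ξ w x - ((1 - Q ^ 2) / 2 : ℝ) * b * c * (ξ - 0)⁻¹ := by
    intro ξ hξ hne
    rw [hx, evL_kernelOp hτ hξ hw hne (isUnit_opD₀ hτ hQ) h₁]
    simp only [hK, hb, hc, hconj ξ hξ, hconj w hw, sub_zero]
    rw [hF ξ hξ, hF w hw, hF' ξ hξ, hF' w hw]
    ring
  have hKint : c * ∮ ξ in C(0, 1), K ξ =
      (∮ ξ in C(0, 1), evL τ ξ w x) -
        ((1 - Q ^ 2) / 2 : ℝ) * b * c * (2 * Real.pi * Complex.I) := by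
    rw [← circleIntegral.integral_const_mul,
      ← circleIntegral.integral_sub_center_inv (0 : ℂ) (R := 1) one_ne_zero,
      ← circleIntegral.integral_const_mul, ← circleIntegral.integral_sub
        (circleIntegrable_evL hτ hw x)]
    · refine intervalIntegral.integral_congr_ae ?_
      have hnull := (Set.countable_singleton w).preimage_circleMap (0 : ℂ) (R := 1) one_ne_zero
      filter_upwards [hnull.ae_notMem MeasureTheory.volume] with θ hθ _
      rw [hpt (circleMap 0 1 θ) (by simp) hθ]
    · refine ContinuousOn.circleIntegrable zero_le_one ?_
      refine continuousOn_const.mul (ContinuousOn.inv₀ (by fun_prop) fun ξ hξ => ?_)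
      rw [sub_zero]
      exact ne_of_mem_sphere hξ one_ne_zero
  have hzero' : ((∮ ξ in C(0, 1), evL τ ξ w x) / (2 * Real.pi * Complex.I)).im = 0 := by
    rw [im_circleIntegral_evL hτ hw, hx, kernelOp, add_apply, map_add, imResidue_ellipseOp hτ hQ,
      smul_apply, map_smul]
    change evY τ w (0 + ε • contourFun τ ε Q h) = 0
    rw [hzero]
    simp
  have hpi : (2 * Real.pi * Complex.I : ℂ) ≠ 0 := by simp [Real.pi_ne_zero]
  rw [← hzero', ← sub_add_cancel (∮ ξ in C(0, 1), evL τ ξ w x)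
    (((1 - Q ^ 2) / 2 : ℝ) * b * c * (2 * Real.pi * Complex.I)), ← hKint]
  congr 1
  rw [mul_assoc _ w, ← hc]
  push_cast
  field_simp
  ring

end VState

namespace VState

variable {τ : ℝ} {w : ℂ} (hτ : 0 < τ)

/-- The power series coefficients of `ε * h`. -/
noncomputable def coeff (τ ε : ℝ) (h : L1 ℕ) (n : ℕ) : ℝ :=
  if n < 2 then 0 else ε * (h (n - 2) / wtX τ (n - 2))

theorem coeff_add_two (τ ε : ℝ) (h : L1 ℕ) (n : ℕ) :
    coeff τ ε h (n + 2) = ε * (h n / wtX τ n) := by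
  simp [coeff]

include hτ

theorem seriesFun_coeff (hw : ‖w‖ = 1) (ε : ℝ) (h : L1 ℕ) :
    seriesFun (coeff τ ε h) w = ε * evX τ w h := by
  refine HasSum.tsum_eq ?_
  have hs := (L1.hasSum_apply (wtX_pos hτ) (evX τ w) h).mul_left (ε : ℂ)
  simp only [evX_monX hτ hw] at hs
  rw [← hasSum_nat_add_iff' 2]
  convert! hs using 1
  · ext n
    rw [coeff_add_two, Complex.real_smul]
    push_cast
    ring
  · simp [Finset.sum_range_succ, coeff]

theorem seriesDeriv_coeff (hw : ‖w‖ = 1) (ε : ℝ) (h : L1 ℕ) :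
    seriesDeriv (coeff τ ε h) w = ε * evX' τ w h := by
  refine HasSum.tsum_eq ?_
  have hs := (L1.hasSum_apply (wtX_pos hτ) (evX' τ w) h).mul_left (ε : ℂ)
  simp only [evX'_monX hτ hw] at hs
  rw [← hasSum_nat_add_iff' 2]
  convert! hs using 1
  · ext n
    rw [coeff_add_two, Complex.real_smul, show n + 2 - 1 = n + 1 from rfl]
    push_cast
    ring
  · simp [Finset.sum_range_succ, coeff]

theorem summable_mul_abs_coeff (ε : ℝ) (h : L1 ℕ) :
    Summable fun n : ℕ => (n : ℝ) * |coeff τ ε h n| := by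
  rw [← summable_nat_add_iff 2]
  refine .of_nonneg_of_le (fun n => by positivity) (fun n => ?_)
    ((L1.hasSum_abs h).summable.mul_left (|ε| * (2 + τ⁻¹) ^ 2))
  rw [coeff_add_two, abs_mul, abs_div, abs_of_pos (wtX_pos hτ n)]
  have h1 : ((n + 2 : ℕ) : ℝ) ≤ (2 + τ⁻¹) ^ 2 * wtX τ n := by
    refine le_trans ?_ (add_two_sq_le_wtX hτ n)
    push_cast
    nlinarith
  have h2 := wtX_pos hτ n
  calc ((n + 2 : ℕ) : ℝ) * (|ε| * (|h n| / wtX τ n))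
      ≤ (2 + τ⁻¹) ^ 2 * wtX τ n * (|ε| * (|h n| / wtX τ n)) := by gcongr
    _ = _ := by field_simp

omit hτ in
theorem norm_pow_sub_pow_le {w₁ w₂ : ℂ} (h₁ : ‖w₁‖ = 1) (h₂ : ‖w₂‖ = 1) (n : ℕ) :
    ‖w₁ ^ n - w₂ ^ n‖ ≤ n * ‖w₁ - w₂‖ := by
  rw [← geom_sum₂_mul, norm_mul]
  gcongr
  refine (norm_sum_le _ _).trans ?_
  simp [h₁, h₂]

omit hτ in
theorem norm_sub_le_two_mul_rpow {α : ℝ} (hα : α ∈ Set.Ioo (0 : ℝ) 1) {w₁ w₂ : ℂ}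
    (h₁ : ‖w₁‖ = 1) (h₂ : ‖w₂‖ = 1) : ‖w₁ - w₂‖ ≤ 2 * ‖w₁ - w₂‖ ^ α := by
  have hd : ‖w₁ - w₂‖ ≤ 2 := (norm_sub_le _ _).trans (by rw [h₁, h₂]; norm_num)
  rcases (norm_nonneg (w₁ - w₂)).eq_or_lt with h | h
  · rw [← h]
    positivity
  · calc ‖w₁ - w₂‖ = ‖w₁ - w₂‖ ^ (1 - α) * ‖w₁ - w₂‖ ^ α := by
          rw [← Real.rpow_add h, sub_add_cancel, Real.rpow_one]
      _ ≤ 2 * ‖w₁ - w₂‖ ^ α := by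
          gcongr
          calc ‖w₁ - w₂‖ ^ (1 - α) ≤ 2 ^ (1 - α) := by
                gcongr
                linarith [hα.2]
            _ ≤ 2 ^ (1 : ℝ) := by
                gcongr
                · norm_num
                · linarith [hα.1]
            _ = 2 := Real.rpow_one 2

theorem c1AlphaBound_of_eq {α : ℝ} (hα : α ∈ Set.Ioo (0 : ℝ) 1) {g g' : ℂ → ℂ} {M : ℝ} (h : L1 ℕ)
    (hg : ∀ w : ℂ, ‖w‖ = 1 → g w = evX τ w h) (hg' : ∀ w : ℂ, ‖w‖ = 1 → g' w = evX' τ w h)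
    (hM : 2 * (2 + τ⁻¹) ^ 2 * ‖h‖ ≤ M) : C1AlphaBound α M g g' := by
  have hC : (0 : ℝ) ≤ (2 + τ⁻¹) ^ 2 := by positivity
  refine ⟨fun w hw => ?_, fun w hw => ?_, fun w₁ hw₁ w₂ hw₂ => ?_⟩
  · have hw : ‖w‖ = 1 := by simpa using hw
    rw [hg w hw]
    refine (L1.norm_apply_le (wtX_pos hτ) (C := 2 * (2 + τ⁻¹) ^ 2) (fun n => ?_) h).trans hM
    rw [evX_monX hτ hw, norm_pow, hw, one_pow]
    have h0 : (0 : ℝ) ≤ n := n.cast_nonneg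
    nlinarith [add_two_sq_le_wtX hτ n]
  · have hw : ‖w‖ = 1 := by simpa using hw
    rw [hg' w hw]
    refine (L1.norm_apply_le (wtX_pos hτ) (C := 2 * (2 + τ⁻¹) ^ 2) (fun n => ?_) h).trans hM
    rw [evX'_monX hτ hw, norm_mul, norm_pow, hw, one_pow, mul_one]
    have : ‖(n + 2 : ℂ)‖ = n + 2 := by exact_mod_cast Complex.norm_natCast (n + 2)
    rw [this]
    nlinarith [add_two_sq_le_wtX hτ n]
  · have hw₁ : ‖w₁‖ = 1 := by simpa using hw₁
    have hw₂ : ‖w₂‖ = 1 := by simpa using hw₂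
    rw [hg' w₁ hw₁, hg' w₂ hw₂, ← sub_apply]
    set d := ‖w₁ - w₂‖ ^ α with hd
    have hd0 : 0 ≤ d := by positivity
    refine (L1.norm_apply_le (wtX_pos hτ) (C := 2 * (2 + τ⁻¹) ^ 2 * d) (fun n => ?_) h).trans
      (le_trans (le_of_eq (by ring)) (mul_le_mul_of_nonneg_right hM hd0))
    rw [sub_apply, evX'_monX hτ hw₁, evX'_monX hτ hw₂, ← mul_sub, norm_mul]
    have : ‖(n + 2 : ℂ)‖ = n + 2 := by exact_mod_cast Complex.norm_natCast (n + 2)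
    rw [this]
    have h1 := norm_pow_sub_pow_le hw₁ hw₂ (n + 1)
    have h2 := norm_sub_le_two_mul_rpow hα hw₁ hw₂
    calc (n + 2 : ℝ) * ‖w₁ ^ (n + 1) - w₂ ^ (n + 1)‖
        ≤ (n + 2) * ((n + 1 : ℕ) * (2 * d)) := by
          gcongr
          exact h1.trans (by gcongr)
      _ ≤ (n + 2) ^ 2 * (2 * d) := by
          rw [← mul_assoc, sq]
          gcongr
          push_cast
          linarith
      _ ≤ (2 + τ⁻¹) ^ 2 * wtX τ n * (2 * d) := by
          gcongr
          exact add_two_sq_le_wtX hτ n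
      _ = _ := by ring

theorem evX_opE (hw : ‖w‖ = 1) (Q : ℝ) (h : L1 ℕ) :
    evX τ w (opE τ Q h) = (1 - Q * w ^ 2) * evX τ w h := by
  have : evX τ w ∘L opE τ Q = (1 - Q * w ^ 2 : ℂ) • evX τ w :=
    L1.ext_mono (wtX_pos hτ) fun n => by
      rw [ContinuousLinearMap.comp_apply, opE_monX hτ, map_sub, map_smul, smul_apply,
        evX_monX hτ hw, evX_monX hτ hw, Complex.real_smul, smul_eq_mul]
      ring
  simpa using DFunLike.congr_fun this h

theorem evX'_opE (hw : ‖w‖ = 1) (Q : ℝ) (h : L1 ℕ) :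
    evX' τ w (opE τ Q h) = (1 - Q * w ^ 2) * evX' τ w h - 2 * Q * w * evX τ w h := by
  have : evX' τ w ∘L opE τ Q = (1 - Q * w ^ 2 : ℂ) • evX' τ w - (2 * Q * w : ℂ) • evX τ w :=
    L1.ext_mono (wtX_pos hτ) fun n => by
      rw [ContinuousLinearMap.comp_apply, opE_monX hτ, map_sub, map_smul, sub_apply, smul_apply,
        smul_apply, evX_monX hτ hw, evX'_monX hτ hw, evX'_monX hτ hw, Complex.real_smul,
        smul_eq_mul, smul_eq_mul]
      push_cast
      ring
  simpa using DFunLike.congr_fun this h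

omit hτ in
theorem one_sub_mul_sq_ne_zero {Q : ℝ} (hQ : |Q| < 1) (hw : ‖w‖ = 1) :
    1 - (Q : ℂ) * w ^ 2 ≠ 0 := by
  intro h
  have h1 : ‖(Q : ℂ) * w ^ 2‖ = 1 := by rw [← sub_eq_zero.1 h, norm_one]
  rw [norm_mul, norm_pow, hw, Complex.norm_real, Real.norm_eq_abs] at h1
  linarith

/-- The bifurcating mode is `w ^ (k + 2) / (1 - Q * w ^ 2)`. -/
theorem evX_of_opE_eq {Q : ℝ} (hQ : |Q| < 1) {k : ℕ} {v : L1 ℕ} (hv : opE τ Q v = monX τ k)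
    (hw : ‖w‖ = 1) : evX τ w v = w ^ (k + 2) / (1 - Q * w ^ 2) := by
  rw [eq_div_iff (one_sub_mul_sq_ne_zero hQ hw), mul_comm, ← evX_opE hτ hw, hv, evX_monX hτ hw]

theorem evX'_of_opE_eq {Q : ℝ} (hQ : |Q| < 1) {k : ℕ} {v : L1 ℕ} (hv : opE τ Q v = monX τ k)
    (hw : ‖w‖ = 1) :
    evX' τ w v = deriv (fun z : ℂ => z ^ (k + 2) / (1 - (Q : ℂ) * z ^ 2)) w := by
  have hne := one_sub_mul_sq_ne_zero hQ hw
  have hd : HasDerivAt (fun z : ℂ => z ^ (k + 2) / (1 - (Q : ℂ) * z ^ 2)) _ w :=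
    (hasDerivAt_pow (k + 2) w).div (((hasDerivAt_pow 2 w).const_mul (Q : ℂ)).const_sub 1) hne
  have h1 := evX'_opE hτ hw Q v
  rw [hv, evX'_monX hτ hw, evX_of_opE_eq hτ hQ hv hw] at h1
  have h2 : evX' τ w v =
      ((k + 2) * w ^ (k + 1) + 2 * Q * w * (w ^ (k + 2) / (1 - Q * w ^ 2))) / (1 - Q * w ^ 2) := by
    rw [eq_div_iff hne, h1]
    ring
  rw [hd.deriv, h2]
  push_cast
  simp only [pow_one]
  field_simp
  ring

end VState

namespace VState

theorem exists_weight {Q : ℝ} (hQ : Q ∈ Set.Ioo (0 : ℝ) 1) :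
    ∃ τ : ℝ, 0 < τ ∧ |Q| * ((1 + 2 * τ) * (1 + τ) ^ 2) < 1 := by
  have hc : ContinuousAt (fun τ : ℝ => |Q| * ((1 + 2 * τ) * (1 + τ) ^ 2)) 0 := by fun_prop
  have h := hc.eventually_lt_const (u := 1) (by simpa [abs_of_pos hQ.1] using hQ.2)
  obtain ⟨τ, hlt, hτ⟩ := ((h.filter_mono nhdsWithin_le_nhds).and
    (self_mem_nhdsWithin : Set.Ioi (0 : ℝ) ∈ nhdsWithin 0 (Set.Ioi 0))).exists
  exact ⟨τ, hτ, hlt⟩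

theorem exists_coeff_ne_zero {τ ε : ℝ} (hτ : 0 < τ) (hε : ε ≠ 0) {h : L1 ℕ} (hh : h ≠ 0) :
    ∃ n : ℕ, coeff τ ε h n ≠ 0 := by
  by_contra! hc
  refine hh (lp.ext (funext fun n => ?_))
  have := hc (n + 2)
  rw [coeff_add_two] at this
  simpa [hε, (wtX_pos hτ n).ne'] using this

theorem paramH_ne_zero {τ Q : ℝ} (hτ : 0 < τ) {k : ℕ} {z : L1 ℕ}
    (hQ : |paramQ Q k z| * ((1 + 2 * τ) * (1 + τ) ^ 2) < 1) : paramH τ Q k z ≠ 0 := by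
  intro h
  have h1 := congrArg (coord k) (opE_paramH hτ hQ)
  rw [h, map_zero, map_zero, coord_apply, paramU_apply hτ, if_pos rfl] at h1
  exact (wtX_pos hτ k).ne h1

theorem paramQ_zero (Q : ℝ) (k : ℕ) : paramQ Q k 0 = Q := by simp [paramQ]

theorem paramU_zero (τ : ℝ) (k : ℕ) : paramU τ k 0 = monX τ k := by simp [paramU]

/-- The solution branch with all open conditions arranged on a common interval. -/
theorem exists_interval {τ Q : ℝ} {k : ℕ} (hτ : 0 < τ)
    (hQ : |Q| * ((1 + 2 * τ) * (1 + τ) ^ 2) < 1)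
    (hQ01 : Q ∈ Set.Ioo (0 : ℝ) 1) (hk : symbol Q (k + 1) = 0) :
    ∃ z : ℝ → L1 ℕ, z 0 = 0 ∧ ∃ a : ℝ, 0 < a ∧ ∀ ε ∈ Set.Ioo (-a) a,
      ContinuousAt z ε ∧ branchFun τ Q k (ε, z ε) = 0 ∧
      |paramQ Q k (z ε)| * ((1 + 2 * τ) * (1 + τ) ^ 2) < 1 ∧
      paramQ Q k (z ε) ∈ Set.Ioo (0 : ℝ) 1 ∧
      IsUnit (opD τ ε (paramQ Q k (z ε)) (paramH τ Q k (z ε))) := by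
  obtain ⟨z, hz0, hz, hb⟩ := exists_branch hτ hQ hQ01 hk
  have hq0 : paramQ Q k (z 0) = Q := by rw [hz0, paramQ_zero]
  have hzc : ContinuousAt z 0 := hz.self_of_nhds
  have hq : ContinuousAt (fun ε => paramQ Q k (z ε)) 0 :=
    contDiff_paramQ.continuous.continuousAt.comp hzc
  have hh : ContinuousAt (fun ε => paramH τ Q k (z ε)) 0 :=
    ContinuousAt.comp (contDiffAt_paramH (by rw [hq0]; exact isUnit_opE hτ hQ)).continuousAt hzc
  have hD : ContinuousAt (fun ε => opD τ ε (paramQ Q k (z ε)) (paramH τ Q k (z ε))) 0 := by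
    unfold opD opD₀
    fun_prop
  have hu : IsUnit (opD τ 0 (paramQ Q k (z 0)) (paramH τ Q k (z 0))) := by
    rw [hq0]
    simpa [opD] using isUnit_opD₀ hτ (abs_mul_sq_lt_one hτ hQ)
  have h1 : ∀ᶠ ε in nhds 0, |paramQ Q k (z ε)| * ((1 + 2 * τ) * (1 + τ) ^ 2) < 1 :=
    (hq.abs.mul_const _).eventually_lt_const (by simpa only [hq0] using hQ)
  have h2 : ∀ᶠ ε in nhds 0, paramQ Q k (z ε) ∈ Set.Ioo (0 : ℝ) 1 :=
    hq.eventually_mem (Ioo_mem_nhds (by rw [hq0]; exact hQ01.1) (by rw [hq0]; exact hQ01.2))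
  have h3 := hD.eventually_mem (Units.isOpen.mem_nhds hu)
  obtain ⟨a, ha, hball⟩ :=
    Metric.eventually_nhds_iff.1 (hz.and (hb.and (h1.and (h2.and h3))))
  refine ⟨z, hz0, a, ha, fun ε hε => hball ?_⟩
  rw [Real.dist_eq, sub_zero]
  exact abs_lt.2 hε

end VState

open VState

/-- Main theorem: bifurcation of rotating vortex patches from the Kirchhoff
ellipse of parameter `Q_m`, the unique root in `(0,1)` of
`1 + Q^m - ((1-Q²)/2)m = 0` for `m ≥ 3`.  There are a bifurcation interval
`(-a,a)`, a continuous curve `ε ↦ Q(ε) ∈ (0,1)` with `Q(0) = Q_m`, and a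
family `f_ε(w) = Σ_{n≥2} a_n(ε) wⁿ` of perturbations with real Fourier
coefficients (holomorphic in the disc), continuous in `ε` for the
`C^{1+α}(𝕋)` norm, with `f_0 = 0`, `‖f_ε - ε v_m‖_{C^{1+α}} = o(ε)` where
`v_m(w) = w^{m+1}/(1 - Q_m w²)` (in particular `f_ε ≠ 0` for small `ε ≠ 0`),
such that `Φ_ε = α_{Q(ε)} + f_ε` solves the rotating-patch contour equation
with angular velocity `Ω_ε = (1 - Q(ε)²)/4`. -/
theorem bifurcation_from_ellipse (m : ℕ) (hm : 3 ≤ m)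
    (Qm : ℝ) (hQm : Qm ∈ Set.Ioo (0:ℝ) 1)
    (hroot : 1 + Qm ^ m - (1 - Qm ^ 2) / 2 * m = 0)
    (α : ℝ) (hα : α ∈ Set.Ioo (0:ℝ) 1) :
    ∃ a : ℝ, 0 < a ∧
    ∃ (Qf : ℝ → ℝ) (c : ℝ → ℕ → ℝ) (r : ℝ → ℝ),
      -- each f_ε is a power series Σ_{n≥2} a_n(ε) wⁿ with real coefficients,
      -- absolutely convergent together with its derivative (hence extending
      -- holomorphically to the open unit disc)
      (∀ ε ∈ Set.Ioo (-a) a, c ε 0 = 0 ∧ c ε 1 = 0 ∧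
        Summable fun n : ℕ => (n : ℝ) * |c ε n|) ∧
      -- ε ↦ Q(ε) is continuous with values in (0,1) and Q(0) = Q_m
      ContinuousOn Qf (Set.Ioo (-a) a) ∧
      (∀ ε ∈ Set.Ioo (-a) a, Qf ε ∈ Set.Ioo (0:ℝ) 1) ∧
      Qf 0 = Qm ∧
      -- f_0 = 0
      (∀ n : ℕ, c 0 n = 0) ∧
      -- ε ↦ f_ε is continuous into the C^{1+α}(𝕋) norm
      (∀ ε₀ ∈ Set.Ioo (-a) a, ∀ δ : ℝ, 0 < δ → ∃ η : ℝ, 0 < η ∧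
        ∀ ε ∈ Set.Ioo (-a) a, |ε - ε₀| < η →
          C1AlphaBound α δ
            (fun w => seriesFun (c ε) w - seriesFun (c ε₀) w)
            (fun w => seriesDeriv (c ε) w - seriesDeriv (c ε₀) w)) ∧
      -- ‖f_ε - ε v_m‖_{C^{1+α}(𝕋)} ≤ r(ε) with r(ε) = o(ε) as ε → 0
      (∀ ε ∈ Set.Ioo (-a) a,
        C1AlphaBound α (r ε)
          (fun w => seriesFun (c ε) w - (ε : ℂ) * (w ^ (m + 1) / (1 - (Qm : ℂ) * w ^ 2)))
          (fun w => seriesDeriv (c ε) w -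
            (ε : ℂ) * deriv (fun z : ℂ => z ^ (m + 1) / (1 - (Qm : ℂ) * z ^ 2)) w)) ∧
      Filter.Tendsto (fun ε : ℝ => r ε / |ε|) (nhdsWithin 0 {(0:ℝ)}ᶜ) (nhds 0) ∧
      -- in particular f_ε ≠ 0 for small ε ≠ 0
      (∃ a' : ℝ, 0 < a' ∧ a' ≤ a ∧
        ∀ ε : ℝ, ε ≠ 0 → |ε| < a' → ∃ n : ℕ, c ε n ≠ 0) ∧
      -- the rotating-patch (V-state) contour equation
      (∀ ε ∈ Set.Ioo (-a) a, ∀ w ∈ sphere (0:ℂ) 1,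
        ((2 * (((1 - Qf ε ^ 2) / 4 : ℝ) : ℂ) *
            starRingEnd ℂ (w + (Qf ε : ℂ) / w + seriesFun (c ε) w) +
          (∮ ξ in C(0, 1),
            (starRingEnd ℂ (ξ + (Qf ε : ℂ) / ξ + seriesFun (c ε) ξ) -
              starRingEnd ℂ (w + (Qf ε : ℂ) / w + seriesFun (c ε) w)) /
              ((ξ + (Qf ε : ℂ) / ξ + seriesFun (c ε) ξ) -
                (w + (Qf ε : ℂ) / w + seriesFun (c ε) w)) *
              (1 - (Qf ε : ℂ) / ξ ^ 2 + seriesDeriv (c ε) ξ)) /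
            (2 * Real.pi * Complex.I)) *
          w * (1 - (Qf ε : ℂ) / w ^ 2 + seriesDeriv (c ε) w)).im = 0) := by
  obtain ⟨k, rfl⟩ : ∃ k, m = k + 1 := ⟨m - 1, by omega⟩
  have hk : symbol Qm (k + 1) = 0 := hroot
  obtain ⟨τ, hτ, hQ⟩ := exists_weight hQm
  obtain ⟨z, hz0, a, ha, hz⟩ := exists_interval hτ hQ hQm hk
  set q : ℝ → ℝ := fun ε => paramQ Qm k (z ε)
  set h : ℝ → L1 ℕ := fun ε => paramH τ Qm k (z ε)
  have h0 : (0 : ℝ) ∈ Set.Ioo (-a) a := ⟨by linarith, ha⟩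
  have hq0 : q 0 = Qm := by simp only [q, hz0, paramQ_zero]
  have hv : opE τ Qm (h 0) = monX τ k := by
    have := opE_paramH hτ (hz 0 h0).2.2.1
    rwa [hz0, paramU_zero, paramQ_zero, ← hz0] at this
  have hQm1 : |Qm| < 1 := by rw [abs_of_pos hQm.1]; exact hQm.2
  have hqc : ∀ ε ∈ Set.Ioo (-a) a, ContinuousAt q ε := fun ε hε =>
    contDiff_paramQ.continuous.continuousAt.comp (hz ε hε).1
  have hhc : ∀ ε ∈ Set.Ioo (-a) a, ContinuousAt h ε := fun ε hε =>
    ContinuousAt.comp (contDiffAt_paramH (isUnit_opE hτ (hz ε hε).2.2.1)).continuousAt (hz ε hε).1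
  set C : ℝ := 2 * (2 + τ⁻¹) ^ 2
  have hC : 0 < C := by positivity
  refine ⟨a, ha, q, fun ε => coeff τ ε (h ε), fun ε => C * ‖ε • h ε - ε • h 0‖,
    fun ε _ => ⟨by simp [coeff], by simp [coeff], summable_mul_abs_coeff hτ ε (h ε)⟩,
    fun ε hε => (hqc ε hε).continuousWithinAt, fun ε hε => (hz ε hε).2.2.2.1, hq0,
    fun n => by simp [coeff], fun ε₀ hε₀ δ hδ => ?_, fun ε hε => ?_, ?_,
    ⟨a, ha, le_rfl, fun ε hε hεa =>
      exists_coeff_ne_zero hτ hε (paramH_ne_zero hτ (hz ε (abs_lt.1 hεa)).2.2.1)⟩,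
    fun ε hε w hw => ?_⟩
  · have hc : ContinuousAt (fun ε => C * ‖ε • h ε - ε₀ • h ε₀‖) ε₀ := by
      have := hhc ε₀ hε₀
      fun_prop
    obtain ⟨η, hη, hlt⟩ := Metric.eventually_nhds_iff.1
      (hc.eventually_lt_const (u := δ) (by simpa using hδ))
    refine ⟨η, hη, fun ε _ hε => c1AlphaBound_of_eq hτ hα (ε • h ε - ε₀ • h ε₀)
      (fun w hw => ?_) (fun w hw => ?_) (hlt (by rwa [Real.dist_eq])).le⟩
    · simp [seriesFun_coeff hτ hw]
    · simp [seriesDeriv_coeff hτ hw]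
  · refine c1AlphaBound_of_eq hτ hα (ε • h ε - ε • h 0) (fun w hw => ?_) (fun w hw => ?_) le_rfl
    · simp [seriesFun_coeff hτ hw, evX_of_opE_eq hτ hQm1 hv hw]
    · simp [seriesDeriv_coeff hτ hw, evX'_of_opE_eq hτ hQm1 hv hw]
  · have hc : ContinuousAt (fun ε => C * ‖h ε - h 0‖) 0 := by
      have := hhc 0 h0
      fun_prop
    have ht := hc.tendsto.mono_left (nhdsWithin_le_nhds (s := {(0 : ℝ)}ᶜ))
    simp only [sub_self, norm_zero, mul_zero] at ht
    refine ht.congr' ?_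
    filter_upwards [self_mem_nhdsWithin] with ε hε
    have : |ε| ≠ 0 := abs_ne_zero.2 hε
    rw [← smul_sub, norm_smul, Real.norm_eq_abs]
    field_simp
  · obtain ⟨-, hzero, hQε, -, hu⟩ := hz ε hε
    exact im_contour_eq_zero hτ (by simpa using hw) (abs_mul_sq_lt_one hτ hQε) hu hzero
      (fun ξ hξ => seriesFun_coeff hτ hξ ε (h ε)) (fun ξ hξ => seriesDeriv_coeff hτ hξ ε (h ε))
end

section
/- (Crandall–Rabinowitz) Let X, Y be real Banach spaces, V a neighborhood of 0 in X, and F : ℝ × V → Y a map such that: (1) F(λ, 0) = 0 for all λ ∈ ℝ; (2) F is of class C¹ and the mixed partial derivative ∂_λ∂_x F exists and is continuous; (3) the linear operator L₀ = ∂_x F(0,0) has one-dimensional kernel, spanned by some x₀ ∈ X, and its range R(L₀) is closed of codimension one in Y; (4) ∂_λ∂_x F(0,0)x₀ ∉ R(L₀). Then for any closed complement Z of span{x₀} in X there exist a neighborhood U of (0,0) in ℝ × X, a number a > 0, and continuous functions φ : (−a,a) → ℝ and ψ : (−a,a) → Z with φ(0) = 0 and ψ(0) = 0, such that F⁻¹(0)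 ∩ U = { (φ(ε), ε x₀ + ε ψ(ε)) : |ε| < a } ∪ { (λ, 0) : (λ,0) ∈ U }. -/
open Set Filter Topology Metric
open scoped NNReal

/-- A parametrised family of maps, each uniformly approximated on a closed ball by one linear
isomorphism, has a unique zero in that ball for each parameter near `s₀`, depending continuously on
the parameter. Only continuity in the parameter is assumed. -/
theorem exists_continuousOn_zero_of_approximatesLinearOn
    {S E Y : Type*} [TopologicalSpace S] [NormedAddCommGroup E] [NormedSpace ℝ E] [CompleteSpace E]
    [NormedAddCommGroup Y] [NormedSpace ℝ Y]
    (A : E ≃L[ℝ] Y) (G : S → E → Y) {r : ℝ} (hr : 0 < r) {c : ℝ≥0}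
    (hc : c < ‖(A.symm : Y →L[ℝ] E)‖₊⁻¹) {T : Set S} {s₀ : S} (hT : T ∈ 𝓝 s₀)
    (happ : ∀ s ∈ T, ApproximatesLinearOn (G s) (A : E →L[ℝ] Y) (closedBall 0 r) c)
    (hcont : ∀ w ∈ closedBall (0 : E) r, ContinuousOn (fun s => G s w) T)
    (h0 : G s₀ 0 = 0) :
    ∃ T' ∈ 𝓝 s₀, T' ⊆ T ∧ ∃ w : S → E, ContinuousOn w T' ∧ w s₀ = 0 ∧
      ∀ s ∈ T', w s ∈ closedBall 0 r ∧ G s (w s) = 0 ∧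
        ∀ v ∈ closedBall (0 : E) r, G s v = 0 → v = w s := by
  set N : ℝ≥0 := ‖(A.symm : Y →L[ℝ] E)‖₊
  have hgap : (0 : ℝ) < (N : ℝ)⁻¹ - c := by
    rw [sub_pos]; exact_mod_cast hc
  have hzero : (0 : E) ∈ closedBall (0 : E) r := mem_closedBall_self hr.le
  have hanti : ∀ s ∈ T, ∀ u ∈ closedBall (0 : E) r, ∀ v ∈ closedBall (0 : E) r,
      dist u v ≤ ((N⁻¹ - c)⁻¹ : ℝ≥0) * dist (G s u) (G s v) := by
    intro s hs u hu v hv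
    exact ((happ s hs).antilipschitz (Or.inr hc)).le_mul_dist ⟨u, hu⟩ ⟨v, hv⟩
  set T' : Set S := {s ∈ T | ‖G s 0‖ ≤ ((N : ℝ)⁻¹ - c) * r}
  have hT'nhds : T' ∈ 𝓝 s₀ := by
    have hca : ContinuousAt (fun s => ‖G s 0‖) s₀ := ((hcont 0 hzero).continuousAt hT).norm
    have hlt : ‖G s₀ 0‖ < ((N : ℝ)⁻¹ - c) * r := by rw [h0, norm_zero]; positivity
    filter_upwards [hT, hca.eventually (gt_mem_nhds hlt)] with s hs hs'
    exact ⟨hs, hs'.le⟩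
  have hex : ∀ s ∈ T', ∃ v ∈ closedBall (0 : E) r, G s v = 0 := by
    rintro s ⟨hs, hs'⟩
    have := (happ s hs).surjOn_closedBall_of_nonlinearRightInverse
      A.toNonlinearRightInverse hr.le Subset.rfl
    exact this (by rw [mem_closedBall, dist_comm, dist_zero_right]; exact hs')
  have hex' : ∀ s, ∃ v : E, s ∈ T' → v ∈ closedBall (0 : E) r ∧ G s v = 0 := by
    intro s
    by_cases hs : s ∈ T'
    · obtain ⟨v, hv⟩ := hex s hs
      exact ⟨v, fun _ => hv⟩
    · exact ⟨0, fun h => absurd h hs⟩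
  choose w hw using hex'
  have huniq : ∀ s ∈ T', ∀ v ∈ closedBall (0 : E) r, G s v = 0 → v = w s := by
    intro s hs v hv hGv
    have h := hanti s hs.1 v hv (w s) (hw s hs).1
    rw [hGv, (hw s hs).2, dist_self, mul_zero] at h
    exact dist_le_zero.1 h
  refine ⟨T', hT'nhds, fun s hs => hs.1, w, ?_, ?_, fun s hs =>
    ⟨(hw s hs).1, (hw s hs).2, huniq s hs⟩⟩
  · intro t ht
    have hlim : Tendsto (fun s => ((N⁻¹ - c)⁻¹ : ℝ≥0) * dist (0 : Y) (G s (w t))) (𝓝[T'] t)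
        (𝓝 0) := by
      have h1 : ContinuousWithinAt (fun s => G s (w t)) T' t :=
        (hcont _ (hw t ht).1 t ht.1).mono fun s hs => hs.1
      have h2 := (tendsto_const_nhds (x := (0 : Y))).dist h1.tendsto
      simpa [(hw t ht).2] using h2.const_mul (((N⁻¹ - c)⁻¹ : ℝ≥0) : ℝ)
    rw [ContinuousWithinAt, tendsto_iff_dist_tendsto_zero]
    refine squeeze_zero' (Eventually.of_forall fun _ => dist_nonneg) ?_ hlim
    filter_upwards [self_mem_nhdsWithin] with s hs
    have h := hanti s hs.1 _ (hw s hs).1 _ (hw t ht).1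
    rwa [(hw s hs).2] at h
  · exact (huniq s₀ (mem_of_mem_nhds hT'nhds) 0 hzero h0).symm

section ParametrizedMaps

variable {X Y : Type*} [NormedAddCommGroup X] [NormedSpace ℝ X]
  [NormedAddCommGroup Y] [NormedSpace ℝ Y]
  {F : ℝ × X → Y} {DxF DlDxF : ℝ × X → X →L[ℝ] Y} {L M : X →L[ℝ] Y} {ρ δ : ℝ}

/-- First-order approximation of `F (lam, ·)` by `L` where the partial derivative is close to
`L`. -/
theorem norm_sub_sub_le_of_partial_deriv_near
    (hD : ∀ lam : ℝ, |lam| < ρ → ∀ x ∈ ball (0 : X) ρ,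
      HasFDerivAt (fun x => F (lam, x)) (DxF (lam, x)) x)
    (hL : ∀ lam : ℝ, |lam| < ρ → ∀ x ∈ ball (0 : X) ρ, ‖DxF (lam, x) - L‖ ≤ δ)
    {lam : ℝ} (hlam : |lam| < ρ) {x y : X} (hx : x ∈ ball (0 : X) ρ) (hy : y ∈ ball (0 : X) ρ) :
    ‖F (lam, y) - F (lam, x) - L (y - x)‖ ≤ δ * ‖y - x‖ :=
  (convex_ball (0 : X) ρ).norm_image_sub_le_of_norm_hasFDerivWithin_le'
    (f := fun x => F (lam, x)) (fun x hx => (hD lam hlam x hx).hasFDerivWithinAt)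
    (hL lam hlam) hx hy

/-- Variation of `F (·, v)` when `F` vanishes on the trivial branch and the mixed derivative is
close to `M`. -/
theorem norm_sub_sub_le_of_mixed_deriv_near
    (htrivial : ∀ lam : ℝ, F (lam, 0) = 0)
    (hD : ∀ lam : ℝ, |lam| < ρ → ∀ x ∈ ball (0 : X) ρ,
      HasFDerivAt (fun x => F (lam, x)) (DxF (lam, x)) x)
    (hDD : ∀ lam : ℝ, |lam| < ρ → ∀ x ∈ ball (0 : X) ρ,
      HasDerivAt (fun lam : ℝ => DxF (lam, x)) (DlDxF (lam, x)) lam)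
    (hM : ∀ lam : ℝ, |lam| < ρ → ∀ x ∈ ball (0 : X) ρ, ‖DlDxF (lam, x) - M‖ ≤ δ)
    {lam mu : ℝ} (hlam : |lam| < ρ) (hmu : |mu| < ρ) {v : X} (hv : v ∈ ball (0 : X) ρ) :
    ‖F (lam, v) - F (mu, v) - (lam - mu) • M v‖ ≤ δ * |lam - mu| * ‖v‖ := by
  have hρ : 0 < ρ := (abs_nonneg _).trans_lt hlam
  have hderiv : ∀ x ∈ ball (0 : X) ρ,
      ‖DxF (lam, x) - DxF (mu, x) - (lam - mu) • M‖ ≤ δ * |lam - mu| := by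
    intro x hx
    have h := (convex_ball (0 : ℝ) ρ).norm_image_sub_le_of_norm_hasDerivWithin_le
      (f := fun t : ℝ => DxF (t, x) - t • M) (f' := fun t => DlDxF (t, x) - M) (C := δ)
      (x := mu) (y := lam)
      (fun t ht => by
        have ht' : |t| < ρ := by simpa using ht
        have h := (hDD t ht' x hx).sub ((hasDerivAt_id t).smul_const M)
        rw [one_smul] at h
        exact h.hasDerivWithinAt)
      (fun t ht => hM t (by simpa using ht) x hx) (by simpa using hmu) (by simpa using hlam)
    rw [Real.norm_eq_abs] at h
    have e : DxF (lam, x) - DxF (mu, x) - (lam - mu) • M =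
        DxF (lam, x) - lam • M - (DxF (mu, x) - mu • M) := by
      rw [sub_smul]; abel
    rw [e]
    exact h
  have h := (convex_ball (0 : X) ρ).norm_image_sub_le_of_norm_hasFDerivWithin_le'
    (f := fun x => F (lam, x) - F (mu, x)) (φ := (lam - mu) • M)
    (fun x hx => ((hD lam hlam x hx).sub (hD mu hmu x hx)).hasFDerivWithinAt)
    hderiv (mem_ball_self hρ) hv
  simpa [htrivial] using h

/-- The rescaled map `(lam, z) ↦ s⁻¹ • F (lam, s • (x₀ + z))` is close to the linear map
`(lam, z) ↦ lam • M x₀ + L z` near the origin. -/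
theorem norm_rescaled_sub_sub_le
    (htrivial : ∀ lam : ℝ, F (lam, 0) = 0)
    (hD : ∀ lam : ℝ, |lam| < ρ → ∀ x ∈ ball (0 : X) ρ,
      HasFDerivAt (fun x => F (lam, x)) (DxF (lam, x)) x)
    (hDD : ∀ lam : ℝ, |lam| < ρ → ∀ x ∈ ball (0 : X) ρ,
      HasDerivAt (fun lam : ℝ => DxF (lam, x)) (DlDxF (lam, x)) lam)
    (hL : ∀ lam : ℝ, |lam| < ρ → ∀ x ∈ ball (0 : X) ρ, ‖DxF (lam, x) - L‖ ≤ δ)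
    (hM : ∀ lam : ℝ, |lam| < ρ → ∀ x ∈ ball (0 : X) ρ, ‖DlDxF (lam, x) - M‖ ≤ δ)
    {s : ℝ} (hs : s ≠ 0) {x₀ z z' : X} {lam mu : ℝ} (hlam : |lam| < ρ) (hmu : |mu| < ρ)
    (hz : s • (x₀ + z) ∈ ball (0 : X) ρ) (hz' : s • (x₀ + z') ∈ ball (0 : X) ρ) :
    ‖s⁻¹ • F (lam, s • (x₀ + z)) - s⁻¹ • F (mu, s • (x₀ + z')) -
        ((lam - mu) • M x₀ + L (z - z'))‖ ≤
      δ * ‖z - z'‖ + (δ * ‖x₀ + z'‖ + ‖M‖ * ‖z'‖) * |lam - mu| := by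
  have h1 := norm_sub_sub_le_of_partial_deriv_near hD hL hlam hz' hz
  have h2 := norm_sub_sub_le_of_mixed_deriv_near htrivial hD hDD hM hlam hmu hz'
  have hzz : s • (x₀ + z) - s • (x₀ + z') = s • (z - z') := by
    rw [← smul_sub, add_sub_add_left_eq_sub]
  rw [hzz] at h1
  set P := F (lam, s • (x₀ + z)) - F (lam, s • (x₀ + z')) - L (s • (z - z')) with hP
  set Q := F (lam, s • (x₀ + z')) - F (mu, s • (x₀ + z')) - (lam - mu) • M (s • (x₀ + z'))
    with hQ
  have hsplit : s⁻¹ • F (lam, s • (x₀ + z)) - s⁻¹ • F (mu, s • (x₀ + z')) -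
      ((lam - mu) • M x₀ + L (z - z')) = s⁻¹ • P + s⁻¹ • Q + (lam - mu) • M z' := by
    have e1 : s⁻¹ • L (s • (z - z')) = L (z - z') := by
      rw [map_smul, inv_smul_smul₀ hs]
    have e2 : s⁻¹ • ((lam - mu) • M (s • (x₀ + z'))) = (lam - mu) • M (x₀ + z') := by
      rw [map_smul, smul_comm s⁻¹, inv_smul_smul₀ hs]
    rw [hP, hQ, smul_sub s⁻¹, smul_sub s⁻¹, smul_sub s⁻¹, smul_sub s⁻¹, e1, e2, map_add,
      smul_add (lam - mu)]
    abel
  have hs' : 0 < ‖s‖ := norm_pos_iff.2 hs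
  have hPn : ‖s⁻¹ • P‖ ≤ δ * ‖z - z'‖ := by
    rw [norm_smul, norm_inv, inv_mul_le_iff₀ hs']
    rw [norm_smul] at h1
    linarith
  have hQn : ‖s⁻¹ • Q‖ ≤ δ * |lam - mu| * ‖x₀ + z'‖ := by
    rw [norm_smul, norm_inv, inv_mul_le_iff₀ hs']
    rw [norm_smul] at h2
    linarith
  have hRn : ‖(lam - mu) • M z'‖ ≤ |lam - mu| * (‖M‖ * ‖z'‖) := by
    rw [norm_smul, Real.norm_eq_abs]
    gcongr
    exact M.le_opNorm z'
  rw [hsplit]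
  calc _ ≤ ‖s⁻¹ • P‖ + ‖s⁻¹ • Q‖ + ‖(lam - mu) • M z'‖ := norm_add₃_le
    _ ≤ _ := by linarith

end ParametrizedMaps

/-- An injective operator together with a vector spanning a complement of its range gives an
isomorphism from the product with the line. -/
theorem exists_continuousLinearEquiv_prod_of_isCompl_range
    {E Y : Type*} [NormedAddCommGroup E] [NormedSpace ℝ E] [CompleteSpace E]
    [NormedAddCommGroup Y] [NormedSpace ℝ Y] [CompleteSpace Y]
    (g : E →L[ℝ] Y) (hg : Function.Injective g) {m : Y} (hm : m ≠ 0)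
    (h : IsCompl (Submodule.span ℝ {m}) (LinearMap.range (g : E →ₗ[ℝ] Y))) :
    ∃ B : (ℝ × E) ≃L[ℝ] Y, ∀ w, B w = w.1 • m + g w.2 := by
  let f : ℝ × E →L[ℝ] Y := (ContinuousLinearMap.toSpanSingleton ℝ m).coprod g
  have hf : ∀ w, f w = w.1 • m + g w.2 := fun w => by simp [f]
  have hinj : LinearMap.ker (f : ℝ × E →ₗ[ℝ] Y) = ⊥ := by
    rw [LinearMap.ker_eq_bot']
    rintro ⟨t, z⟩ hw
    have hw' : t • m + g z = 0 := (hf (t, z)).symm.trans hw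
    have htm : t • m = 0 := by
      refine Submodule.disjoint_def.1 h.disjoint _
        (Submodule.smul_mem _ _ (Submodule.mem_span_singleton_self m)) ⟨-z, ?_⟩
      simpa using (eq_neg_of_add_eq_zero_left hw').symm
    have ht : t = 0 := (smul_eq_zero.1 htm).resolve_right hm
    have hz : z = 0 := hg (by simpa [ht] using hw')
    rw [ht, hz]; rfl
  have hsurj : LinearMap.range (f : ℝ × E →ₗ[ℝ] Y) = ⊤ := by
    rw [eq_top_iff]
    intro y _
    obtain ⟨u, hu, v, ⟨z, rfl⟩, rfl⟩ :=
      Submodule.mem_sup.1 (h.sup_eq_top ▸ Submodule.mem_top : y ∈ _ ⊔ _)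
    obtain ⟨t, rfl⟩ := Submodule.mem_span_singleton.1 hu
    exact ⟨(t, z), hf (t, z)⟩
  exact ⟨ContinuousLinearEquiv.ofBijective f hinj hsurj, hf⟩

/-- A vector outside a subspace of codimension one spans a complement of it. -/
theorem isCompl_span_singleton_of_finrank_quotient_eq_one
    {Y : Type*} [AddCommGroup Y] [Module ℝ Y] {R : Submodule ℝ Y}
    (hR : Module.finrank ℝ (Y ⧸ R) = 1) {m : Y} (hm : m ∉ R) :
    IsCompl (Submodule.span ℝ {m}) R := by
  have hm' : R.mkQ m ≠ 0 := by simpa using hm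
  refine ⟨?_, ?_⟩
  · rw [disjoint_comm, Submodule.disjoint_span_singleton']
    · exact hm
    · rintro rfl; exact hm R.zero_mem
  · rw [codisjoint_iff, eq_top_iff]
    intro y _
    obtain ⟨t, ht⟩ := (finrank_eq_one_iff_of_nonzero' _ hm').1 hR (R.mkQ y)
    have hty : y - t • m ∈ R := by
      rw [← R.ker_mkQ, LinearMap.mem_ker, map_sub, map_smul, ht, sub_self]
    exact Submodule.mem_sup.2 ⟨t • m, Submodule.smul_mem _ _ (Submodule.mem_span_singleton_self m),
      y - t • m, hty, by abel⟩

set_option maxHeartbeats 400000 in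
/-- Crandall–Rabinowitz bifurcation theorem: let `X, Y` be real Banach spaces,
`V` a neighborhood of `0` in `X` and `F : ℝ × V → Y` with `F(λ,0) = 0` for all
`λ`, `F` of class `C¹` with continuous partial derivative `DxF` in `x` and
continuous mixed derivative `DλDxF`; assume the kernel of `L₀ = DxF(0,0)` is
one-dimensional, spanned by `x₀`, the range of `L₀` is closed of codimension
one, and the transversality condition `DλDxF(0,0)x₀ ∉ R(L₀)` holds.  Then for
any closed complement `Z` of `span{x₀}` there are a neighborhood `U` of
`(0,0)`, a number `a > 0` and continuous functions `φ : (-a,a) → ℝ`,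
`ψ : (-a,a) → Z` with `φ(0) = 0`, `ψ(0) = 0`, such that
`F⁻¹(0) ∩ U = {(φ(ε), ε x₀ + ε ψ(ε)) : |ε| < a} ∪ {(λ,0) ∈ U}`. -/
theorem crandall_rabinowitz
    {X Y : Type*} [NormedAddCommGroup X] [NormedSpace ℝ X] [CompleteSpace X]
    [NormedAddCommGroup Y] [NormedSpace ℝ Y] [CompleteSpace Y]
    (V : Set X) (hV : V ∈ nhds (0 : X))
    (F : ℝ × X → Y)
    (htrivial : ∀ lam : ℝ, F (lam, 0) = 0)
    (hC1 : ContDiffOn ℝ 1 F {p : ℝ × X | p.2 ∈ V})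
    (DxF : ℝ × X → X →L[ℝ] Y)
    (hDxF : ∀ p : ℝ × X, p.2 ∈ V → HasFDerivAt (fun x => F (p.1, x)) (DxF p) p.2)
    (hDxFcont : ContinuousOn DxF {p : ℝ × X | p.2 ∈ V})
    (DlDxF : ℝ × X → X →L[ℝ] Y)
    (hDlDxF : ∀ p : ℝ × X, p.2 ∈ V →
      HasDerivAt (fun lam : ℝ => DxF (lam, p.2)) (DlDxF p) p.1)
    (hDlDxFcont : ContinuousOn DlDxF {p : ℝ × X | p.2 ∈ V})
    (x₀ : X) (hx₀ : x₀ ≠ 0)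
    (hker : LinearMap.ker (DxF (0, 0) : X →ₗ[ℝ] Y) = Submodule.span ℝ {x₀})
    (hclosed : IsClosed (LinearMap.range (DxF (0, 0) : X →ₗ[ℝ] Y) : Set Y))
    (hcodim : Module.finrank ℝ (Y ⧸ LinearMap.range (DxF (0, 0) : X →ₗ[ℝ] Y)) = 1)
    (htrans : DlDxF (0, 0) x₀ ∉ LinearMap.range (DxF (0, 0) : X →ₗ[ℝ] Y))
    (Z : Submodule ℝ X) (hZclosed : IsClosed (Z : Set X))
    (hcompl : IsCompl (Submodule.span ℝ {x₀}) Z) :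
    ∃ U ∈ nhds ((0 : ℝ), (0 : X)), (∀ p ∈ U, p.2 ∈ V) ∧
    ∃ a : ℝ, 0 < a ∧ ∃ φ : ℝ → ℝ, ∃ ψ : ℝ → X,
      ContinuousOn φ (Set.Ioo (-a) a) ∧
      ContinuousOn ψ (Set.Ioo (-a) a) ∧
      (∀ e ∈ Set.Ioo (-a) a, ψ e ∈ Z) ∧
      φ 0 = 0 ∧ ψ 0 = 0 ∧
      {p : ℝ × X | p ∈ U ∧ F p = 0} =
        {p : ℝ × X | ∃ e : ℝ, e ∈ Set.Ioo (-a) a ∧ p = (φ e, e • x₀ + e • ψ e)}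
          ∪ {p : ℝ × X | p ∈ U ∧ p.2 = 0} := by
  set L := DxF (0, 0)
  set M := DlDxF (0, 0)
  have : CompleteSpace Z := hZclosed.completeSpace_coe
  obtain ⟨B, hB⟩ := exists_continuousLinearEquiv_prod_of_isCompl_range Z.subtypeL
    Subtype.val_injective hx₀ (by simpa using hcompl)
  have hLx₀ : L x₀ = 0 := by
    have : x₀ ∈ LinearMap.ker (L : X →ₗ[ℝ] Y) := hker ▸ Submodule.mem_span_singleton_self x₀
    simpa using this
  have hLinj : Function.Injective (L.comp Z.subtypeL) := by
    rw [injective_iff_map_eq_zero]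
    intro z hz
    have hzker : (z : X) ∈ Submodule.span ℝ {x₀} := by
      rw [← hker]; simpa using hz
    exact Subtype.ext (Submodule.disjoint_def.1 hcompl.disjoint _ hzker z.2)
  have hLrange : LinearMap.range ((L.comp Z.subtypeL : Z →L[ℝ] Y) : Z →ₗ[ℝ] Y) =
      LinearMap.range (L : X →ₗ[ℝ] Y) := by
    apply le_antisymm
    · rintro _ ⟨z, rfl⟩
      exact ⟨z, rfl⟩
    · rintro _ ⟨x, rfl⟩
      obtain ⟨w, rfl⟩ := B.surjective x
      exact ⟨w.2, by simp [hB, hLx₀]⟩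
  have hMx₀ : M x₀ ≠ 0 := fun h => htrans (h ▸ Submodule.zero_mem _)
  obtain ⟨A, hA⟩ := exists_continuousLinearEquiv_prod_of_isCompl_range (L.comp Z.subtypeL)
    hLinj hMx₀ (by
      rw [hLrange]; exact isCompl_span_singleton_of_finrank_quotient_eq_one hcodim htrans)
  have hnear : ∀ δ : ℝ, 0 < δ → ∃ ρ : ℝ, 0 < ρ ∧ ball (0 : X) ρ ⊆ V ∧
      (∀ lam : ℝ, |lam| < ρ → ∀ x ∈ ball (0 : X) ρ, ‖DxF (lam, x) - L‖ ≤ δ) ∧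
      (∀ lam : ℝ, |lam| < ρ → ∀ x ∈ ball (0 : X) ρ, ‖DlDxF (lam, x) - M‖ ≤ δ) := by
    intro δ hδ
    have hVn : {p : ℝ × X | p.2 ∈ V} ∈ 𝓝 ((0 : ℝ), (0 : X)) :=
      continuous_snd.continuousAt.preimage_mem_nhds hV
    have h1 := (hDxFcont.continuousAt hVn).eventually (closedBall_mem_nhds _ hδ)
    have h2 := (hDlDxFcont.continuousAt hVn).eventually (closedBall_mem_nhds _ hδ)
    obtain ⟨ρ, hρ, hsub⟩ := Metric.eventually_nhds_iff_ball.1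
      ((show ∀ᶠ p : ℝ × X in 𝓝 (0, 0), p.2 ∈ V from hVn).and (h1.and h2))
    have hmem : ∀ lam : ℝ, |lam| < ρ → ∀ x ∈ ball (0 : X) ρ,
        (lam, x) ∈ ball ((0 : ℝ), (0 : X)) ρ := by
      intro lam hlam x hx
      rw [← ball_prod_same]
      exact ⟨by simpa using hlam, hx⟩
    refine ⟨ρ, hρ, fun x hx => (hsub _ (hmem 0 (by simpa using hρ) x hx)).1,
      fun lam hlam x hx => ?_, fun lam hlam x hx => ?_⟩
    · rw [← dist_eq_norm]; exact (hsub _ (hmem lam hlam x hx)).2.1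
    · rw [← dist_eq_norm]; exact (hsub _ (hmem lam hlam x hx)).2.2
  set N : ℝ≥0 := ‖(A.symm : Y →L[ℝ] ℝ × Z)‖₊
  have hN : 0 < N := A.nnnorm_symm_pos
  set c : ℝ≥0 := N⁻¹ / 2
  have hc : 0 < c := by positivity
  have hcR : (0 : ℝ) < c := hc
  have hcN : c < N⁻¹ := half_lt_self (by positivity)
  set δ : ℝ := c / (2 * (‖x₀‖ + 2)) with hδdef
  have hδ : 0 < δ := by positivity
  have hδc : δ * (‖x₀‖ + 2) = c / 2 := by rw [hδdef]; field_simp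
  obtain ⟨ρ, hρ, hρV, hρL, hρM⟩ := hnear δ hδ
  have hD : ∀ lam : ℝ, |lam| < ρ → ∀ x ∈ ball (0 : X) ρ,
      HasFDerivAt (fun x => F (lam, x)) (DxF (lam, x)) x :=
    fun lam _ x hx => hDxF (lam, x) (hρV hx)
  have hDD : ∀ lam : ℝ, |lam| < ρ → ∀ x ∈ ball (0 : X) ρ,
      HasDerivAt (fun lam : ℝ => DxF (lam, x)) (DlDxF (lam, x)) lam :=
    fun lam _ x hx => hDlDxF (lam, x) (hρV hx)
  set r : ℝ := min 1 (min (ρ / 2) (c / (2 * (‖M‖ + 1))))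
  have hr : 0 < r := by positivity
  have hr1 : r ≤ 1 := min_le_left _ _
  have hrρ : r < ρ :=
    ((min_le_right _ _).trans (min_le_left _ _)).trans_lt (half_lt_self hρ)
  have hrM : ‖M‖ * r ≤ c / 2 := by
    have h : r ≤ c / (2 * (‖M‖ + 1)) := (min_le_right _ _).trans (min_le_right _ _)
    rw [le_div_iff₀ (by positivity)] at h
    nlinarith [norm_nonneg M]
  have hball : ∀ w ∈ closedBall (0 : ℝ × Z) r, |w.1| ≤ r ∧ ‖(w.2 : X)‖ ≤ r := by
    intro w hw
    rw [mem_closedBall_zero_iff] at hw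
    exact ⟨(norm_fst_le w).trans hw, (norm_snd_le w).trans hw⟩
  set T : Set ℝ := {s | |s| * (‖x₀‖ + 1) < ρ} with hTdef
  have hT : T ∈ 𝓝 (0 : ℝ) := by
    refine IsOpen.mem_nhds (isOpen_lt (by fun_prop) continuous_const) ?_
    simpa [hTdef] using hρ
  have hscale : ∀ s ∈ T, ∀ w ∈ closedBall (0 : ℝ × Z) r, s • (x₀ + w.2) ∈ ball (0 : X) ρ := by
    intro s hs w hw
    rw [mem_ball_zero_iff, norm_smul, Real.norm_eq_abs]
    refine lt_of_le_of_lt ?_ hs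
    gcongr
    exact (norm_add_le _ _).trans (by linarith [(hball w hw).2])
  let G : ℝ → ℝ × Z → Y := fun s w => dslope (fun t : ℝ => F (w.1, t • (x₀ + w.2))) 0 s
  have hGne : ∀ s w, s ≠ 0 → G s w = s⁻¹ • F (w.1, s • (x₀ + w.2)) := by
    intro s w hs
    simp [G, dslope_of_ne _ hs, slope_def_module, htrivial]
  have hGderiv : ∀ w ∈ closedBall (0 : ℝ × Z) r, ∀ s ∈ T,
      HasDerivAt (fun t : ℝ => F (w.1, t • (x₀ + w.2)))
        (DxF (w.1, s • (x₀ + w.2)) (x₀ + w.2)) s := by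
    intro w hw s hs
    have h1 := hD w.1 ((hball w hw).1.trans_lt hrρ) _ (hscale s hs w hw)
    have h2 : HasDerivAt (fun t : ℝ => t • (x₀ + (w.2 : X))) (x₀ + (w.2 : X)) s := by
      simpa using (hasDerivAt_id s).smul_const (x₀ + (w.2 : X))
    exact h1.comp_hasDerivAt s h2
  have hGcont : ∀ w ∈ closedBall (0 : ℝ × Z) r, ContinuousOn (fun s => G s w) T := by
    intro w hw
    exact (continuousOn_dslope hT).2
      ⟨fun s hs => (hGderiv w hw s hs).continuousAt.continuousWithinAt,
        (hGderiv w hw 0 (mem_of_mem_nhds hT)).differentiableAt⟩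
  have hG0 : G 0 0 = 0 := by
    have h := (hGderiv 0 (mem_closedBall_self hr.le) 0 (mem_of_mem_nhds hT)).deriv
    have hG : G 0 0 = deriv (fun t : ℝ => F ((0 : ℝ × Z).1, t • (x₀ + (0 : ℝ × Z).2))) 0 :=
      dslope_same _ _
    rw [hG, h]
    simpa using hLx₀
  have happne : ∀ s ∈ T, s ≠ 0 → ∀ w ∈ closedBall (0 : ℝ × Z) r, ∀ w' ∈ closedBall (0 : ℝ × Z) r,
      ‖G s w - G s w' - A (w - w')‖ ≤ c * ‖w - w'‖ := by
    intro s hs hs0 w hw w' hw'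
    have h := norm_rescaled_sub_sub_le htrivial hD hDD hρL hρM hs0
      ((hball w hw).1.trans_lt hrρ) ((hball w' hw').1.trans_lt hrρ)
      (hscale s hs w hw) (hscale s hs w' hw')
    rw [hGne s w hs0, hGne s w' hs0, hA]
    refine h.trans ?_
    have hz : ‖(w.2 : X) - w'.2‖ ≤ ‖w - w'‖ := norm_snd_le (w - w')
    have hl : |w.1 - w'.1| ≤ ‖w - w'‖ := norm_fst_le (w - w')
    have hx : ‖x₀ + (w'.2 : X)‖ ≤ ‖x₀‖ + 1 :=
      (norm_add_le _ _).trans (by linarith [(hball w' hw').2])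
    calc δ * ‖(w.2 : X) - w'.2‖ + (δ * ‖x₀ + (w'.2 : X)‖ + ‖M‖ * ‖(w'.2 : X)‖) * |w.1 - w'.1|
        ≤ δ * ‖w - w'‖ + (δ * (‖x₀‖ + 1) + ‖M‖ * r) * ‖w - w'‖ := by
          gcongr
          exact (hball w' hw').2
      _ = (δ * (‖x₀‖ + 2) + ‖M‖ * r) * ‖w - w'‖ := by ring
      _ ≤ c * ‖w - w'‖ := by
          gcongr
          linarith
  have happ : ∀ s ∈ T, ApproximatesLinearOn (G s) (A : ℝ × Z →L[ℝ] Y) (closedBall 0 r) c := by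
    intro s hs w hw w' hw'
    rcases eq_or_ne s 0 with rfl | hs0
    · have hlim : Tendsto (fun s => ‖G s w - G s w' - A (w - w')‖) (𝓝[≠] 0)
          (𝓝 ‖G 0 w - G 0 w' - A (w - w')‖) :=
        (((((hGcont w hw).continuousAt hT).sub ((hGcont w' hw').continuousAt hT)).sub
          continuousAt_const).norm.tendsto).mono_left nhdsWithin_le_nhds
      refine le_of_tendsto hlim ?_
      filter_upwards [self_mem_nhdsWithin, mem_nhdsWithin_of_mem_nhds hT] with s hs0 hs
      exact happne s hs hs0 w hw w' hw'
    · exact happne s hs hs0 w hw w' hw'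
  obtain ⟨T', hT', -, w, hwcont, hw0, hw⟩ :=
    exists_continuousOn_zero_of_approximatesLinearOn A G hr hcN hT happ hGcont hG0
  set δ' : ℝ := r / (2 * N * (‖x₀‖ + 1)) with hδ'def
  have hNR : (0 : ℝ) < N := hN
  have hδ' : 0 < δ' := by positivity
  have hδ'r : 2 * (N * δ') * (‖x₀‖ + 1) = r := by rw [hδ'def]; field_simp
  obtain ⟨ρ', hρ', hρ'V, hρ'L, -⟩ := hnear δ' hδ'
  have hcone : ∀ lam : ℝ, |lam| < ρ' → ∀ u : ℝ × Z, B u ∈ ball (0 : X) ρ' → F (lam, B u) = 0 →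
      ‖u.2‖ ≤ r * |u.1| := by
    intro lam hlam u hu hF
    have h1 := norm_sub_sub_le_of_partial_deriv_near
      (fun lam _ x hx => hDxF (lam, x) (hρ'V hx)) hρ'L hlam (mem_ball_self hρ') hu
    have hAu : A (0, u.2) = L (B u) := by simp [hA, hB, hLx₀]
    rw [hF, htrivial, sub_zero, sub_zero, zero_sub, norm_neg, ← hAu, hB] at h1
    have h2 : ‖u.2‖ ≤ N * ‖A (0, u.2)‖ := by
      have h := (A.symm : Y →L[ℝ] ℝ × Z).le_opNorm (A (0, u.2))
      simp only [ContinuousLinearEquiv.coe_coe, ContinuousLinearEquiv.symm_apply_apply] at h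
      exact (norm_snd_le ((0 : ℝ), u.2)).trans h
    have h3 : ‖u.1 • x₀ + Z.subtypeL u.2‖ ≤ |u.1| * ‖x₀‖ + ‖u.2‖ := by
      refine (norm_add_le _ _).trans ?_
      rw [norm_smul]; rfl
    have h4 : ‖u.2‖ ≤ N * δ' * (|u.1| * ‖x₀‖ + ‖u.2‖) := by
      calc ‖u.2‖ ≤ N * (δ' * ‖u.1 • x₀ + Z.subtypeL u.2‖) := h2.trans (by gcongr)
        _ ≤ N * (δ' * (|u.1| * ‖x₀‖ + ‖u.2‖)) := by gcongr
        _ = _ := by ring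
    have hNδ : 0 < N * δ' := by positivity
    have h5 : N * δ' ≤ 1 / 2 := by nlinarith [norm_nonneg x₀]
    have h6 : N * δ' * ‖u.2‖ ≤ 1 / 2 * ‖u.2‖ := by gcongr
    have h7 : 0 ≤ N * δ' * |u.1| := by positivity
    calc ‖u.2‖ ≤ 2 * (N * δ') * (‖x₀‖ + 1) * |u.1| := by nlinarith
      _ = r * |u.1| := by rw [hδ'r]
  set W : Set (ℝ × X) := {p | |p.1| < min ρ' r ∧ p.2 ∈ ball (0 : X) ρ'}
  have hW : W ∈ 𝓝 ((0 : ℝ), (0 : X)) := by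
    have h : IsOpen {p : ℝ × X | |p.1| < min ρ' r} := isOpen_lt (by fun_prop) continuous_const
    refine (h.inter (isOpen_ball.preimage continuous_snd)).mem_nhds ⟨?_, mem_ball_self hρ'⟩
    simpa using ⟨hρ', hr⟩
  let γ : ℝ → ℝ × X := fun e => ((w e).1, e • x₀ + e • ((w e).2 : X))
  have hγ : ∀ᶠ e in 𝓝 (0 : ℝ), γ e ∈ W := by
    have hwc : ContinuousAt w 0 := hwcont.continuousAt hT'
    have hγc : ContinuousAt γ 0 := by fun_prop
    exact hγc.eventually (by simpa [γ, hw0] using hW)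
  obtain ⟨a, ha, hasub⟩ := Metric.eventually_nhds_iff_ball.1 
    (hγ.and (show ∀ᶠ e in 𝓝 (0 : ℝ), e ∈ T' from hT'))
  have hIoo : ∀ e : ℝ, e ∈ Ioo (-a) a ↔ |e| < a := fun e => abs_lt.symm
  have haW : ∀ e ∈ Ioo (-a) a, γ e ∈ W := fun e he =>
    (hasub e (by simpa using (hIoo e).1 he)).1
  have haT : ∀ e ∈ Ioo (-a) a, e ∈ T' := fun e he =>
    (hasub e (by simpa using (hIoo e).1 he)).2
  have hγB : ∀ e, (γ e).2 = B (e, e • (w e).2) := fun e => by simp [γ, hB]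
  have hwIoo : ContinuousOn w (Ioo (-a) a) := hwcont.mono haT
  refine ⟨{p | p ∈ W ∧ |(B.symm p.2).1| < a}, ?_, fun p hp => hρ'V hp.1.2, a, ha,
    fun e => (w e).1, fun e => (w e).2, by fun_prop, by fun_prop, fun e _ => (w e).2.2,
    by simp [hw0], by simp [hw0], ?_⟩
  · have h : IsOpen {p : ℝ × X | |(B.symm p.2).1| < a} :=
      isOpen_lt (by fun_prop) continuous_const
    exact inter_mem hW (h.mem_nhds (by simpa using ha))
  ext p
  constructor
  · rintro ⟨⟨hpW, hpa⟩, hFp⟩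
    obtain ⟨lam, x⟩ := p
    obtain ⟨⟨s, z⟩, rfl⟩ := B.surjective x
    have hsa : |s| < a := by simpa using hpa
    have hlam := lt_min_iff.1 hpW.1
    have hzs := hcone lam hlam.1 (s, z) hpW.2 hFp
    rcases eq_or_ne s 0 with rfl | hs0
    · right
      refine ⟨⟨hpW, hpa⟩, ?_⟩
      have hz0 : z = 0 := by simpa using hzs
      simp [hz0, hB]
    · left
      have hsT := haT s ((hIoo s).2 hsa)
      have hball' : (lam, s⁻¹ • z) ∈ closedBall (0 : ℝ × Z) r := by
        rw [mem_closedBall_zero_iff, Prod.norm_def]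
        refine max_le hlam.2.le ?_
        rw [norm_smul, norm_inv, inv_mul_le_iff₀ (norm_pos_iff.2 hs0), mul_comm]
        exact hzs
      have hx : B (s, z) = s • (x₀ + ((s⁻¹ • z : Z) : X)) := by
        simp [hB, smul_smul, hs0]
      have heq := (hw s hsT).2.2 _ hball' (by
        rw [hGne _ _ hs0, ← hx, hFp, smul_zero])
      refine ⟨s, (hIoo s).2 hsa, ?_⟩
      simp only [← heq, hx, smul_add]
  · rintro (⟨e, he, rfl⟩ | ⟨hpU, hp0⟩)
    · refine ⟨⟨haW e he, ?_⟩, ?_⟩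
      · have h : B.symm (γ e).2 = (e, e • (w e).2) := by rw [hγB, B.symm_apply_apply]
        exact (congrArg (fun u : ℝ × Z => |u.1|) h).trans_lt ((hIoo e).1 he)
      · rcases eq_or_ne e 0 with rfl | he0
        · simp [htrivial]
        · have h := (hw e (haT e he)).2.1
          rw [hGne _ _ he0, smul_add] at h
          exact (smul_eq_zero.1 h).resolve_left (inv_ne_zero he0)
    · obtain ⟨lam, x⟩ := p
      obtain rfl : x = 0 := hp0
      exact ⟨hpU, htrivial lam⟩
end

section
/- Let ε ∈ (0,1), Q ∈ (0, ε], and let f be holomorphic on the open unit disc, such that f and its derivative f′ extend continuously to the closed unit disc, with sup_{|z|≤1} |f′(z)| ≤ (1−ε)/2. Then for all w, ξ on the unit circle 𝕋: |(α_Q(w) + f(w)) − (α_Q(ξ) + f(ξ))| ≥ ((1−ε)/2)|w − ξ|. In particular the map w ↦ α_Q(w) + f(w) is injective on 𝕋. -/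
/-- The ellipse parametrization `w ↦ w + Q / w` expands distances on the unit circle by at least
the factor `1 - Q`. -/
theorem one_sub_mul_norm_sub_le_norm_ellipse_sub {Q : ℝ} (hQ : 0 ≤ Q) {w ξ : ℂ}
    (hw : ‖w‖ = 1) (hξ : ‖ξ‖ = 1) :
    (1 - Q) * ‖w - ξ‖ ≤ ‖(w + (Q : ℂ) / w) - (ξ + (Q : ℂ) / ξ)‖ := by
  have hw0 : w ≠ 0 := norm_ne_zero_iff.mp (by simp [hw])
  have hξ0 : ξ ≠ 0 := norm_ne_zero_iff.mp (by simp [hξ])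
  have hsplit : (w + (Q : ℂ) / w) - (ξ + (Q : ℂ) / ξ)
      = (w - ξ) - (Q : ℂ) * (w - ξ) / (w * ξ) := by
    field_simp
    ring
  have hnorm : ‖(Q : ℂ) * (w - ξ) / (w * ξ)‖ = Q * ‖w - ξ‖ := by
    simp [hw, hξ, abs_of_nonneg hQ]
  rw [hsplit]
  linarith [norm_sub_norm_le (w - ξ) ((Q : ℂ) * (w - ξ) / (w * ξ))]

/-- Mean value inequality on a closed ball, for a function differentiable in the open ball and
continuous up to the boundary. -/
theorem norm_sub_le_of_norm_hasDerivAt_le_of_mem_closedBall {f f' : ℂ → ℂ} {c : ℂ} {r C : ℝ}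
    (hr : r ≠ 0) (hC : 0 ≤ C) (hfc : ContinuousOn f (Metric.closedBall c r))
    (hderiv : ∀ z ∈ Metric.ball c r, HasDerivAt f (f' z) z)
    (hbound : ∀ z ∈ Metric.ball c r, ‖f' z‖ ≤ C) {x y : ℂ}
    (hx : x ∈ Metric.closedBall c r) (hy : y ∈ Metric.closedBall c r) :
    ‖f x - f y‖ ≤ C * ‖x - y‖ := by
  lift C to NNReal using hC
  have hlip : LipschitzOnWith C f (Metric.ball c r) :=
    (convex_ball c r).lipschitzOnWith_of_nnnorm_hasDerivWithin_le
      (fun z hz => (hderiv z hz).hasDerivWithinAt) hbound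
  rw [← closure_ball c hr] at hfc hx hy
  exact (hlip.closure hfc).norm_sub_le hx hy

/-- Coercivity of the perturbed ellipse parametrization: if `Q ∈ (0, ε]` with
`ε ∈ (0,1)` and `f` is holomorphic in the unit disc, with `f` and `f'`
continuous up to the closed disc and `sup_{|z|≤1} |f'(z)| ≤ (1-ε)/2`, then
`|(α_Q + f)(w) - (α_Q + f)(ξ)| ≥ ((1-ε)/2)|w - ξ|` for `w, ξ` on the unit
circle; in particular `α_Q + f` is injective on the circle. -/
theorem perturbed_ellipse_coercivity (ε : ℝ) (hε : ε ∈ Set.Ioo (0:ℝ) 1)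
    (Q : ℝ) (hQ : Q ∈ Set.Ioc (0:ℝ) ε)
    (f f' : ℂ → ℂ)
    (hf : DifferentiableOn ℂ f (Metric.ball (0:ℂ) 1))
    (hfc : ContinuousOn f (Metric.closedBall (0:ℂ) 1))
    (hderiv : ∀ z ∈ Metric.ball (0:ℂ) 1, HasDerivAt f (f' z) z)
    (hf'c : ContinuousOn f' (Metric.closedBall (0:ℂ) 1))
    (hbound : ∀ z ∈ Metric.closedBall (0:ℂ) 1, ‖f' z‖ ≤ (1 - ε) / 2) :
    (∀ w ∈ Metric.sphere (0:ℂ) 1, ∀ ξ ∈ Metric.sphere (0:ℂ) 1,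
      (1 - ε) / 2 * ‖w - ξ‖
        ≤ ‖(w + (Q : ℂ) / w + f w) - (ξ + (Q : ℂ) / ξ + f ξ)‖) ∧
    Set.InjOn (fun w : ℂ => w + (Q : ℂ) / w + f w) (Metric.sphere (0:ℂ) 1) := by
  have hcoercive : ∀ w ∈ Metric.sphere (0:ℂ) 1, ∀ ξ ∈ Metric.sphere (0:ℂ) 1,
      (1 - ε) / 2 * ‖w - ξ‖
        ≤ ‖(w + (Q : ℂ) / w + f w) - (ξ + (Q : ℂ) / ξ + f ξ)‖ := by
    intro w hw ξ hξ
    have hellipse := one_sub_mul_norm_sub_le_norm_ellipse_sub hQ.1.le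
      (mem_sphere_zero_iff_norm.mp hw) (mem_sphere_zero_iff_norm.mp hξ)
    have hpert : ‖f w - f ξ‖ ≤ (1 - ε) / 2 * ‖w - ξ‖ :=
      norm_sub_le_of_norm_hasDerivAt_le_of_mem_closedBall one_ne_zero (by linarith [hε.2]) hfc
        hderiv (fun z hz => hbound z (Metric.ball_subset_closedBall hz))
        (Metric.sphere_subset_closedBall hw) (Metric.sphere_subset_closedBall hξ)
    have htri := norm_sub_le_norm_add ((w + (Q : ℂ) / w) - (ξ + (Q : ℂ) / ξ)) (f w - f ξ)
    rw [← add_sub_add_comm] at htri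
    have hQε : (1 - ε) * ‖w - ξ‖ ≤ (1 - Q) * ‖w - ξ‖ := by
      gcongr
      exact hQ.2
    linarith
  refine ⟨hcoercive, fun w hw ξ hξ heq => ?_⟩
  have hle := hcoercive w hw ξ hξ
  rw [sub_eq_zero.mpr heq, norm_zero] at hle
  have hpos : 0 < (1 - ε) / 2 := by linarith [hε.2]
  exact sub_eq_zero.mp (norm_le_zero_iff.mp (nonpos_of_mul_nonpos_right hle hpos))
end

section
/- Let α ∈ (0,1). There is a constant C = C(α) > 0 with the following property. Let C₀ > 0 and let K : 𝕋 × 𝕋 → ℂ be measurable with |K(ξ,w)| ≤ C₀ for all ξ, w ∈ 𝕋, and suppose that for each ξ ∈ 𝕋 the map θ ↦ K(ξ, e^{iθ}) is differentiable at every point with e^{iθ} ≠ ξ, with tangential derivative ∂_w K satisfying |∂_w K(ξ,w)| ≤ C₀/|w − ξ| for all w ∈ 𝕋 \ {ξ}. Then for every continuous φ : 𝕋 → ℂ, the function Tφ(w) = (1/(2πi))∮_{|ξ|=1} K(ξ,w)φ(ξ) dξ is α-Hölder continuous on 𝕋 with |Tφ(w₁) − Tφ(w₂)| ≤ C·C₀·‖φ‖_{L^∞(𝕋)}·|w₁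 − w₂|^α for all w₁, w₂ ∈ 𝕋. -/
open Metric Complex

open MeasureTheory

lemma norm_exp_mul_I_sub_exp_mul_I (a b : ℝ) :
    ‖exp (a * I) - exp (b * I)‖ = 2 * |Real.sin ((a - b) / 2)| := by
  have h : exp (a * I) - exp (b * I) = exp (b * I) * (exp (I * ((a - b : ℝ) : ℂ)) - 1) := by
    rw [mul_sub, ← Complex.exp_add, mul_one]
    push_cast
    ring_nf
  rw [h, norm_mul, norm_exp_ofReal_mul_I, norm_exp_I_mul_ofReal_sub_one]
  simp

lemma norm_exp_mul_I_sub_exp_mul_I_le (a b : ℝ) :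
    ‖exp (a * I) - exp (b * I)‖ ≤ |a - b| := by
  have h := Real.abs_sin_le_abs (x := (a - b) / 2)
  rw [abs_div, abs_two] at h
  rw [norm_exp_mul_I_sub_exp_mul_I]
  linarith

lemma two_div_pi_mul_abs_le_norm_exp_mul_I_sub {a b : ℝ} (h : |a - b| ≤ Real.pi) :
    2 / Real.pi * |a - b| ≤ ‖exp (a * I) - exp (b * I)‖ := by
  have hs := Real.mul_abs_le_abs_sin (x := (a - b) / 2) (by rw [abs_div, abs_two]; linarith)
  rw [abs_div, abs_two] at hs
  rw [norm_exp_mul_I_sub_exp_mul_I]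
  linarith

/-- A bounded function on the circle whose tangential derivative is `O(1 / |w - ξ|)` varies by at
most `O((d / r) ^ α)` between two points at angular distance `d`, the first of which lies at
angular distance `r` from `ξ`. -/
lemma norm_sub_le_rpow_of_norm_deriv_le_div {α : ℝ} (hα : α ∈ Set.Ioo (0 : ℝ) 1) {C₀ : ℝ}
    {k k' : ℂ → ℂ} {θ a b : ℝ}
    (hk : ∀ w ∈ sphere (0 : ℂ) 1, ‖k w‖ ≤ C₀)
    (hd : ∀ t : ℝ, exp (t * I) ≠ exp (θ * I) →
      HasDerivAt (fun s : ℝ => k (exp (s * I))) (exp (t * I) * I * k' (exp (t * I))) t)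
    (hk' : ∀ w ∈ sphere (0 : ℂ) 1, w ≠ exp (θ * I) → ‖k' w‖ ≤ C₀ / ‖w - exp (θ * I)‖)
    (hθ : θ ≠ a) (hθa : |θ - a| ≤ Real.pi) :
    ‖k (exp (a * I)) - k (exp (b * I))‖
      ≤ 2 * Real.pi * C₀ * (|b - a| ^ α * |θ - a| ^ (-α)) := by
  obtain ⟨hα0, hα1⟩ := hα
  have hπ := Real.pi_pos
  have hπ3 := Real.pi_gt_three
  have hS : ∀ t : ℝ, exp (t * I) ∈ sphere (0 : ℂ) 1 := fun t => by
    simp [norm_exp_ofReal_mul_I]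
  have hC₀ : 0 ≤ C₀ := (norm_nonneg _).trans (hk _ (hS 0))
  have hr : 0 < |θ - a| := abs_pos.2 (sub_ne_zero.2 hθ)
  have hd0 : 0 ≤ |b - a| := abs_nonneg _
  rw [Real.rpow_neg hr.le, ← div_eq_mul_inv, ← Real.div_rpow hd0 hr.le]
  set q : ℝ := |b - a| / |θ - a| with hq
  have hq0 : 0 ≤ q := by positivity
  have hqα : 0 ≤ q ^ α := by positivity
  have hle : q ≤ 1 → q ≤ q ^ α := fun h1 => Real.self_le_rpow_of_le_one hq0 h1 hα1.le
  rcases le_total (1 / Real.pi) q with hfar | hnear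
  · have hq' : 1 / Real.pi ≤ q ^ α := by
      rcases le_total q 1 with h1 | h1
      · exact hfar.trans (hle h1)
      · exact ((div_le_one hπ).2 (by linarith)).trans (Real.one_le_rpow h1 hα0.le)
    have h1 : 1 ≤ Real.pi * q ^ α := by
      rwa [div_le_iff₀' hπ] at hq'
    calc ‖k (exp (a * I)) - k (exp (b * I))‖ ≤ C₀ + C₀ :=
          (norm_sub_le _ _).trans (add_le_add (hk _ (hS a)) (hk _ (hS b)))
      _ ≤ 2 * C₀ * (Real.pi * q ^ α) := by nlinarith
      _ = _ := by ring
  · have hdr : |b - a| ≤ |θ - a| / Real.pi := by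
      rw [hq, div_le_iff₀ hr] at hnear
      linarith [show 1 / Real.pi * |θ - a| = |θ - a| / Real.pi by ring]
    have hdist : ∀ t ∈ Set.uIcc a b, |θ - a| / Real.pi ≤ ‖exp (t * I) - exp (θ * I)‖ := by
      intro t ht
      have h1 : |t - a| ≤ |b - a| := Set.abs_sub_left_of_mem_uIcc ht
      have h2 := two_div_pi_mul_abs_le_norm_exp_mul_I_sub hθa
      have h3 := norm_exp_mul_I_sub_exp_mul_I_le t a
      have h4 := norm_sub_le_norm_sub_add_norm_sub (exp (θ * I)) (exp (t * I)) (exp (a * I))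
      rw [norm_sub_rev (exp (θ * I)) (exp (t * I))] at h4
      linarith [show 2 / Real.pi * |θ - a| = |θ - a| / Real.pi + |θ - a| / Real.pi by ring]
    have hrπ : 0 < |θ - a| / Real.pi := by positivity
    have hne : ∀ t ∈ Set.uIcc a b, exp (t * I) ≠ exp (θ * I) := fun t ht =>
      sub_ne_zero.1 (norm_pos_iff.1 (hrπ.trans_le (hdist t ht)))
    have hmv := (convex_uIcc a b).norm_image_sub_le_of_norm_hasDerivWithin_le
      (f := fun s : ℝ => k (exp (s * I))) (C := C₀ / (|θ - a| / Real.pi))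
      (fun t ht => (hd t (hne t ht)).hasDerivWithinAt)
      (fun t ht => by
        rw [norm_mul, norm_mul, norm_exp_ofReal_mul_I, norm_I, one_mul, one_mul]
        exact (hk' _ (hS t) (hne t ht)).trans
          (div_le_div_of_nonneg_left hC₀ hrπ (hdist t ht)))
      Set.left_mem_uIcc Set.right_mem_uIcc
    have hq1 : q ≤ 1 := hnear.trans ((div_le_one hπ).2 (by linarith))
    rw [norm_sub_rev]
    calc _ ≤ C₀ / (|θ - a| / Real.pi) * ‖b - a‖ := hmv
      _ = Real.pi * C₀ * q := by rw [hq, Real.norm_eq_abs]; field_simp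
      _ ≤ Real.pi * C₀ * q ^ α := mul_le_mul_of_nonneg_left (hle hq1) (by positivity)
      _ ≤ 2 * Real.pi * C₀ * q ^ α := by
        nlinarith [show 0 ≤ Real.pi * C₀ * q ^ α by positivity]

lemma intervalIntegrable_abs_rpow_neg_self {r c : ℝ} (hr : -1 < r) (hc : 0 ≤ c) :
    IntervalIntegrable (fun t : ℝ => |t| ^ r) volume (-c) c := by
  have hpos : IntervalIntegrable (fun t : ℝ => |t| ^ r) volume 0 c := by
    refine (intervalIntegral.intervalIntegrable_rpow' (a := 0) (b := c) hr).congr ?_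
    intro t ht
    rw [Set.uIoc_of_le hc] at ht
    simp only [abs_of_pos ht.1]
  refine IntervalIntegrable.trans ?_ hpos
  rw [IntervalIntegrable.iff_comp_neg]
  simpa using hpos.symm

lemma circleIntegrable_kernel_mul {K : ℂ → ℂ → ℂ} {φ : ℂ → ℂ} {C₀ M : ℝ} {w : ℂ}
    (hKm : Measurable (fun p : ℂ × ℂ => K p.1 p.2))
    (hK : ∀ ξ ∈ sphere (0 : ℂ) 1, ‖K ξ w‖ ≤ C₀)
    (hφ : ContinuousOn φ (sphere (0 : ℂ) 1)) (hM : ∀ ξ ∈ sphere (0 : ℂ) 1, ‖φ ξ‖ ≤ M) :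
    CircleIntegrable (fun ξ => K ξ w * φ ξ) 0 1 := by
  have hS : ∀ t : ℝ, circleMap 0 1 t ∈ sphere (0 : ℂ) 1 :=
    fun t => circleMap_mem_sphere 0 zero_le_one t
  have hKw : Measurable fun t : ℝ => K (circleMap 0 1 t) w :=
    hKm.comp ((continuous_circleMap 0 1).measurable.prodMk measurable_const)
  have hφc : Continuous fun t : ℝ => φ (circleMap 0 1 t) :=
    hφ.comp_continuous (continuous_circleMap 0 1) hS
  refine (intervalIntegrable_const (c := C₀ * M)).mono_fun
    (hKw.mul hφc.measurable).aestronglyMeasurable (Filter.Eventually.of_forall fun t => ?_)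
  calc ‖K (circleMap 0 1 t) w * φ (circleMap 0 1 t)‖
      = ‖K (circleMap 0 1 t) w‖ * ‖φ (circleMap 0 1 t)‖ := norm_mul _ _
    _ ≤ C₀ * M := mul_le_mul (hK _ (hS t)) (hM _ (hS t)) (norm_nonneg _)
        ((norm_nonneg _).trans (hK _ (hS t)))
    _ ≤ ‖C₀ * M‖ := Real.le_norm_self _

lemma norm_circleIntegral_le_of_norm_le_abs_rpow {f : ℂ → ℂ} {A r a : ℝ} (hr : -1 < r)
    (hf : ∀ θ : ℝ, θ ≠ a → |θ - a| ≤ Real.pi → ‖f (circleMap 0 1 θ)‖ ≤ A * |θ - a| ^ r) :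
    ‖∮ ξ in C(0, 1), f ξ‖ ≤ A * ∫ t in (-Real.pi)..Real.pi, |t| ^ r := by
  have hπ := Real.pi_pos
  have hper : Function.Periodic
      (fun θ : ℝ => deriv (circleMap 0 1) θ • f (circleMap 0 1 θ)) (2 * Real.pi) := by
    intro θ
    simp only [deriv_circleMap, periodic_circleMap 0 1 θ]
  have hshift := hper.intervalIntegral_add_eq 0 (a - Real.pi)
  rw [zero_add, show a - Real.pi + 2 * Real.pi = a + Real.pi by ring] at hshift
  have hgint : IntervalIntegrable (fun θ : ℝ => A * |θ - a| ^ r) volume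
      (a - Real.pi) (a + Real.pi) := by
    have h := ((intervalIntegrable_abs_rpow_neg_self hr hπ.le).comp_sub_right a).const_mul A
    rwa [show -Real.pi + a = a - Real.pi by ring, show Real.pi + a = a + Real.pi by ring] at h
  have hval : ∫ θ in (a - Real.pi)..(a + Real.pi), A * |θ - a| ^ r
      = A * ∫ t in (-Real.pi)..Real.pi, |t| ^ r := by
    rw [intervalIntegral.integral_const_mul,
      intervalIntegral.integral_comp_sub_right (fun t : ℝ => |t| ^ r) a]
    ring_nf
  rw [circleIntegral, hshift, ← hval]
  refine intervalIntegral.norm_integral_le_of_norm_le (by linarith) ?_ hgint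
  filter_upwards [compl_mem_ae_iff.2 (measure_singleton a)] with θ hθ hmem
  have hnorm : ‖deriv (circleMap 0 1) θ‖ = 1 := by simp [deriv_circleMap]
  rw [norm_smul, hnorm, one_mul]
  exact hf θ hθ (abs_le.2 ⟨by linarith [hmem.1], by linarith [hmem.2]⟩)

lemma exists_exp_mul_I_eq_of_mem_sphere {w₁ w₂ : ℂ} (h₁ : w₁ ∈ sphere (0 : ℂ) 1)
    (h₂ : w₂ ∈ sphere (0 : ℂ) 1) :
    ∃ a b : ℝ, exp (a * I) = w₁ ∧ exp (b * I) = w₂ ∧ |b - a| ≤ Real.pi := by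
  rw [mem_sphere_zero_iff_norm] at h₁ h₂
  have h0 : w₁ ≠ 0 := norm_pos_iff.1 (by rw [h₁]; exact one_pos)
  have e₁ : exp (arg w₁ * I) = w₁ := by simpa [h₁] using norm_mul_exp_arg_mul_I w₁
  have e₂ : exp (arg (w₂ / w₁) * I) = w₂ / w₁ := by
    simpa [h₁, h₂] using norm_mul_exp_arg_mul_I (w₂ / w₁)
  refine ⟨arg w₁, arg w₁ + arg (w₂ / w₁), e₁, ?_, ?_⟩
  · push_cast
    rw [add_mul, Complex.exp_add, e₁, e₂, mul_div_cancel₀ _ h0]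
  · rw [add_sub_cancel_left]
    exact abs_arg_le_pi _



/-- Mateu–Orobitg–Verdera type lemma: if `K : 𝕋 × 𝕋 → ℂ` is measurable and
bounded by `C₀`, and for each fixed `ξ` the map `w ↦ K(ξ,w)` is differentiable
along the circle off the diagonal with tangential derivative `K'` bounded by
`C₀/|w - ξ|`, then `Tφ(w) = (1/2πi)∮ K(ξ,w)φ(ξ)dξ` is `α`-Hölder with constant
`C(α)·C₀·‖φ‖_∞`. -/
theorem kernel_holder_estimate (α : ℝ) (hα : α ∈ Set.Ioo (0:ℝ) 1) :
    ∃ C : ℝ, 0 < C ∧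
      ∀ (C₀ : ℝ) (K K' : ℂ → ℂ → ℂ) (φ : ℂ → ℂ),
        0 < C₀ →
        Measurable (fun p : ℂ × ℂ => K p.1 p.2) →
        (∀ ξ ∈ sphere (0:ℂ) 1, ∀ w ∈ sphere (0:ℂ) 1, ‖K ξ w‖ ≤ C₀) →
        (∀ ξ ∈ sphere (0:ℂ) 1, ∀ θ : ℝ, Complex.exp (θ * Complex.I) ≠ ξ →
          HasDerivAt (fun t : ℝ => K ξ (Complex.exp (t * Complex.I)))
            (Complex.exp (θ * Complex.I) * Complex.I * K' ξ (Complex.exp (θ * Complex.I))) θ) →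
        (∀ ξ ∈ sphere (0:ℂ) 1, ∀ w ∈ sphere (0:ℂ) 1, w ≠ ξ →
          ‖K' ξ w‖ ≤ C₀ / ‖w - ξ‖) →
        ContinuousOn φ (sphere (0:ℂ) 1) →
        ∀ M : ℝ, (∀ ξ ∈ sphere (0:ℂ) 1, ‖φ ξ‖ ≤ M) →
        ∀ w₁ ∈ sphere (0:ℂ) 1, ∀ w₂ ∈ sphere (0:ℂ) 1,
          ‖(∮ ξ in C(0, 1), K ξ w₁ * φ ξ) / (2 * Real.pi * Complex.I)
              - (∮ ξ in C(0, 1), K ξ w₂ * φ ξ) / (2 * Real.pi * Complex.I)‖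
            ≤ C * C₀ * M * ‖w₁ - w₂‖ ^ α := by
  obtain ⟨hα0, hα1⟩ := hα
  have hπ := Real.pi_pos
  set J : ℝ := ∫ t in (-Real.pi)..Real.pi, |t| ^ (-α) with hJ
  have hJ0 : 0 ≤ J := intervalIntegral.integral_nonneg (by linarith) fun t _ => by positivity
  refine ⟨(Real.pi / 2) ^ α * J + 1, by positivity, ?_⟩
  intro C₀ K K' φ hC₀ hKm hK hd hK' hφ M hM w₁ hw₁ w₂ hw₂
  obtain ⟨a, b, rfl, rfl, hab⟩ := exists_exp_mul_I_eq_of_mem_sphere hw₁ hw₂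
  have hM0 : 0 ≤ M := (norm_nonneg _).trans (hM 1 (by simp))
  set D : ℝ := ‖exp (a * I) - exp (b * I)‖ with hD
  have hdD : |b - a| ^ α ≤ (Real.pi / 2) ^ α * D ^ α := by
    rw [← Real.mul_rpow (by positivity) (by positivity)]
    refine Real.rpow_le_rpow (abs_nonneg _) ?_ hα0.le
    have h := two_div_pi_mul_abs_le_norm_exp_mul_I_sub hab
    rw [norm_sub_rev, ← hD] at h
    calc |b - a| = Real.pi / 2 * (2 / Real.pi * |b - a|) := by field_simp
      _ ≤ Real.pi / 2 * D := by gcongr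
  have hbound : ‖∮ ξ in C(0, 1), (K ξ (exp (a * I)) * φ ξ - K ξ (exp (b * I)) * φ ξ)‖
      ≤ 2 * Real.pi * C₀ * |b - a| ^ α * M * J := by
    refine norm_circleIntegral_le_of_norm_le_abs_rpow (a := a) (by linarith) ?_
    intro θ hθ hθa
    have hS : circleMap 0 1 θ ∈ sphere (0 : ℂ) 1 := circleMap_mem_sphere 0 zero_le_one θ
    have hc : circleMap 0 1 θ = exp (θ * I) := by simp [circleMap]
    rw [← sub_mul, norm_mul]
    rw [hc] at hS ⊢
    calc _ ≤ 2 * Real.pi * C₀ * (|b - a| ^ α * |θ - a| ^ (-α)) * M :=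
          mul_le_mul (norm_sub_le_rpow_of_norm_deriv_le_div ⟨hα0, hα1⟩ (hK _ hS) (hd _ hS)
            (hK' _ hS) hθ hθa) (hM _ hS) (norm_nonneg _) (by positivity)
      _ = _ := by ring
  have hnorm : ‖(2 * Real.pi * I : ℂ)‖ = 2 * Real.pi := by
    simp [abs_of_pos hπ]
  rw [← sub_div, ← circleIntegral.integral_sub
    (circleIntegrable_kernel_mul hKm (fun ξ hξ => hK ξ hξ _ hw₁) hφ hM)
    (circleIntegrable_kernel_mul hKm (fun ξ hξ => hK ξ hξ _ hw₂) hφ hM),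
    norm_div, hnorm, div_le_iff₀ (by positivity)]
  calc _ ≤ 2 * Real.pi * C₀ * |b - a| ^ α * M * J := hbound
    _ ≤ 2 * Real.pi * C₀ * ((Real.pi / 2) ^ α * D ^ α) * M * J := by gcongr
    _ = (Real.pi / 2) ^ α * J * (C₀ * M * D ^ α * (2 * Real.pi)) := by ring
    _ ≤ ((Real.pi / 2) ^ α * J + 1) * (C₀ * M * D ^ α * (2 * Real.pi)) := by
      gcongr
      linarith
    _ = _ := by ring
end

section
/- Let Q ∈ (0,1) and α_Q(ξ) = ξ + Q/ξ. For every w on the unit circle 𝕋, (1/(2πi)) ∮_{|ξ|=1} [ ((1/ξ + Qξ) − (1/w + Qw)) / (α_Q(ξ) − α_Q(w)) ] · (1 − Q/ξ²) dξ = (Q² − 1)/w. (For ξ ∈ 𝕋 one has conj(α_Q(ξ)) = 1/ξ + Qξ, so the integrand is the ratio (conj α_Q(ξ) − conj α_Q(w))/(α_Q(ξ) − α_Q(w)) times α_Q′(ξ); it is bounded on 𝕋 with a removable singularity at ξ = w.) -/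
open Metric in
/-- The circle integral of `A + B / ξ + C / ξ ^ 2 + D / (ξ - a)` with `a` inside the circle. -/
theorem circleIntegral_partial_fractions (A B C D a : ℂ) {R : ℝ} (ha : a ∈ ball (0 : ℂ) R) :
    (∮ ξ in C(0, R), (A + B * (ξ - 0)⁻¹ + C * (ξ - 0) ^ (-2 : ℤ) + D * (ξ - a)⁻¹)) =
      (B + D) * (2 * Real.pi * Complex.I) := by
  have hR : 0 < R := pos_of_mem_ball ha
  have h0 : (0 : ℂ) ∈ ball (0 : ℂ) R := mem_ball_self hR
  have not_mem {z : ℂ} (hz : z ∈ ball (0 : ℂ) R) : z ∉ sphere (0 : ℂ) |R| := fun h => by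
    rw [abs_of_pos hR, mem_sphere] at h
    exact (mem_ball.1 hz).ne h
  have hA : CircleIntegrable (fun _ => A) 0 R := circleIntegrable_const A 0 R
  have inv {z : ℂ} (hz : z ∈ ball (0 : ℂ) R) (E : ℂ) :
      CircleIntegrable (fun ξ => E * (ξ - z)⁻¹) 0 R :=
    (circleIntegrable_sub_inv_iff.2 (Or.inr (not_mem hz))).const_smul (a := E)
  have hC : CircleIntegrable (fun ξ => C * (ξ - 0) ^ (-2 : ℤ)) 0 R :=
    (circleIntegrable_sub_zpow_iff.2 (Or.inr (Or.inr (not_mem h0)))).const_smul (a := C)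
  have hAB : CircleIntegrable (fun ξ => A + B * (ξ - 0)⁻¹) 0 R := hA.add (inv h0 B)
  have hABC : CircleIntegrable (fun ξ => A + B * (ξ - 0)⁻¹ + C * (ξ - 0) ^ (-2 : ℤ)) 0 R :=
    hAB.add hC
  have iA : (∮ _ξ in C(0, R), A) = 0 := by
    simpa using circleIntegral.integral_const_mul A (fun ξ => (ξ - 0) ^ (0 : ℤ)) 0 R |>.trans
      (by rw [circleIntegral.integral_sub_zpow_of_ne (by norm_num), mul_zero])
  rw [circleIntegral.integral_add hABC (inv ha D),
    circleIntegral.integral_add hAB hC,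
    circleIntegral.integral_add hA (inv h0 B), iA]
  simp only [circleIntegral.integral_const_mul]
  rw [circleIntegral.integral_sub_inv_of_mem_ball h0,
    circleIntegral.integral_sub_inv_of_mem_ball ha,
    circleIntegral.integral_sub_zpow_of_ne (by norm_num)]
  ring

/-- Partial fraction decomposition of the integrand, away from its removable singularity. -/
theorem ellipse_integrand_eq_partial_fractions {Q w ξ : ℂ} (hQ : Q ≠ 0) (hw : w ≠ 0)
    (hξ : ξ ≠ 0) (hξw : ξ ≠ w) (ha : ξ * w ≠ Q) :
    ((1 / ξ + Q * ξ) - (1 / w + Q * w)) / ((ξ + Q / ξ) - (w + Q / w)) * (1 - Q / ξ ^ 2) =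
      Q + (Q ^ 2 - 1) * w / Q * (ξ - 0)⁻¹ + (-1) * (ξ - 0) ^ (-2 : ℤ) +
        (Q ^ 2 - 1) / w * (1 - w ^ 2 / Q) * (ξ - Q / w)⁻¹ := by
  have h1 : ξ - w ≠ 0 := sub_ne_zero.2 hξw
  have h2 : ξ * w - Q ≠ 0 := sub_ne_zero.2 ha
  have hnum : (1 / ξ + Q * ξ) - (1 / w + Q * w) = (ξ - w) * (Q * ξ * w - 1) / (ξ * w) := by
    field_simp
    ring
  have hden : (ξ + Q / ξ) - (w + Q / w) = (ξ - w) * (ξ * w - Q) / (ξ * w) := by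
    field_simp
    ring
  have hinv : (ξ - Q / w)⁻¹ = w / (ξ * w - Q) := by
    rw [← inv_div]
    field_simp
  have hz : (ξ - 0) ^ (-2 : ℤ) = 1 / ξ ^ 2 := by
    rw [sub_zero, zpow_neg, one_div]
    rfl
  rw [hnum, hden, hinv, hz, sub_zero]
  field_simp
  ring

/-- Residue computation for the ellipse: for `Q ∈ (0,1)` and `w` on the unit
circle, `(1/2πi) ∮_{|ξ|=1} ((conj α_Q(ξ) - conj α_Q(w))/(α_Q(ξ) - α_Q(w))) α_Q'(ξ) dξ
= (Q² - 1)/w`, where on the circle `conj α_Q(ξ) = 1/ξ + Qξ` and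
`α_Q(ξ) = ξ + Q/ξ`, `α_Q'(ξ) = 1 - Q/ξ²`. -/
theorem ellipse_selfinteraction_integral (Q : ℝ) (hQ : Q ∈ Set.Ioo (0:ℝ) 1)
    (w : ℂ) (hw : ‖w‖ = 1) :
    (∮ ξ in C(0, 1),
        ((1 / ξ + (Q : ℂ) * ξ) - (1 / w + (Q : ℂ) * w)) /
          ((ξ + (Q : ℂ) / ξ) - (w + (Q : ℂ) / w)) * (1 - (Q : ℂ) / ξ ^ 2))
      / (2 * Real.pi * Complex.I) = ((Q : ℂ) ^ 2 - 1) / w := by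
  obtain ⟨hQ0, hQ1⟩ := hQ
  have hQc : (Q : ℂ) ≠ 0 := by exact_mod_cast hQ0.ne'
  have hQn : ‖(Q : ℂ)‖ = Q := by rw [Complex.norm_real, Real.norm_of_nonneg hQ0.le]
  have hwc : w ≠ 0 := norm_ne_zero_iff.1 (by rw [hw]; exact one_ne_zero)
  have ha : (Q : ℂ) / w ∈ Metric.ball (0 : ℂ) 1 := by
    rwa [mem_ball_zero_iff, norm_div, hw, hQn, div_one]
  rw [circleIntegral.circleIntegral_congr_codiscreteWithin
      (f₂ := fun ξ => (Q : ℂ) + ((Q : ℂ) ^ 2 - 1) * w / Q * (ξ - 0)⁻¹ +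
        (-1) * (ξ - 0) ^ (-2 : ℤ) +
        ((Q : ℂ) ^ 2 - 1) / w * (1 - w ^ 2 / Q) * (ξ - (Q : ℂ) / w)⁻¹) ?_ one_ne_zero,
    circleIntegral_partial_fractions _ _ _ _ _ ha, mul_div_cancel_right₀ _ Complex.two_pi_I_ne_zero]
  · field_simp
    ring
  · filter_upwards [compl_singleton_mem_codiscreteWithin w, Filter.self_mem_codiscreteWithin _]
      with ξ hξw hξ
    have hξn : ‖ξ‖ = 1 := by simpa using hξ
    refine ellipse_integrand_eq_partial_fractions hQc hwc
      (norm_ne_zero_iff.1 (by rw [hξn]; exact one_ne_zero)) hξw fun h => hQ1.ne ?_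
    rw [← hQn, ← h, norm_mul, hξn, hw, one_mul]
end

section
/- Let Q ∈ (0,1) and let z ∈ ℂ with Q < |z| < 1. Then (1/(2πi)) ∮_{|ξ|=1} (1/ξ + Qξ)(1 − Q/ξ²) / ((ξ + Q/ξ) − (z + Q/z)) dξ = Q(z + Q/z). Equivalently, writing the integrand as (1 + Qξ²)(ξ² − Q)/(ξ²(ξ − z)(ξ − Q/z)), the contour integral over the unit circle equals Q(z + Q/z). -/
open Metric Complex

lemma ne_of_mem_ball_of_mem_sphere {c w ξ : ℂ} {R : ℝ} (hw : w ∈ ball c R)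
    (hξ : ξ ∈ sphere c R) : ξ ≠ w := by
  rintro rfl
  exact (mem_ball.1 hw).ne (mem_sphere.1 hξ)

lemma circleIntegrable_inv_add_mul_mul_inv_sub (a : ℂ) {w : ℂ} (hw : w ∈ ball (0 : ℂ) 1) :
    CircleIntegrable (fun ξ => (1 / ξ + a * ξ) * (ξ - w)⁻¹) 0 1 := by
  refine ContinuousOn.circleIntegrable zero_le_one fun ξ hξ => ContinuousAt.continuousWithinAt ?_
  have hξ0 : ξ ≠ 0 := ne_of_mem_ball_of_mem_sphere (mem_ball_self one_pos) hξ
  have hξw : ξ - w ≠ 0 := sub_ne_zero.2 (ne_of_mem_ball_of_mem_sphere hw hξ)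
  fun_prop (disch := assumption)

/-- The residues at `0` and `w` of `1 / (ξ (ξ - w))` cancel, so only `a ξ / (ξ - w)` contributes. -/
lemma circleIntegral_inv_add_mul_mul_inv_sub (a : ℂ) {w : ℂ} (hw : w ∈ ball (0 : ℂ) 1) :
    (∮ ξ in C(0, 1), (1 / ξ + a * ξ) * (ξ - w)⁻¹) = 2 * Real.pi * I * (a * w) := by
  have h0 : (0 : ℂ) ∈ ball (0 : ℂ) 1 := mem_ball_self one_pos
  have hinv : ∀ {v : ℂ}, v ∈ ball (0 : ℂ) 1 →
      CircleIntegrable (fun ξ => (ξ - v)⁻¹) 0 1 := fun {v} hv =>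
    circleIntegrable_sub_inv_iff.2 <| Or.inr fun h =>
      ne_of_mem_ball_of_mem_sphere hv (by simpa using h) rfl
  have hconst : (∮ _ξ in C(0, 1), a) = 0 := by
    simpa using circleIntegral.integral_eq_zero_of_hasDerivWithinAt (f := fun ξ => a * ξ)
      (f' := fun _ => a) (c := 0) (R := 1) zero_le_one
      fun ξ _ => by simpa using ((hasDerivAt_id ξ).const_mul a).hasDerivWithinAt
  have hconst_int : CircleIntegrable (fun _ : ℂ => a) 0 1 :=
    continuousOn_const.circleIntegrable zero_le_one
  rcases eq_or_ne w 0 with rfl | hw0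
  · have hsq : (∮ ξ in C(0, 1), (ξ - 0) ^ (-2 : ℤ)) = 0 :=
      circleIntegral.integral_sub_zpow_of_ne (by norm_num) 0 0 1
    have hsq_int : CircleIntegrable (fun ξ : ℂ => (ξ - 0) ^ (-2 : ℤ)) 0 1 :=
      circleIntegrable_sub_zpow_iff.2 (by simp)
    rw [circleIntegral.integral_congr (g := fun ξ => (ξ - 0) ^ (-2 : ℤ) + a) zero_le_one,
      circleIntegral.integral_add hsq_int hconst_int, hsq, hconst]
    · simp
    · intro ξ hξ
      have hξ0 : ξ ≠ 0 := ne_of_mem_ball_of_mem_sphere h0 hξ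
      simp only [sub_zero, zpow_neg]
      norm_cast
      field_simp
  · have hpole : CircleIntegrable (fun ξ => (a * w + 1 / w) * (ξ - w)⁻¹) 0 1 :=
      (hinv hw).const_fun_smul (a := a * w + 1 / w)
    have hzero : CircleIntegrable (fun ξ => (1 / w) * (ξ - 0)⁻¹) 0 1 :=
      (hinv h0).const_fun_smul (a := 1 / w)
    rw [circleIntegral.integral_congr
        (g := fun ξ => (a + (a * w + 1 / w) * (ξ - w)⁻¹) - (1 / w) * (ξ - 0)⁻¹) zero_le_one,
      circleIntegral.integral_sub (hconst_int.fun_add hpole) hzero,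
      circleIntegral.integral_add hconst_int hpole, hconst,
      circleIntegral.integral_const_mul, circleIntegral.integral_const_mul,
      circleIntegral.integral_sub_inv_of_mem_ball hw,
      circleIntegral.integral_sub_inv_of_mem_ball h0]
    · ring
    · intro ξ hξ
      have hξ0 : ξ ≠ 0 := ne_of_mem_ball_of_mem_sphere h0 hξ
      have hξw : ξ - w ≠ 0 := sub_ne_zero.2 (ne_of_mem_ball_of_mem_sphere hw hξ)
      simp only [sub_zero]
      field_simp
      ring

/-- Logarithmic derivative of `ξ + q / ξ - (z + q / z) = (ξ - z) (ξ - q / z) / ξ`. -/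
lemma joukowski_logDeriv {q z ξ : ℂ} (hz : z ≠ 0) (hξ : ξ ≠ 0) (hξz : ξ ≠ z) (hξw : ξ ≠ q / z) :
    (1 - q / ξ ^ 2) / ((ξ + q / ξ) - (z + q / z)) =
      (ξ - z)⁻¹ + (ξ - q / z)⁻¹ - (ξ - 0)⁻¹ := by
  have h1 : ξ - z ≠ 0 := sub_ne_zero.2 hξz
  have h2 : ξ - q / z ≠ 0 := sub_ne_zero.2 hξw
  have hfac : (ξ + q / ξ) - (z + q / z) = (ξ - z) * (ξ - q / z) / ξ := by
    field_simp
    ring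
  rw [hfac, sub_zero, div_eq_iff (by positivity)]
  generalize hw : q / z = w at *
  obtain rfl : q = w * z := by rw [← hw, div_mul_cancel₀ _ hz]
  field_simp
  ring

/-- Residue computation of the term `I₂`: for `Q ∈ (0,1)` and `Q < |z| < 1`,
`(1/2πi) ∮_{|ξ|=1} conj(α_Q)(ξ) α_Q'(ξ)/(α_Q(ξ) - α_Q(z)) dξ = Q(z + Q/z)`,
where `α_Q(ξ) = ξ + Q/ξ` and on the circle `conj α_Q(ξ) = 1/ξ + Qξ`. -/
theorem ellipse_I2_integral (Q : ℝ) (hQ : Q ∈ Set.Ioo (0:ℝ) 1) (z : ℂ)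
    (hz1 : Q < ‖z‖) (hz2 : ‖z‖ < 1) :
    (∮ ξ in C(0, 1),
        (1 / ξ + (Q : ℂ) * ξ) * (1 - (Q : ℂ) / ξ ^ 2) /
          ((ξ + (Q : ℂ) / ξ) - (z + (Q : ℂ) / z)))
      / (2 * Real.pi * Complex.I) = (Q : ℂ) * (z + (Q : ℂ) / z) := by
  obtain ⟨hQ0, -⟩ := hQ
  have hz0 : z ≠ 0 := norm_pos_iff.1 (hQ0.trans hz1)
  have h0 : (0 : ℂ) ∈ ball (0 : ℂ) 1 := mem_ball_self one_pos
  have hz : z ∈ ball (0 : ℂ) 1 := mem_ball_zero_iff.2 hz2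
  have hw : (Q : ℂ) / z ∈ ball (0 : ℂ) 1 := by
    rw [mem_ball_zero_iff, norm_div, norm_real, Real.norm_of_nonneg hQ0.le]
    exact (div_lt_one (hQ0.trans hz1)).2 hz1
  have hint := fun {v : ℂ} => circleIntegrable_inv_add_mul_mul_inv_sub (Q : ℂ) (w := v)
  rw [circleIntegral.integral_congr (g := fun ξ =>
      ((1 / ξ + (Q : ℂ) * ξ) * (ξ - z)⁻¹ + (1 / ξ + (Q : ℂ) * ξ) * (ξ - Q / z)⁻¹) -
        (1 / ξ + (Q : ℂ) * ξ) * (ξ - 0)⁻¹) zero_le_one,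
    circleIntegral.integral_sub ((hint hz).fun_add (hint hw)) (hint h0),
    circleIntegral.integral_add (hint hz) (hint hw),
    circleIntegral_inv_add_mul_mul_inv_sub _ hz, circleIntegral_inv_add_mul_mul_inv_sub _ hw,
    circleIntegral_inv_add_mul_mul_inv_sub _ h0, div_eq_iff two_pi_I_ne_zero]
  · ring
  · intro ξ hξ
    have hlog := joukowski_logDeriv hz0 (ne_of_mem_ball_of_mem_sphere h0 hξ)
      (ne_of_mem_ball_of_mem_sphere hz hξ) (ne_of_mem_ball_of_mem_sphere hw hξ)
    simp only [mul_div_assoc, hlog]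
    ring
end

section
/- Let Q ∈ (0,1) and let (a_n)_{n≥2} be a sequence of real numbers with Σ_{n≥2} n|a_n| < ∞, and define h(w) = Σ_{n≥2} a_n wⁿ for w ∈ 𝕋. Define, for w ∈ 𝕋, M_Q h(w) = ((1−Q²)/2)(1 − Qw²)h′(w) + (Q² − 1)·(1/w)·h(w) + ((1+Q²)/2)(w − Q/w)·conj(h(w)) + (w/Q − Q²/w)·h(Q/w). Then for every w ∈ 𝕋, Im(M_Q h(w)) = −((1+Q)²/2)·a₂·Im(w) − 2Q²·a₃·Im(w²) + Σ_{n≥3} ( ((1−Q²)/2)n − 1 − Qⁿ )·(a_{n+1} − Q a_{n−1})·Im(wⁿ). -/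
/-- A real sequence with finite first moment remains summable against weights that grow at most
linearly away from the index `0`, where it vanishes. -/
theorem summable_smul_of_linear_growth {E : Type*} [NormedAddCommGroup E] [NormedSpace ℝ E]
    [CompleteSpace E] {a : ℕ → ℝ} (ha0 : a 0 = 0)
    (hsum : Summable fun n : ℕ => (n : ℝ) * |a n|) {C : ℝ} {g : ℕ → E}
    (hg : ∀ n, 1 ≤ n → ‖g n‖ ≤ C * n) : Summable fun n => a n • g n := by
  refine Summable.of_norm_bounded (hsum.mul_left C) fun n => ?_
  rcases Nat.eq_zero_or_pos n with rfl | hn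
  · simp [ha0]
  · rw [norm_smul, Real.norm_eq_abs]
    calc |a n| * ‖g n‖ ≤ |a n| * (C * n) := by gcongr; exact hg n hn
      _ = C * (n * |a n|) := by ring

/-- The imaginary part of an inverse power of a unit complex number. -/
theorem im_inv_pow_of_norm_eq_one {w : ℂ} (hw : ‖w‖ = 1) (n : ℕ) :
    (w⁻¹ ^ n).im = -(w ^ n).im := by
  rw [Complex.inv_eq_conj hw, ← map_pow, Complex.conj_im]

/-- The multiplier `((1 - Q²)/2) n - 1 - Qⁿ` grows at most linearly. -/
theorem abs_multiplier_le {Q : ℝ} (hQ : Q ∈ Set.Ioo (0 : ℝ) 1) (n : ℕ) :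
    |(1 - Q ^ 2) / 2 * (n : ℝ) - 1 - Q ^ n| ≤ (n : ℝ) + 2 := by
  obtain ⟨h0, h1⟩ := hQ
  have hp0 : 0 ≤ Q ^ n := by positivity
  have hp1 : Q ^ n ≤ 1 := pow_le_one₀ h0.le h1.le
  have hn : (0 : ℝ) ≤ n := n.cast_nonneg
  have hc0 : 0 ≤ (1 - Q ^ 2) / 2 * (n : ℝ) := mul_nonneg (by nlinarith) hn
  have hc1 : (1 - Q ^ 2) / 2 * (n : ℝ) ≤ n := by nlinarith [mul_nonneg hn (sq_nonneg Q)]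
  rw [abs_le]
  constructor <;> linarith

/-- The action of the linearized operator on the monomial `w ^ (m + 1)`. -/
theorem im_linearized_operator_monomial {Q : ℝ} (hQ : Q ≠ 0) {w : ℂ} (hw : ‖w‖ = 1) (m : ℕ) :
    ((1 - (Q : ℂ) ^ 2) / 2 * (1 - (Q : ℂ) * w ^ 2) * (((m + 1 : ℕ) : ℂ) * w ^ m)
        + ((Q : ℂ) ^ 2 - 1) * (1 / w) * w ^ (m + 1)
        + (1 + (Q : ℂ) ^ 2) / 2 * (w - (Q : ℂ) / w) * starRingEnd ℂ (w ^ (m + 1))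
        + (w / (Q : ℂ) - (Q : ℂ) ^ 2 / w) * ((Q : ℂ) / w) ^ (m + 1)).im
    = ((1 - Q ^ 2) / 2 * (m : ℝ) - 1 - Q ^ m) * (w ^ m).im
      - Q * (((1 - Q ^ 2) / 2 * ((m + 2 : ℕ) : ℝ) - 1 - Q ^ (m + 2)) * (w ^ (m + 2)).im) := by
  have hw0 : w ≠ 0 := norm_ne_zero_iff.mp (by rw [hw]; exact one_ne_zero)
  have hQ0 : (Q : ℂ) ≠ 0 := Complex.ofReal_ne_zero.mpr hQ
  have key : (1 - (Q : ℂ) ^ 2) / 2 * (1 - (Q : ℂ) * w ^ 2) * (((m + 1 : ℕ) : ℂ) * w ^ m)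
        + ((Q : ℂ) ^ 2 - 1) * (1 / w) * w ^ (m + 1)
        + (1 + (Q : ℂ) ^ 2) / 2 * (w - (Q : ℂ) / w) * starRingEnd ℂ (w ^ (m + 1))
        + (w / (Q : ℂ) - (Q : ℂ) ^ 2 / w) * ((Q : ℂ) / w) ^ (m + 1)
      = (((1 - Q ^ 2) / 2 * (m + 1) + (Q ^ 2 - 1) : ℝ) : ℂ) * w ^ m
        + ((-(Q * ((1 - Q ^ 2) / 2 * (m + 1))) : ℝ) : ℂ) * w ^ (m + 2)
        + (((1 + Q ^ 2) / 2 + Q ^ m : ℝ) : ℂ) * w⁻¹ ^ m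
        + ((-(Q * ((1 + Q ^ 2) / 2 + Q ^ (m + 2))) : ℝ) : ℂ) * w⁻¹ ^ (m + 2) := by
    rw [map_pow, ← Complex.inv_eq_conj hw]
    push_cast
    simp only [inv_pow, div_pow]
    field_simp
    ring
  rw [key]
  simp only [Complex.add_im, Complex.im_ofReal_mul, im_inv_pow_of_norm_eq_one hw]
  push_cast
  ring

/-- Fourier expansion of the linearized operator at the ellipse: for
`Q ∈ (0,1)`, a real sequence `(a_n)_{n≥2}` with `Σ n|a_n| < ∞`,
`h(w) = Σ_{n≥2} a_n wⁿ` and `w` on the unit circle,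
`Im(M_Q h(w)) = -((1+Q)²/2)a₂ Im(w) - 2Q²a₃ Im(w²)
  + Σ_{n≥3} (((1-Q²)/2)n - 1 - Qⁿ)(a_{n+1} - Q a_{n-1}) Im(wⁿ)`,
where `M_Q h(w) = ((1-Q²)/2)(1 - Qw²)h'(w) + (Q² - 1)(1/w)h(w)
  + ((1+Q²)/2)(w - Q/w) conj(h(w)) + (w/Q - Q²/w) h(Q/w)`. -/
theorem linearized_operator_fourier_expansion (Q : ℝ) (hQ : Q ∈ Set.Ioo (0:ℝ) 1)
    (a : ℕ → ℝ) (ha0 : a 0 = 0) (ha1 : a 1 = 0)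
    (hsum : Summable fun n : ℕ => (n : ℝ) * |a n|)
    (w : ℂ) (hw : ‖w‖ = 1) :
    ((1 - (Q : ℂ) ^ 2) / 2 * (1 - (Q : ℂ) * w ^ 2) *
          (∑' n : ℕ, (n : ℂ) * (a n : ℂ) * w ^ (n - 1))
        + ((Q : ℂ) ^ 2 - 1) * (1 / w) * (∑' n : ℕ, (a n : ℂ) * w ^ n)
        + (1 + (Q : ℂ) ^ 2) / 2 * (w - (Q : ℂ) / w) *
            starRingEnd ℂ (∑' n : ℕ, (a n : ℂ) * w ^ n)
        + (w / (Q : ℂ) - (Q : ℂ) ^ 2 / w) *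
            (∑' n : ℕ, (a n : ℂ) * ((Q : ℂ) / w) ^ n)).im
    = -((1 + Q) ^ 2 / 2) * a 2 * w.im - 2 * Q ^ 2 * a 3 * (w ^ 2).im
      + ∑' k : ℕ, ((1 - Q ^ 2) / 2 * ((k : ℝ) + 3) - 1 - Q ^ (k + 3)) *
          (a (k + 4) - Q * a (k + 2)) * (w ^ (k + 3)).im := by
  have hQ0 : Q ≠ 0 := hQ.1.ne'
  have hpow (n : ℕ) : ‖w ^ n‖ = 1 := by rw [norm_pow, hw, one_pow]
  have him (n : ℕ) : |(w ^ n).im| ≤ 1 := (Complex.abs_im_le_norm _).trans (hpow n).le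
  have hone {n : ℕ} (hn : 1 ≤ n) : (1 : ℝ) ≤ n := by exact_mod_cast hn
  set μ : ℕ → ℝ := fun n => ((1 - Q ^ 2) / 2 * (n : ℝ) - 1 - Q ^ n) * (w ^ n).im with hμ
  have hμ_le (n : ℕ) : ‖μ n‖ ≤ (n : ℝ) + 2 := by
    rw [hμ, Real.norm_eq_abs, abs_mul]
    exact (mul_le_of_le_one_right (abs_nonneg _) (him n)).trans (abs_multiplier_le hQ n)
  have hderiv : Summable fun n : ℕ => (n : ℂ) * (a n : ℂ) * w ^ (n - 1) := by
    refine (summable_smul_of_linear_growth (C := 1) (g := fun n : ℕ => (n : ℂ) * w ^ (n - 1))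
      ha0 hsum fun n _ => ?_).congr fun n => ?_
    · simp [hw]
    · rw [Complex.real_smul]; ring
  have hval : Summable fun n : ℕ => (a n : ℂ) * w ^ n := by
    refine (summable_smul_of_linear_growth (C := 1) (g := fun n : ℕ => w ^ n)
      ha0 hsum fun n hn => ?_).congr fun n => Complex.real_smul
    rw [hpow, one_mul]
    exact hone hn
  have hinner : Summable fun n : ℕ => (a n : ℂ) * ((Q : ℂ) / w) ^ n := by
    refine (summable_smul_of_linear_growth (C := 1) (g := fun n : ℕ => ((Q : ℂ) / w) ^ n)
      ha0 hsum fun n hn => ?_).congr fun n => Complex.real_smul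
    rw [norm_pow, norm_div, hw, div_one, Complex.norm_real, Real.norm_of_nonneg hQ.1.le, one_mul]
    exact (pow_le_one₀ hQ.1.le hQ.2.le).trans (hone hn)
  have hA : Summable fun n => a n • μ (n - 1) := by
    refine summable_smul_of_linear_growth (C := 3) ha0 hsum fun n hn => (hμ_le _).trans ?_
    rw [Nat.cast_sub hn]
    push_cast
    linarith [hone hn]
  have hB : Summable fun n => a n • μ (n + 1) := by
    refine summable_smul_of_linear_growth (C := 4) ha0 hsum fun n hn => (hμ_le _).trans ?_
    push_cast
    linarith [hone hn]
  have hconj : HasSum (fun n : ℕ => starRingEnd ℂ ((a n : ℂ) * w ^ n))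
      (starRingEnd ℂ (∑' n : ℕ, (a n : ℂ) * w ^ n)) :=
    Complex.hasSum_conj'.mpr (by simpa using hval.hasSum)
  have hlhs := Complex.hasSum_im
    ((((hderiv.hasSum.mul_left ((1 - (Q : ℂ) ^ 2) / 2 * (1 - (Q : ℂ) * w ^ 2))).add
      (hval.hasSum.mul_left (((Q : ℂ) ^ 2 - 1) * (1 / w)))).add
      (hconj.mul_left ((1 + (Q : ℂ) ^ 2) / 2 * (w - (Q : ℂ) / w)))).add
      (hinner.hasSum.mul_left (w / (Q : ℂ) - (Q : ℂ) ^ 2 / w)))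
  have hrhs := hA.hasSum.sub (hB.hasSum.mul_left Q)
  have hterm (n : ℕ) :
      ((1 - (Q : ℂ) ^ 2) / 2 * (1 - (Q : ℂ) * w ^ 2) * ((n : ℂ) * (a n : ℂ) * w ^ (n - 1))
          + ((Q : ℂ) ^ 2 - 1) * (1 / w) * ((a n : ℂ) * w ^ n)
          + (1 + (Q : ℂ) ^ 2) / 2 * (w - (Q : ℂ) / w) * starRingEnd ℂ ((a n : ℂ) * w ^ n)
          + (w / (Q : ℂ) - (Q : ℂ) ^ 2 / w) * ((a n : ℂ) * ((Q : ℂ) / w) ^ n)).im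
        = a n • μ (n - 1) - Q * a n • μ (n + 1) := by
    rcases n with _ | m
    · simp [ha0]
    · have h := congrArg (a (m + 1) * ·) (im_linearized_operator_monomial hQ0 hw m)
      rw [← Complex.im_ofReal_mul] at h
      simp only [smul_eq_mul, hμ, Nat.add_sub_cancel]
      rw [map_mul, Complex.conj_ofReal]
      refine Eq.trans (congrArg Complex.im ?_) (h.trans ?_) <;> ring
  have hA_split : ∑' n, a n • μ (n - 1)
      = a 2 * μ 1 + a 3 * μ 2 + ∑' k, a (k + 4) * μ (k + 3) := by
    rw [← hA.sum_add_tsum_nat_add 4]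
    simp [Finset.sum_range_succ, ha0, ha1]
  have hB_split : ∑' n, a n • μ (n + 1) = ∑' k, a (k + 2) * μ (k + 3) := by
    rw [← hB.sum_add_tsum_nat_add 2]
    simp [Finset.sum_range_succ, ha0, ha1]
  have htail : ∑' k : ℕ, ((1 - Q ^ 2) / 2 * ((k : ℝ) + 3) - 1 - Q ^ (k + 3)) *
        (a (k + 4) - Q * a (k + 2)) * (w ^ (k + 3)).im
      = ∑' k, a (k + 4) * μ (k + 3) - Q * ∑' k, a (k + 2) * μ (k + 3) := by
    have hA4 : Summable fun k => a (k + 4) * μ (k + 3) := (summable_nat_add_iff 4).mpr hA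
    have hB2 : Summable fun k => a (k + 2) * μ (k + 3) := (summable_nat_add_iff 2).mpr hB
    rw [← tsum_mul_left, ← hA4.tsum_sub (hB2.mul_left Q)]
    refine tsum_congr fun k => ?_
    simp only [hμ]
    push_cast
    ring
  rw [← hlhs.tsum_eq, tsum_congr hterm, hrhs.tsum_eq, hA_split, hB_split, htail]
  simp only [hμ, pow_one]
  push_cast
  ring
end
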